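/- arXiv:2308.13120 — 5 statements merged into one kernel-verified Lean document; each statement's English description precedes it below -/
import Mathlib

section
/- (Auslander, Swan) Every polycyclic-by-finite group is linear: if Γ is polycyclic-by-finite, then there exist a natural number n and an injective group homomorphism from Γ into GL(n, ℤ). -/
/-- A group is polycyclic if it is solvable and every subgroup is finitely generated. -/
def IsPolycyclic (G : Type*) [Group G] : Prop :=
  IsSolvable G ∧ ∀ H : Subgroup G, H.FG

/-- A group is polycyclic-by-finite if it has a polycyclic normal subgroup
of finite index. -/
def IsPolycyclicByFinite (G : Type*) [Group G] : Prop :=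
  ∃ N : Subgroup G, N.Normal ∧ IsPolycyclic N ∧ Finite (G ⧸ N)

/-!
A faithful representation of a subgroup of finite index can be coinduced, so the group may be
replaced by subgroups of finite index. By the theorem of Lie–Kolchin–Maltsev, applied to the
conjugation action on the factors of the derived series, it may be assumed poly-(infinite cyclic)
with nilpotent commutator subgroup.

Such a group is built from the trivial group by semidirect products `H ⋊ ℤ`: first up to the
commutator subgroup, then along the abelianization. If `H` acts faithfully on `ℤⁿ`, then `H ⋊ ℤ`
acts on the group ring `ℤ[H]`, with `H` multiplying from the left and `ℤ` acting by automorphisms.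
One finds an invariant submodule `Q` of finite corank inside the kernel of `ℤ[H] → End ℤⁿ`; the dual
of `ℤ[H] ⧸ Q` is then a representation of `H ⋊ ℤ` that is faithful on `H`. That `Q` exists, and that
unipotency survives so that the step can be repeated, uses that `H ⋊ ℤ` is nilpotent in the first
stage, and that the commutator subgroup acts unipotently in the second.
-/

/-! ### Unipotent actions -/

/-- The subgroup `U` acts unipotently through `ρ`: the module has a finite descending filtration
along which `u - 1` drops one step for every `u ∈ U`. The filtration consists of additive subgroups,
so that representations over different rings can be compared. -/
def IsUnipotentOn {R G M : Type*} [Semiring R] [Group G] [AddCommGroup M] [Module R M]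
    (ρ : Representation R G M) (U : Subgroup G) : Prop :=
  ∃ (k : ℕ) (F : ℕ → AddSubgroup M), F 0 = ⊤ ∧ (∀ w ≥ k, F w = ⊥) ∧
    ∀ u ∈ U, ∀ w, ∀ m ∈ F w, ρ u m - m ∈ F (w + 1)

namespace IsUnipotentOn

section Semiring

variable {R R' G G' M M' : Type*} [Semiring R] [Semiring R'] [Group G] [Group G']
  [AddCommGroup M] [AddCommGroup M'] [Module R M] [Module R' M']

theorem bot (ρ : Representation R G M) : IsUnipotentOn ρ ⊥ := by
  refine ⟨1, fun w => if w = 0 then ⊤ else ⊥, if_pos rfl, fun w hw => if_neg (by omega), ?_⟩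
  intro u hu w m _
  simp [Subgroup.mem_bot.mp hu]

theorem mono {ρ : Representation R G M} {U V : Subgroup G} (h : IsUnipotentOn ρ V) (hUV : U ≤ V) :
    IsUnipotentOn ρ U := by
  obtain ⟨k, F, h0, hk, hF⟩ := h
  exact ⟨k, F, h0, hk, fun u hu => hF u (hUV hu)⟩

theorem of_equivariant {ρ : Representation R G M} {ρ' : Representation R' G' M'}
    {U : Subgroup G} {U' : Subgroup G'} (h : IsUnipotentOn ρ' U') (i : G →* G')
    (hi : U ≤ U'.comap i) (f : M →+ M') (hf : ∀ u ∈ U, ∀ m, f (ρ u m) = ρ' (i u) (f m))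
    (hker : ∀ u ∈ U, ∀ m, f m = 0 → ρ u m = m) : IsUnipotentOn ρ U := by
  obtain ⟨k, F, h0, hk, hF⟩ := h
  refine ⟨k + 1, fun w => if w ≤ k then (F w).comap f else ⊥, by simp [h0],
    fun w hw => if_neg (by omega), fun u hu w m hm => ?_⟩
  beta_reduce at hm ⊢
  split_ifs at hm with hw
  · have hstep : f (ρ u m - m) ∈ F (w + 1) := by
      rw [map_sub, hf u hu]
      exact hF _ (hi hu) w _ hm
    split_ifs with hw'
    · exact hstep
    · have hm0 : f m = 0 := by simpa [hk w (by omega)] using hm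
      simp [hker u hu m hm0]
  · simp [AddSubgroup.mem_bot.mp hm, zero_mem]

theorem comp {ρ : Representation R G M} {U : Subgroup G} (h : IsUnipotentOn ρ U) (i : G' →* G)
    {U' : Subgroup G'} (hi : U' ≤ U.comap i) :
    IsUnipotentOn (ρ.comp i : Representation R G' M) U' :=
  h.of_equivariant i hi (AddMonoidHom.id M) (fun _ _ _ => rfl) fun u _ m hm => by
    simp [show m = 0 from hm]

theorem map {ρ : Representation R G M} {i : G' →* G} {U : Subgroup G'}
    (h : IsUnipotentOn (ρ.comp i : Representation R G' M) U) : IsUnipotentOn ρ (U.map i) := by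
  obtain ⟨k, F, h0, hk, hF⟩ := h
  refine ⟨k, F, h0, hk, ?_⟩
  rintro _ ⟨u, hu, rfl⟩
  exact hF u hu

theorem prod [Module R M'] {ρ : Representation R G M} {ρ' : Representation R G M'} {U : Subgroup G}
    (h : IsUnipotentOn ρ U) (h' : IsUnipotentOn ρ' U) : IsUnipotentOn (ρ.prod ρ') U := by
  obtain ⟨k, F, h0, hk, hF⟩ := h
  obtain ⟨k', F', h0', hk', hF'⟩ := h'
  refine ⟨max k k', fun w => (F w).prod (F' w), by simp [h0, h0'], fun w hw => ?_,
    fun u hu w m hm => ⟨hF u hu w _ hm.1, hF' u hu w _ hm.2⟩⟩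
  simp [hk w (le_of_max_le_left hw), hk' w (le_of_max_le_right hw)]

end Semiring

section CommRing

variable {R G M : Type*} [CommRing R] [Group G] [AddCommGroup M] [Module R M]
  {ρ : Representation R G M} {U : Subgroup G}

theorem dual (h : IsUnipotentOn ρ U) : IsUnipotentOn ρ.dual U := by
  obtain ⟨k, F, h0, hk, hF⟩ := h
  let annihilator (w : ℕ) : AddSubgroup (Module.Dual R M) :=
    { carrier := {l | ∀ x ∈ F (k - w), l x = 0}
      zero_mem' := fun x _ => rfl
      add_mem' := fun ha hb x hx => by simp [ha x hx, hb x hx]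
      neg_mem' := fun ha x hx => by simp [ha x hx] }
  refine ⟨k, annihilator, ?_, fun w hw => ?_, fun u hu w l hl x hx => ?_⟩
  · refine eq_top_iff.mpr fun l _ x hx => ?_
    rw [hk _ (by omega), AddSubgroup.mem_bot] at hx
    rw [hx, map_zero]
  · refine (AddSubgroup.eq_bot_iff_forall _).mpr fun l hl => LinearMap.ext fun x => hl x ?_
    simp [Nat.sub_eq_zero_of_le hw, h0]
  · have hdiff : (ρ.dual u l - l) x = l (ρ u⁻¹ x - x) := (map_sub l _ _).symm
    rw [hdiff]
    apply hl
    rcases lt_or_ge w k with hw | hw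
    · have := hF u⁻¹ (inv_mem hu) _ x hx
      rwa [show k - (w + 1) + 1 = k - w by omega] at this
    · simp [Nat.sub_eq_zero_of_le hw, h0]

theorem quotient {Q : Submodule R M} (hQ : ∀ g, Q ≤ Q.comap (ρ g)) {F : ℕ → AddSubgroup M}
    {k : ℕ} (h0 : F 0 = ⊤) (hk : ∀ w ≥ k, F w ≤ Q.toAddSubgroup)
    (hF : ∀ u ∈ U, ∀ w, ∀ m ∈ F w, ρ u m - m ∈ F (w + 1)) :
    IsUnipotentOn (ρ.quotient Q hQ) U := by
  refine ⟨k, fun w => (F w).map Q.mkQ.toAddMonoidHom, ?_, fun w hw => ?_, ?_⟩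
  · beta_reduce
    rw [h0, AddSubgroup.map_top_of_surjective _ Q.mkQ_surjective]
  · refine (AddSubgroup.map_eq_bot_iff _).mpr fun m hm => ?_
    simpa [AddMonoidHom.mem_ker] using hk w hw hm
  · rintro u hu w _ ⟨m, hm, rfl⟩
    exact ⟨ρ u m - m, hF u hu w m hm, by simp [Representation.quotient]⟩

end CommRing

end IsUnipotentOn

/-! ### Faithful integral representations -/

/-- `G` has a faithful representation on some `ℤⁿ` in which the subgroup `U` acts unipotently. -/
def HasFaithfulRep (G : Type*) [Group G] (U : Subgroup G) : Prop :=
  ∃ (n : ℕ) (ρ : Representation ℤ G (Fin n → ℤ)), Function.Injective ρ ∧ IsUnipotentOn ρ U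

section Coinduced

variable {R G M : Type*} [CommRing R] [Group G] [AddCommGroup M] [Module R M] {H : Subgroup G}

theorem exists_mem_coindV_extendByZero (ρ : Representation R H M) (m : M) :
    ∃ f ∈ Representation.coindV H.subtype ρ, (∀ h : H, f h = ρ h m) ∧ ∀ x ∉ H, f x = 0 := by
  classical
  let f : G → M := fun x => if hx : x ∈ H then ρ ⟨x, hx⟩ m else 0
  have f_of_mem {x : G} (hx : x ∈ H) : f x = ρ ⟨x, hx⟩ m := dif_pos hx
  have f_of_notMem {x : G} (hx : x ∉ H) : f x = 0 := dif_neg hx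
  refine ⟨f, fun h x => ?_, fun h => f_of_mem h.2, fun x hx => f_of_notMem hx⟩
  by_cases hx : x ∈ H
  · rw [f_of_mem hx, ← Module.End.mul_apply, ← map_mul]
    exact f_of_mem (mul_mem h.2 hx)
  · rw [f_of_notMem hx, map_zero]
    exact f_of_notMem fun hhx => hx ((H.mul_mem_cancel_left h.2).mp hhx)

theorem coind_subtype_injective [Nontrivial M] {ρ : Representation R H M}
    (hρ : Function.Injective ρ) : Function.Injective (Representation.coind H.subtype ρ) := by
  refine (injective_iff_map_eq_one _).mpr fun g hg => ?_
  have fixed {f : G → M} (hf : f ∈ Representation.coindV H.subtype ρ) : f g = f 1 := by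
    have h1 : f (1 * g) = f 1 :=
      congrFun (congrArg Subtype.val (LinearMap.congr_fun hg ⟨f, hf⟩)) 1
    rwa [one_mul] at h1
  have at_one {f : G → M} {m : M} (hf : ∀ h : H, f h = ρ h m) : f 1 = m := by
    simpa using hf 1
  have hgH : g ∈ H := by
    obtain ⟨m, hm⟩ := exists_ne (0 : M)
    obtain ⟨f, hf, hfH, hf0⟩ := exists_mem_coindV_extendByZero ρ m
    by_contra hgH
    exact hm (by rw [← at_one hfH, ← fixed hf, hf0 g hgH])
  have hone : (⟨g, hgH⟩ : H) = 1 := by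
    refine hρ (LinearMap.ext fun m => ?_)
    obtain ⟨f, hf, hfH, -⟩ := exists_mem_coindV_extendByZero ρ m
    rw [← hfH, map_one, Module.End.one_apply, ← at_one hfH, ← fixed hf]
  exact congrArg Subtype.val hone

theorem finite_coindV_subtype [IsNoetherianRing R] [Module.Finite R M] [H.FiniteIndex]
    (ρ : Representation R H M) : Module.Finite R (Representation.coindV H.subtype ρ) := by
  let RightCosets := Quotient (QuotientGroup.rightRel H)
  have : Finite RightCosets :=
    Finite.of_equiv (G ⧸ H) (QuotientGroup.quotientRightRelEquivQuotientLeftRel H).symm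
  let restrict : Representation.coindV H.subtype ρ →ₗ[R] RightCosets → M :=
    LinearMap.funLeft R M Quotient.out ∘ₗ Submodule.subtype _
  refine Module.Finite.of_injective restrict fun f f' hff' => Subtype.ext (funext fun x => ?_)
  have hrel : x * (Quotient.mk (QuotientGroup.rightRel H) x).out⁻¹ ∈ H :=
    QuotientGroup.rightRel_apply.mp (Quotient.mk_out (s := QuotientGroup.rightRel H) x)
  have hx : x = H.subtype ⟨_, hrel⟩ * (Quotient.mk (QuotientGroup.rightRel H) x).out := by simp
  rw [hx, f.2, f'.2]
  exact congrArg _ (congrFun hff' (Quotient.mk (QuotientGroup.rightRel H) x))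

end Coinduced

namespace HasFaithfulRep

variable {G G' : Type*} [Group G] [Group G'] {U : Subgroup G}

theorem of_module {M : Type*} [AddCommGroup M] [Module.Finite ℤ M] [Module.Free ℤ M]
    (ρ : Representation ℤ G M) (hρ : Function.Injective ρ) (hU : IsUnipotentOn ρ U) :
    HasFaithfulRep G U := by
  let e := (Module.finBasis ℤ M).equivFun
  refine ⟨_, e.conjRingEquiv.toMonoidHom.comp ρ, e.conjRingEquiv.injective.comp hρ,
    hU.of_equivariant (MonoidHom.id G) le_rfl e.symm.toAddMonoidHom (by simp) fun u _ m hm => ?_⟩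
  rw [show m = 0 by simpa using hm, map_zero]

theorem comap (h : HasFaithfulRep G U) (f : G' →* G) (hf : Function.Injective f)
    {U' : Subgroup G'} (hU : U' ≤ U.comap f) : HasFaithfulRep G' U' := by
  obtain ⟨n, ρ, hρ, hρU⟩ := h
  exact ⟨n, ρ.comp f, hρ.comp hf, hρU.comp f hU⟩

theorem of_subsingleton [Subsingleton G] (U : Subgroup G) : HasFaithfulRep G U := by
  rw [Subsingleton.elim U ⊥]
  exact ⟨0, 1, Function.injective_of_subsingleton _, .bot _⟩

theorem of_finiteIndex {H : Subgroup G} [H.FiniteIndex] {U : Subgroup H}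
    (h : HasFaithfulRep H U) : HasFaithfulRep G ⊥ := by
  obtain ⟨n, ρ, hρ, -⟩ := h
  -- the trivial summand keeps the coinduced module faithful when `n = 0`
  let σ : Representation ℤ H ((Fin n → ℤ) × ℤ) := ρ.prod (.trivial ℤ H ℤ)
  have hσ : Function.Injective σ := fun a b hab => hρ <| LinearMap.ext fun m =>
    congrArg Prod.fst (LinearMap.congr_fun hab (m, 0))
  have := finite_coindV_subtype σ
  exact of_module _ (coind_subtype_injective hσ) (.bot _)

theorem exists_injective_hom (h : HasFaithfulRep G U) :
    ∃ (n : ℕ) (φ : G →* Matrix.GeneralLinearGroup (Fin n) ℤ), Function.Injective φ := by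
  obtain ⟨n, ρ, hρ, -⟩ := h
  let toMatrix : Module.End ℤ (Fin n → ℤ) ≃ₐ[ℤ] Matrix (Fin n) (Fin n) ℤ :=
    LinearMap.toMatrixAlgEquiv'
  exact ⟨n, (toMatrix.toMonoidHom.comp ρ).toHomUnits, fun a b hab =>
    hρ (toMatrix.injective (congrArg Units.val hab))⟩

end HasFaithfulRep

/-! ### Submodules of finite corank in finitely generated algebras -/

section Corank

variable {R : Type*} [CommRing R]

theorem exists_fg_codisjoint_of_cofg {M : Type*} [AddCommGroup M] [Module R M]
    {Q : Submodule R M} (hQ : Q.CoFG) : ∃ N : Submodule R M, N.FG ∧ Codisjoint N Q := by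
  obtain ⟨n, s, hs⟩ := Module.Finite.exists_fin (R := R) (M := M ⧸ Q)
  choose t ht using fun i => Q.mkQ_surjective (s i)
  refine ⟨Submodule.span R (Set.range t), Submodule.fg_span (Set.finite_range t), ?_⟩
  rw [codisjoint_iff, ← Submodule.ker_mkQ Q, ← Submodule.comap_map_eq, Submodule.map_span,
    ← Set.range_comp, show Q.mkQ ∘ t = s from funext ht, hs, Submodule.comap_top]

theorem exists_fg_le_of_le_sup {M : Type*} [AddCommGroup M] [Module R M]
    {T N Q : Submodule R M} (hT : T.FG) (h : T ≤ N ⊔ Q) :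
    ∃ E ≤ Q, E.FG ∧ T ≤ N ⊔ E := by
  obtain ⟨S, rfl⟩ := hT
  have decomp (x : S) : ∃ q ∈ Q, ∃ y ∈ N, y + q = x := by
    obtain ⟨y, hy, q, hq, hyq⟩ := Submodule.mem_sup.mp (h (Submodule.subset_span x.2))
    exact ⟨q, hq, y, hy, hyq⟩
  choose q hq y hy hyq using decomp
  refine ⟨Submodule.span R (Set.range q), Submodule.span_le.mpr (Set.range_subset_iff.mpr hq),
    Submodule.fg_span (Set.finite_range q), Submodule.span_le.mpr fun x hx => ?_⟩
  have hx' := Submodule.add_mem_sup (hy ⟨x, hx⟩)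
    (Submodule.subset_span (R := R) (Set.mem_range_self (f := q) ⟨x, hx⟩))
  rwa [hyq] at hx'

variable {A : Type*} [Ring A] [Algebra R A]

theorem eq_top_of_forall_mul_mem_of_adjoin_eq_top {S : Set A} (hS : Algebra.adjoin R S = ⊤)
    {W : Submodule R A} (h1 : 1 ∈ W) (hW : ∀ s ∈ S, ∀ w ∈ W, s * w ∈ W) : W = ⊤ := by
  let stabilizer : Subalgebra R A :=
    { carrier := {a | ∀ w ∈ W, a * w ∈ W}
      mul_mem' := fun ha hb w hw => by rw [mul_assoc]; exact ha _ (hb _ hw)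
      add_mem' := fun ha hb w hw => by rw [add_mul]; exact W.add_mem (ha _ hw) (hb _ hw)
      algebraMap_mem' := fun r w hw => by rw [← Algebra.smul_def]; exact W.smul_mem r hw }
  have htop : ⊤ ≤ stabilizer := hS ▸ Algebra.adjoin_le hW
  refine eq_top_iff.mpr fun a _ => ?_
  simpa using htop (Algebra.mem_top (x := a)) 1 h1

/-- A finite generating set multiplies `N` into `N + E` for some finitely generated `E ≤ Q`, and
then `N + A E` is stable under the generators. -/
theorem exists_fg_sup_top_mul_eq_top [Algebra.FiniteType R A] {Q : Submodule R A} (hQ : Q.CoFG) :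
    ∃ N E : Submodule R A, N.FG ∧ E.FG ∧ E ≤ Q ∧ N ⊔ ⊤ * E = ⊤ := by
  obtain ⟨N, hN, hNQ, hN1⟩ : ∃ N : Submodule R A, N.FG ∧ N ⊔ Q = ⊤ ∧ 1 ∈ N := by
    obtain ⟨N, hN, hNQ⟩ := exists_fg_codisjoint_of_cofg hQ
    exact ⟨N ⊔ Submodule.span R {1}, hN.sup (Submodule.fg_span_singleton 1),
      (hNQ.mono_left le_sup_left).eq_top,
      Submodule.mem_sup_right (Submodule.mem_span_singleton_self 1)⟩
  obtain ⟨S, hS⟩ := Algebra.FiniteType.out (R := R) (A := A)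
  have hSN_fg : (Submodule.span R (S : Set A) * N).FG := (Submodule.fg_span S.finite_toSet).mul hN
  obtain ⟨E, hEQ, hE, hSN⟩ := exists_fg_le_of_le_sup hSN_fg (le_top.trans hNQ.ge)
  refine ⟨N, E, hN, hE, hEQ,
    eq_top_of_forall_mul_mem_of_adjoin_eq_top hS (Submodule.mem_sup_left hN1) ?_⟩
  intro s hs w hw
  obtain ⟨m, hm, e, he, rfl⟩ := Submodule.mem_sup.mp hw
  have hE_le : E ≤ ⊤ * E := fun x hx => by
    simpa using Submodule.mul_mem_mul (Submodule.mem_top (R := R) (x := (1 : A))) hx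
  have hsm : s * m ∈ N ⊔ ⊤ * E := sup_le_sup_left hE_le N
    (hSN (Submodule.mul_mem_mul (Submodule.subset_span hs) hm))
  have hse : s * e ∈ ⊤ * (⊤ * E) := Submodule.mul_mem_mul Submodule.mem_top he
  have htop : (⊤ : Submodule R A) * (⊤ * E) ≤ ⊤ * E := by
    rw [← mul_assoc]
    exact mul_le_mul_left le_top E
  rw [mul_add]
  exact add_mem hsm (Submodule.mem_sup_right (htop hse))

theorem cofg_mul [Algebra.FiniteType R A] {P Q : Submodule R A} (hP : P.CoFG) (hQ : Q.CoFG) :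
    (P * Q).CoFG := by
  obtain ⟨N, E, hN, hE, hEQ, hNE⟩ := exists_fg_sup_top_mul_eq_top hQ
  obtain ⟨N', hN', hN'P⟩ := exists_fg_codisjoint_of_cofg hP
  refine (hN.sup (hN'.mul hE)).cofg_of_codisjoint (codisjoint_iff_le_sup.mpr ?_)
  calc ⊤ = N ⊔ (N' ⊔ P) * E := by rw [hN'P.eq_top, hNE]
    _ = N ⊔ (N' * E ⊔ P * E) := by rw [Submodule.sup_mul]
    _ ≤ N ⊔ (N' * E ⊔ P * Q) := by gcongr
    _ = N ⊔ N' * E ⊔ P * Q := (sup_assoc _ _ _).symm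

theorem cofg_top_mul_pow [Algebra.FiniteType R A] {P : Submodule R A} (hP : P.CoFG) (k : ℕ) :
    (⊤ * P ^ k).CoFG := by
  induction k with
  | zero =>
    refine Submodule.CoFG.of_le (fun a _ => ?_) Submodule.CoFG.top
    simpa only [pow_zero, mul_one] using Submodule.mem_top (R := R) (x := a)
  | succ k ih => rw [pow_succ, ← mul_assoc]; exact cofg_mul ih hP

end Corank

/-! ### Extending a representation to a semidirect product -/

section AugSpan

variable {R H : Type*} [CommRing R] [Group H]

/-- The span of the elements `u - 1`, `u ∈ N`, in the group algebra; it generates the kernel of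
`R[H] → R[H ⧸ N]` as an ideal when `N` is normal. -/
noncomputable def augSpan (R : Type*) {H : Type*} [CommRing R] [Group H] (N : Subgroup H) :
    Submodule R (MonoidAlgebra R H) :=
  Submodule.span R ((fun u => MonoidAlgebra.of R H u - 1) '' (N : Set H))

theorem of_sub_one_mem_augSpan {N : Subgroup H} {u : H} (hu : u ∈ N) :
    MonoidAlgebra.of R H u - 1 ∈ augSpan R N :=
  Submodule.subset_span ⟨u, hu, rfl⟩

theorem span_range_of_eq_top :
    Submodule.span R (Set.range (MonoidAlgebra.of R H)) = ⊤ := by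
  refine eq_top_iff.mpr fun a _ => ?_
  induction a using MonoidAlgebra.induction_on with
  | of h => exact Submodule.subset_span ⟨h, rfl⟩
  | add x y hx hy => exact add_mem (hx trivial) (hy trivial)
  | smul r x hx => exact Submodule.smul_mem _ _ (hx trivial)

theorem augSpan_commute_top (N : Subgroup H) [N.Normal] : Commute (augSpan R N) ⊤ := by
  rw [commute_iff_eq, ← span_range_of_eq_top, augSpan, Submodule.span_mul_span,
    Submodule.span_mul_span]
  congr 1
  ext a
  constructor
  · rintro ⟨_, ⟨u, hu, rfl⟩, _, ⟨h, rfl⟩, rfl⟩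
    refine ⟨_, ⟨h, rfl⟩, _, ⟨h⁻¹ * u * h, ?_, rfl⟩, ?_⟩
    · exact Subgroup.Normal.conj_mem' inferInstance u hu h
    · simp only [mul_sub, sub_mul, ← map_mul, mul_one, one_mul]
      group
  · rintro ⟨_, ⟨h, rfl⟩, _, ⟨u, hu, rfl⟩, rfl⟩
    refine ⟨_, ⟨h * u * h⁻¹, Subgroup.Normal.conj_mem inferInstance u hu h, rfl⟩, _, ⟨h, rfl⟩, ?_⟩
    simp only [mul_sub, sub_mul, ← map_mul, mul_one, one_mul]
    group

variable {M : Type*} [AddCommGroup M] [Module R M] {ρ : Representation R H M} {N : Subgroup H}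

theorem IsUnipotentOn.exists_submodule_filtration (h : IsUnipotentOn ρ N) :
    ∃ (k : ℕ) (F : ℕ → Submodule R M), F 0 = ⊤ ∧ F k = ⊥ ∧
      ∀ u ∈ N, ∀ w, ∀ m ∈ F w, ρ u m - m ∈ F (w + 1) := by
  obtain ⟨k, F, h0, hk, hF⟩ := h
  refine ⟨k, fun w => Submodule.span R (F w), by simp [h0], by simp [hk k le_rfl], ?_⟩
  intro u hu w m hm
  induction hm using Submodule.span_induction with
  | mem m hm => exact Submodule.subset_span (hF u hu w m hm)
  | zero => simp
  | add x y _ _ hx hy => rw [map_add, add_sub_add_comm]; exact add_mem hx hy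
  | smul r x _ hx => rw [map_smul, ← smul_sub]; exact Submodule.smul_mem _ r hx

theorem IsUnipotentOn.exists_augSpan_pow_le_ker (h : IsUnipotentOn ρ N) :
    ∃ k, augSpan R N ^ k ≤ LinearMap.ker ρ.asAlgebraHom.toLinearMap := by
  obtain ⟨k, F, h0, hk, hF⟩ := h.exists_submodule_filtration
  have lowers {a : MonoidAlgebra R H} (ha : a ∈ augSpan R N) {w : ℕ} {m : M} (hm : m ∈ F w) :
      ρ.asAlgebraHom a m ∈ F (w + 1) := by
    induction ha using Submodule.span_induction with
    | mem x hx =>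
      obtain ⟨u, hu, rfl⟩ := hx
      rw [map_sub, map_one, Representation.asAlgebraHom_of]
      exact hF u hu w m hm
    | zero => simp
    | add x y _ _ hx hy => rw [map_add]; exact add_mem hx hy
    | smul r x _ hx => rw [map_smul]; exact Submodule.smul_mem _ r hx
  have lowers_pow (i : ℕ) {a : MonoidAlgebra R H} (ha : a ∈ augSpan R N ^ i) (m : M) :
      ρ.asAlgebraHom a m ∈ F i := by
    induction i generalizing a with
    | zero => simp [h0]
    | succ i ih =>
      rw [pow_succ'] at ha
      induction ha using Submodule.mul_induction_on' with
      | mem_mul_mem x hx y hy => rw [map_mul]; exact lowers hx (ih hy)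
      | add x _ y _ hx hy => rw [map_add]; exact add_mem hx hy
  refine ⟨k, fun a ha => LinearMap.ext fun m => ?_⟩
  simpa [hk] using lowers_pow k ha m

end AugSpan

section Affine

open SemidirectProduct

variable {R H K : Type*} [CommRing R] [Group H] [Group K] {φ : K →* MulAut H}

theorem inl_conj_left (g : H ⋊[φ] K) (u : H) :
    (inl (g.left * φ g.right u * g.left⁻¹) : H ⋊[φ] K) = g * inl u * g⁻¹ := by
  ext <;> simp [mul_assoc]

/-- The action of `H ⋊ K` on `R[H]` by linear extension of its affine action on `H`, in which `H`
acts by left translations and `K` by automorphisms. -/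
noncomputable def affineRep (R : Type*) {H K : Type*} [CommRing R] [Group H] [Group K]
    (φ : K →* MulAut H) : Representation R (H ⋊[φ] K) (MonoidAlgebra R H) where
  toFun g := LinearMap.mulLeft R (MonoidAlgebra.of R H g.left) ∘ₗ
    (MonoidAlgebra.domCongr R R (φ g.right)).toLinearMap
  map_one' := by
    refine LinearMap.ext fun a => ?_
    induction a using MonoidAlgebra.induction_on <;> simp_all [mul_add]
  map_mul' g g' := by
    refine LinearMap.ext fun a => ?_
    induction a using MonoidAlgebra.induction_on <;> simp_all [mul_assoc, mul_add]

theorem affineRep_apply (g : H ⋊[φ] K) (a : MonoidAlgebra R H) :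
    affineRep R φ g a =
      MonoidAlgebra.of R H g.left * MonoidAlgebra.domCongr R R (φ g.right) a := rfl

theorem affineRep_inl (h : H) (a : MonoidAlgebra R H) :
    affineRep R φ (inl h) a = MonoidAlgebra.of R H h * a := by
  rw [affineRep_apply]
  induction a using MonoidAlgebra.induction_on <;> simp_all [mul_add]

theorem affineRep_of_mul (g : H ⋊[φ] K) (u : H) (a : MonoidAlgebra R H) :
    affineRep R φ g (MonoidAlgebra.of R H u * a) =
      MonoidAlgebra.of R H (g.left * φ g.right u * g.left⁻¹) * affineRep R φ g a := by
  simp only [affineRep_apply, map_mul, ← mul_assoc]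
  simp [MonoidAlgebra.single_mul_single]

theorem affineRep_mem_of_forall_domCongr_mem {Q : Submodule R (MonoidAlgebra R H)} (hQ : ⊤ * Q ≤ Q)
    (hφ : ∀ k, ∀ a ∈ Q, MonoidAlgebra.domCongr R R (φ k) a ∈ Q) (g : H ⋊[φ] K) :
    Q ≤ Q.comap (affineRep R φ g) := fun a ha =>
  hQ (Submodule.mul_mem_mul Submodule.mem_top (hφ g.right a ha))

end Affine

section Affine

open SemidirectProduct

variable {R H K M : Type*} [CommRing R] [Group H] [Group K] [AddCommGroup M] [Module R M]
  {φ : K →* MulAut H}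

theorem domCongr_sub_mem_augSpan_mul_top {N : Subgroup H} {e : MulAut H}
    (he : ∀ h, e h * h⁻¹ ∈ N) (a : MonoidAlgebra R H) :
    MonoidAlgebra.domCongr R R e a - a ∈ augSpan R N * ⊤ := by
  induction a using MonoidAlgebra.induction_on with
  | of h =>
    have hfactor : MonoidAlgebra.domCongr R R e (MonoidAlgebra.of R H h) - MonoidAlgebra.of R H h =
        (MonoidAlgebra.of R H (e h * h⁻¹) - 1) * MonoidAlgebra.of R H h := by
      rw [sub_mul, one_mul, ← map_mul, inv_mul_cancel_right]
      simp
    rw [hfactor]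
    exact Submodule.mul_mem_mul (of_sub_one_mem_augSpan (he h)) trivial
  | add x y hx hy => rw [map_add, add_sub_add_comm]; exact add_mem hx hy
  | smul r x hx => rw [map_smul, ← smul_sub]; exact Submodule.smul_mem _ _ hx

theorem top_mul_ker_sup_pow_le_ker {A B : Type*} [Ring A] [Algebra R A] [Ring B] [Algebra R B]
    (f : A →ₐ[R] B) {D : Submodule R A} (hD : Commute D ⊤) {k : ℕ}
    (hk : D ^ k ≤ LinearMap.ker f.toLinearMap) :
    ⊤ * (LinearMap.ker f.toLinearMap ⊔ D * ⊤) ^ k ≤ LinearMap.ker f.toLinearMap := by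
  have map_ker : (LinearMap.ker f.toLinearMap).map f.toLinearMap = ⊥ :=
    LinearMap.le_ker_iff_map.mp le_rfl
  have map_D : (D ^ k).map f.toLinearMap = ⊥ := LinearMap.le_ker_iff_map.mp hk
  rw [LinearMap.le_ker_iff_map, Submodule.map_mul, Submodule.map_pow, Submodule.map_sup, map_ker,
    bot_sup_eq, ← Submodule.map_pow, hD.mul_pow, Submodule.map_mul, map_D, Submodule.bot_mul,
    Submodule.mul_bot]

/-- The kernel `I` of `R[H] → End M` need not be invariant under `K`, but `K` acts trivially on
`R[H]` modulo the ideal `D` generated by the elements `u - 1`, `u ∈ N`, so that `P = I + D` is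
invariant. Since `D` acts nilpotently on `M`, a power of `P` is contained in `I`. -/
theorem exists_affineRep_invariant_le_ker [IsNoetherianRing R] [Module.Finite R M] [Group.FG H]
    {ρ : Representation R H M} {N : Subgroup H} [N.Normal] (hρ : IsUnipotentOn ρ N)
    (hφ : ∀ k h, φ k h * h⁻¹ ∈ N) :
    ∃ Q : Submodule R (MonoidAlgebra R H), Q.CoFG ∧ (∀ g, Q ≤ Q.comap (affineRep R φ g)) ∧
      Q ≤ LinearMap.ker ρ.asAlgebraHom.toLinearMap ∧ ∃ k, ∀ w ≥ k, augSpan R N ^ w * ⊤ ≤ Q := by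
  obtain ⟨k, hk⟩ := hρ.exists_augSpan_pow_le_ker
  have hD := augSpan_commute_top (R := R) N
  have hker := top_mul_ker_sup_pow_le_ker ρ.asAlgebraHom hD hk
  obtain ⟨P, hP, hDP, hPfin⟩ : ∃ P, ⊤ * P ^ k ≤ LinearMap.ker ρ.asAlgebraHom.toLinearMap ∧
      augSpan R N * ⊤ ≤ P ∧ P.CoFG :=
    ⟨_, hker, le_sup_right, (Submodule.CoFG.ker _).of_le le_sup_left⟩
  have htop : (⊤ : Submodule R (MonoidAlgebra R H)) * (⊤ * P ^ k) ≤ ⊤ * P ^ k := by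
    rw [← mul_assoc]
    exact mul_le_mul_left le_top _
  have hinv (x : K) : P.map (MonoidAlgebra.domCongr R R (φ x)).toLinearMap ≤ P := by
    rintro _ ⟨a, ha, rfl⟩
    simpa using add_mem (hDP (domCongr_sub_mem_augSpan_mul_top (hφ x) a)) ha
  refine ⟨⊤ * P ^ k, cofg_top_mul_pow hPfin k, affineRep_mem_of_forall_domCongr_mem htop ?_, hP,
    k, fun w hw => ?_⟩
  · intro x a ha
    have hmap : (⊤ * P ^ k).map (MonoidAlgebra.domCongr R R (φ x)).toAlgHom.toLinearMap ≤
        ⊤ * P ^ k := by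
      rw [Submodule.map_mul, Submodule.map_pow]
      exact mul_le_mul' le_top (pow_le_pow_left' (hinv x) k)
    exact hmap ⟨a, ha, rfl⟩
  · have hD_le : augSpan R N ≤ P := fun d hd => by
      simpa using hDP (Submodule.mul_mem_mul hd (Submodule.mem_top (x := 1)))
    obtain ⟨l, rfl⟩ := Nat.exists_eq_add_of_le' hw
    rw [pow_add, mul_assoc, (hD.pow_left k).eq, ← mul_assoc]
    exact mul_le_mul' le_top (pow_le_pow_left' hD_le k)

theorem eq_one_of_dual_quotient_affineRep_eq_one [Module.Projective R M] {ρ : Representation R H M}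
    (hρ : Function.Injective ρ) {Q : Submodule R (MonoidAlgebra R H)}
    (hQ : ∀ g : H ⋊[φ] K, Q ≤ Q.comap (affineRep R φ g))
    (hQker : Q ≤ LinearMap.ker ρ.asAlgebraHom.toLinearMap) {h : H}
    (h1 : ((affineRep R φ).quotient Q hQ).dual (inl h) = 1) : h = 1 := by
  refine inv_eq_one.mp (hρ (LinearMap.ext fun m => ?_))
  rw [← sub_eq_zero, ← Module.forall_dual_apply_eq_zero_iff R]
  intro f
  -- the matrix coefficient `a ↦ f (a m)` vanishes on `Q`
  let coeff : MonoidAlgebra R H →ₗ[R] R :=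
    f ∘ₗ LinearMap.applyₗ m ∘ₗ ρ.asAlgebraHom.toLinearMap
  have hcoeff : Q ≤ LinearMap.ker coeff := fun a ha => by
    have ha0 : ρ.asAlgebraHom a = 0 := hQker ha
    simp [coeff, ha0]
  have hfixed : coeff (affineRep R φ (inl h)⁻¹ 1) = coeff 1 :=
    LinearMap.congr_fun (LinearMap.congr_fun h1 (Q.liftQ coeff hcoeff)) (Q.mkQ 1)
  rw [← map_inv, affineRep_inl, mul_one] at hfixed
  simpa [coeff, sub_eq_zero] using hfixed

theorem HasFaithfulRep.semidirectProduct [Module.Free ℤ M]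
    {ρ : Representation ℤ H M} (hρ : Function.Injective ρ)
    {Q : Submodule ℤ (MonoidAlgebra ℤ H)} (hQfin : Q.CoFG)
    (hQ : ∀ g : H ⋊[φ] K, Q ≤ Q.comap (affineRep ℤ φ g))
    (hQker : Q ≤ LinearMap.ker ρ.asAlgebraHom.toLinearMap) {U : Subgroup (H ⋊[φ] K)}
    (hU : IsUnipotentOn ((affineRep ℤ φ).quotient Q hQ) U) {V : Subgroup K}
    (hK : HasFaithfulRep K V) (hUV : U ≤ V.comap rightHom) : HasFaithfulRep (H ⋊[φ] K) U := by
  obtain ⟨n, σ, hσ, hσV⟩ := hK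
  have : Module.Finite ℤ (MonoidAlgebra ℤ H ⧸ Q) := hQfin
  let dualRep := ((affineRep ℤ φ).quotient Q hQ).dual
  let pullback : Representation ℤ (H ⋊[φ] K) (Fin n → ℤ) := σ.comp rightHom
  refine .of_module (dualRep.prod pullback) ?_ (hU.dual.prod (hσV.comp rightHom hUV))
  refine (injective_iff_map_eq_one _).mpr fun g hg => ?_
  have hdual : dualRep g = 1 :=
    LinearMap.ext fun x => congrArg Prod.fst (LinearMap.congr_fun hg (x, 0))
  have hpullback : σ g.right = 1 :=
    LinearMap.ext fun x => congrArg Prod.snd (LinearMap.congr_fun hg (0, x))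
  have hright : g.right = 1 := hσ (hpullback.trans (map_one σ).symm)
  have hg_inl : inl g.left = g := by simpa [hright] using inl_left_mul_inr_right g
  have hleft : g.left = 1 :=
    eq_one_of_dual_quotient_affineRep_eq_one hρ hQ hQker (by rwa [hg_inl])
  exact SemidirectProduct.ext hleft hright

end Affine

section SemidirectSteps

open SemidirectProduct

variable {R H K : Type*} [CommRing R] [Group H] [Group K] {φ : K →* MulAut H}

theorem HasFaithfulRep.semidirectProduct_map_inl [Group.FG H] {N : Subgroup H} [N.Normal]
    (hφ : ∀ k h, φ k h * h⁻¹ ∈ N) (hH : HasFaithfulRep H N) (hK : HasFaithfulRep K ⊥) :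
    HasFaithfulRep (H ⋊[φ] K) (N.map inl) := by
  obtain ⟨n, ρ, hρ, hρN⟩ := hH
  obtain ⟨Q, hQfin, hQ, hQker, k, hk⟩ := exists_affineRep_invariant_le_ker hρN hφ
  refine .semidirectProduct hρ hQfin hQ hQker (IsUnipotentOn.quotient hQ
    (F := fun w => (augSpan ℤ N ^ w * ⊤).toAddSubgroup) (by simp) hk ?_) hK ?_
  · rintro _ ⟨u, hu, rfl⟩ w a ha
    rw [affineRep_inl, ← sub_one_mul, pow_succ', mul_assoc]
    exact Submodule.mul_mem_mul (of_sub_one_mem_augSpan hu) ha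
  · rintro _ ⟨u, -, rfl⟩
    exact right_inl (φ := φ) u

/-- The weight filtration of `R[H]`: `WeightGE φ w a` means that `a` is a sum of products
`(u₁ - 1) ⋯ (uₘ - 1) b` of weight at least `w`, where a factor `u - 1` has weight `i + 1` if `u`
lies in the `i`-th term of the lower central series of `H ⋊ K` (which starts with `H ⋊ K` at
`i = 0`). -/
inductive WeightGE {R H K : Type*} [CommRing R] [Group H] [Group K] (φ : K →* MulAut H) :
    ℕ → MonoidAlgebra R H → Prop
  | base (a) : WeightGE φ 0 a
  | zero (w) : WeightGE φ w 0
  | add {w a b} : WeightGE φ w a → WeightGE φ w b → WeightGE φ w (a + b)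
  | mul {i w a} (u : H) : (inl u : H ⋊[φ] K) ∈ (⊤ : Subgroup (H ⋊[φ] K)).lowerCentralSeries i →
      WeightGE φ w a → WeightGE φ (w + i + 1) ((MonoidAlgebra.of R H u - 1) * a)

namespace WeightGE

variable {w : ℕ} {a : MonoidAlgebra R H}

theorem smul (r : R) (h : WeightGE φ w a) : WeightGE φ w (r • a) := by
  induction h with
  | base a => exact .base _
  | zero w => rw [smul_zero]; exact .zero _
  | add _ _ h1 h2 => rw [smul_add]; exact .add h1 h2
  | mul u hu _ h => rw [← mul_smul_comm]; exact .mul u hu h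

theorem neg (h : WeightGE φ w a) : WeightGE φ w (-a) := by
  simpa using h.smul (-1)

theorem apply_affineRep (g : H ⋊[φ] K) (h : WeightGE φ w a) : WeightGE φ w (affineRep R φ g a) := by
  induction h with
  | base a => exact .base _
  | zero w => rw [map_zero]; exact .zero _
  | add _ _ h1 h2 => rw [map_add]; exact .add h1 h2
  | mul u hu _ h =>
    rw [sub_one_mul, map_sub, affineRep_of_mul, ← sub_one_mul]
    refine .mul _ ?_ h
    rw [inl_conj_left]
    exact Subgroup.Normal.conj_mem inferInstance _ hu g

theorem of_sub_of_mul (x y : H) {i : ℕ}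
    (hxy : (inl (x * y⁻¹) : H ⋊[φ] K) ∈ (⊤ : Subgroup (H ⋊[φ] K)).lowerCentralSeries i)
    (h : WeightGE φ w a) :
    WeightGE φ (w + i + 1) ((MonoidAlgebra.of R H x - MonoidAlgebra.of R H y) * a) := by
  have hfactor : (MonoidAlgebra.of R H x - MonoidAlgebra.of R H y) * a =
      (MonoidAlgebra.of R H (x * y⁻¹) - 1) * (MonoidAlgebra.of R H y * a) := by
    rw [← mul_assoc, sub_one_mul, ← map_mul, inv_mul_cancel_right]
  rw [hfactor]
  refine .mul _ hxy ?_
  rw [← affineRep_inl (φ := φ)]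
  exact h.apply_affineRep _

/-- Conjugates of an element are congruent to it one step deeper in the lower central series. -/
theorem apply_affineRep_sub (g : H ⋊[φ] K) (h : WeightGE φ w a) :
    WeightGE φ (w + 1) (affineRep R φ g a - a) := by
  induction h with
  | base a =>
    induction a using MonoidAlgebra.induction_on with
    | of x =>
      have hgx : affineRep R φ g (MonoidAlgebra.of R H x) - MonoidAlgebra.of R H x =
          (MonoidAlgebra.of R H (g.left * φ g.right x) - MonoidAlgebra.of R H x) * 1 := by
        simp [affineRep_apply]
      rw [hgx]
      exact (WeightGE.base 1).of_sub_of_mul (i := 0) _ _ (by simp)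
    | add x y hx hy => rw [map_add, add_sub_add_comm]; exact .add hx hy
    | smul r x hx => rw [map_smul, ← smul_sub]; exact hx.smul r
  | zero w => rw [map_zero, sub_zero]; exact .zero _
  | add _ _ h1 h2 => rw [map_add, add_sub_add_comm]; exact .add h1 h2
  | @mul i w a u hu ha h =>
    have hcomm : (inl (g.left * φ g.right u * g.left⁻¹ * u⁻¹) : H ⋊[φ] K) ∈
        (⊤ : Subgroup (H ⋊[φ] K)).lowerCentralSeries (i + 1) := by
      rw [map_mul, inl_conj_left, map_inv, Subgroup.lowerCentralSeries_succ,
        Subgroup.commutator_comm]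
      exact Subgroup.commutator_mem_commutator (Subgroup.mem_top g) hu
    have hsplit : affineRep R φ g ((MonoidAlgebra.of R H u - 1) * a) -
          (MonoidAlgebra.of R H u - 1) * a =
        (MonoidAlgebra.of R H (g.left * φ g.right u * g.left⁻¹) - MonoidAlgebra.of R H u) *
          affineRep R φ g a +
        (MonoidAlgebra.of R H u - 1) * (affineRep R φ g a - a) := by
      rw [sub_one_mul, map_sub, affineRep_of_mul]
      noncomm_ring
    rw [hsplit]
    have hleft := (ha.apply_affineRep g).of_sub_of_mul _ _ hcomm
    have hright := WeightGE.mul u hu h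
    rw [show w + 1 + i + 1 = w + (i + 1) + 1 by omega] at hright
    exact .add hleft hright

/-- If `H ⋊ K` has class at most `c`, a nontrivial factor `u - 1` has weight at most `c`, so a large
weight forces many factors. -/
theorem mem_augSpan_pow {c : ℕ} (hc : (⊤ : Subgroup (H ⋊[φ] K)).lowerCentralSeries c = ⊥)
    (h : WeightGE φ w a) {m : ℕ} (hm : (c + 1) * m ≤ w) :
    a ∈ augSpan R (⊤ : Subgroup H) ^ m * ⊤ := by
  induction h generalizing m with
  | base a =>
    obtain rfl : m = 0 := by simpa using hm
    simp
  | zero w => exact zero_mem _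
  | add _ _ h1 h2 => exact add_mem (h1 hm) (h2 hm)
  | @mul i w a u hu _ h =>
    rcases le_or_gt c i with hi | hi
    · have hu1 : (inl u : H ⋊[φ] K) = 1 := by
        simpa [hc] using Subgroup.lowerCentralSeries_antitone _ hi hu
      rw [inl_injective (hu1.trans (map_one _).symm), map_one, sub_self, zero_mul]
      exact zero_mem _
    · cases m with
      | zero => simp
      | succ m =>
        rw [pow_succ', mul_assoc]
        refine Submodule.mul_mem_mul (of_sub_one_mem_augSpan (Subgroup.mem_top u)) (h ?_)
        rw [mul_add] at hm
        omega

end WeightGE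

theorem HasFaithfulRep.semidirectProduct_top [Group.FG H] [hG : Group.IsNilpotent (H ⋊[φ] K)]
    (hH : HasFaithfulRep H ⊤) (hK : HasFaithfulRep K ⊤) : HasFaithfulRep (H ⋊[φ] K) ⊤ := by
  obtain ⟨n, ρ, hρ, hρH⟩ := hH
  obtain ⟨Q, hQfin, hQ, hQker, k, hk⟩ :=
    exists_affineRep_invariant_le_ker (φ := φ) hρH fun _ _ => Subgroup.mem_top _
  obtain ⟨c, hc⟩ := (Group.isNilpotent_top.symm.trans
    (Subgroup.isNilpotent_iff_lowerCentralSeries ⊤)).mp hG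
  let weightFiltration (w : ℕ) : AddSubgroup (MonoidAlgebra ℤ H) :=
    { carrier := {a | WeightGE φ w a}
      add_mem' := .add
      zero_mem' := .zero w
      neg_mem' := .neg }
  have hzero : weightFiltration 0 = ⊤ := eq_top_iff.mpr fun a _ => .base a
  exact .semidirectProduct hρ hQfin hQ hQker (IsUnipotentOn.quotient hQ hzero
    (fun w hw a ha => hk k le_rfl (WeightGE.mem_augSpan_pow hc ha hw))
    fun g _ w a ha => WeightGE.apply_affineRep_sub g ha) hK le_top

end SemidirectSteps

/-! ### Climbing along infinite cyclic quotients -/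

section InfiniteCyclic

open SemidirectProduct

theorem hasFaithfulRep_multiplicative_int : HasFaithfulRep (Multiplicative ℤ) ⊤ := by
  let E : Module.End ℤ (ℤ × ℤ) := LinearMap.inl ℤ ℤ ℤ ∘ₗ LinearMap.snd ℤ ℤ ℤ
  have hE : E * E = 0 := rfl
  let ρ : Representation ℤ (Multiplicative ℤ) (ℤ × ℤ) :=
    { toFun n := 1 + n.toAdd • E
      map_one' := by simp
      map_mul' m n := by
        rw [toAdd_mul, add_mul, mul_add, mul_add, smul_mul_smul_comm, hE, one_mul, one_mul, mul_one]
        module }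
  have hρ (n : Multiplicative ℤ) (x : ℤ × ℤ) : ρ n x - x = (n.toAdd * x.2, 0) := by
    simp [ρ, E]
  refine .of_module ρ (fun m n hmn => ?_)
    ⟨2, fun w => if w = 0 then ⊤ else if w = 1 then (AddMonoidHom.snd ℤ ℤ).ker else ⊥, by simp,
      fun w hw => by simp [show w ≠ 0 by omega, show w ≠ 1 by omega], ?_⟩
  · simpa [ρ, E] using LinearMap.congr_fun hmn (0, 1)
  · rintro n - (_ | _ | w) x hx <;> rw [hρ]
    · simp only [zero_add, one_ne_zero, if_true, if_false]
      rfl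
    · have hx2 : x.2 = 0 := by
        simp only [zero_add, one_ne_zero, if_true, if_false] at hx
        exact hx
      simp [hx2]
    · have hx0 : x = 0 := by simpa using hx
      simp [hx0]

variable {G : Type*} [Group G]

theorem exists_mulEquiv_ker_semidirectProduct {F : Type*} [Group F] [IsFreeGroup F] {f : G →* F}
    (hf : Function.Surjective f) :
    ∃ (φ : F →* MulAut f.ker) (e : f.ker ⋊[φ] F ≃* G),
      (∀ h : f.ker, e (inl h) = h) ∧ ∀ x h, ∃ g : G, (φ x h : G) = g * h * g⁻¹ := by
  let S : GroupExtension f.ker G F :=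
    { inl := f.ker.subtype
      rightHom := f
      inl_injective := f.ker.subtype_injective
      range_inl_eq_ker_rightHom := f.ker.range_subtype
      rightHom_surjective := hf }
  let σ : F →* G := IsFreeGroup.lift fun x => Function.surjInv hf (IsFreeGroup.of x)
  have hσ : f.comp σ = MonoidHom.id F :=
    IsFreeGroup.ext_hom fun x => by simp [σ, Function.surjInv_eq hf]
  let s : S.Splitting := ⟨σ, DFunLike.congr_fun hσ⟩
  exact ⟨s.conjAct, s.semidirectProductToGroupExtensionEquiv.toMulEquiv,
    s.semidirectProductToGroupExtensionEquiv.map_inl, fun x h => ⟨σ x, S.inl_conjAct_comm⟩⟩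

instance isFreeGroup_multiplicative_int : IsFreeGroup (Multiplicative ℤ) :=
  .ofMulEquiv (FreeGroup.mulEquivIntOfUnique (α := Unit))

theorem HasFaithfulRep.of_ker_top [Group.IsNilpotent G] (f : G →* Multiplicative ℤ)
    [Group.FG f.ker] (h : HasFaithfulRep f.ker ⊤) : HasFaithfulRep G ⊤ := by
  obtain ⟨φ, e, -, -⟩ := exists_mulEquiv_ker_semidirectProduct f.rangeRestrict_surjective
  rw [← f.ker_rangeRestrict] at *
  have : Group.IsNilpotent (f.rangeRestrict.ker ⋊[φ] f.range) :=
    (Group.isNilpotent_congr e).mpr inferInstance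
  exact (h.semidirectProduct_top
    (hasFaithfulRep_multiplicative_int.comap f.range.subtype f.range.subtype_injective
      le_top)).comap e.symm.toMonoidHom e.symm.injective le_top

theorem HasFaithfulRep.of_ker (f : G →* Multiplicative ℤ) [Group.FG f.ker] {N : Subgroup G}
    [N.Normal] (hN : N ≤ f.ker) (hcomm : ⁅(⊤ : Subgroup G), f.ker⁆ ≤ N)
    (h : HasFaithfulRep f.ker (N.subgroupOf f.ker)) : HasFaithfulRep G N := by
  obtain ⟨φ, e, he, hφ⟩ := exists_mulEquiv_ker_semidirectProduct f.rangeRestrict_surjective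
  rw [← f.ker_rangeRestrict] at *
  refine (h.semidirectProduct_map_inl (φ := φ) (fun x u => ?_)
    (hasFaithfulRep_multiplicative_int.comap f.range.subtype f.range.subtype_injective
      (U' := ⊥) bot_le)).comap e.symm.toMonoidHom e.symm.injective fun u hu => ?_
  · obtain ⟨g, hg⟩ := hφ x u
    rw [Subgroup.mem_subgroupOf, Subgroup.coe_mul, hg, Subgroup.coe_inv]
    exact hcomm (Subgroup.commutator_mem_commutator (Subgroup.mem_top g) u.2)
  · exact ⟨⟨u, hN hu⟩, hu, e.injective (by simp [he])⟩

end InfiniteCyclic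

section PolyZ

universe u

/-- Poly-(infinite cyclic) groups: iterated extensions of the trivial group by infinite cyclic
quotients. The homomorphism to `ℤ` may be trivial, so every step has a trivial or an infinite cyclic
quotient. -/
inductive IsPolyZ : ∀ (G : Type u) [Group G], Prop
  | of_subsingleton (G) [Group G] [Subsingleton G] : IsPolyZ G
  | of_ker {G} [Group G] (f : G →* Multiplicative ℤ) : IsPolyZ f.ker → IsPolyZ G

theorem IsPolyZ.of_injective {G G' : Type u} [Group G] [Group G'] (h : IsPolyZ G) (j : G' →* G)
    (hj : Function.Injective j) : IsPolyZ G' := by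
  induction h generalizing G' with
  | of_subsingleton G =>
    have := hj.subsingleton
    exact .of_subsingleton G'
  | of_ker f _ ih =>
    have hker : (f.comp j).ker = f.ker.comap j := (MonoidHom.comap_ker f j).symm
    refine .of_ker (f.comp j) (ih ((j.subgroupComap f.ker).comp (MulEquiv.subgroupCongr hker)) ?_)
    exact fun x y hxy => Subtype.ext (hj (congrArg Subtype.val hxy))

namespace IsPolycyclic

variable {G G' : Type*} [Group G] [Group G']

theorem of_injective (h : IsPolycyclic G) (f : G' →* G) (hf : Function.Injective f) :
    IsPolycyclic G' := by
  have : Group.IsSolvable G := h.1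
  refine ⟨Group.isSolvable_of_isSolvable_injective hf, fun H => ?_⟩
  rw [Subgroup.fg_iff_submonoid_fg]
  exact .map_injective f hf ((Subgroup.fg_iff_submonoid_fg _).mp (h.2 (H.map f)))

theorem of_surjective (h : IsPolycyclic G) (f : G →* G') (hf : Function.Surjective f) :
    IsPolycyclic G' := by
  have : Group.IsSolvable G := h.1
  refine ⟨Group.isSolvable_of_surjective hf, fun H => ?_⟩
  rw [← Subgroup.map_comap_eq_self_of_surjective hf H, Subgroup.fg_iff_submonoid_fg]
  exact .map ((Subgroup.fg_iff_submonoid_fg _).mp (h.2 (H.comap f))) f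

theorem subgroup (h : IsPolycyclic G) (H : Subgroup G) : IsPolycyclic H :=
  h.of_injective H.subtype H.subtype_injective

theorem group_fg (h : IsPolycyclic G) : Group.FG G := ⟨h.2 ⊤⟩

end IsPolycyclic

theorem IsPolyZ.hasFaithfulRep_top {G : Type u} [Group G] (h : IsPolyZ G) (hG : IsPolycyclic G)
    (hnil : Group.IsNilpotent G) : HasFaithfulRep G ⊤ := by
  induction h with
  | of_subsingleton G => exact .of_subsingleton ⊤
  | of_ker f _ ih =>
    have := (hG.subgroup f.ker).group_fg
    exact .of_ker_top f (ih (hG.subgroup f.ker) inferInstance)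

theorem IsPolyZ.hasFaithfulRep_ker {A G : Type u} [Group A] [Group G] (hA : IsPolyZ A)
    (hG : IsPolycyclic G) {f : G →* A} (hf : ∀ x y, Commute (f x) (f y))
    (h : HasFaithfulRep f.ker ⊤) : HasFaithfulRep G f.ker := by
  induction hA generalizing G with
  | of_subsingleton A =>
    have hker : f.ker = ⊤ := eq_top_iff.mpr fun g _ => Subsingleton.elim (f g) 1
    rw [hker] at h ⊢
    exact h.comap (Subgroup.topEquiv (G := G)).symm.toMonoidHom
      Subgroup.topEquiv.symm.injective le_top
  | of_ker p _ ih =>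
    let G₀ : Subgroup G := (p.comp f).ker
    let f₀ : G₀ →* p.ker := (f.comp G₀.subtype).codRestrict p.ker fun g => g.2
    have hker : f₀.ker = f.ker.subgroupOf G₀ := by
      ext g
      exact Subtype.ext_iff
    have := (hG.subgroup G₀).group_fg
    have hcomm : ⁅(⊤ : Subgroup G), (p.comp f).ker⁆ ≤ f.ker :=
      Subgroup.commutator_le.mpr fun x _ y _ => by
        rw [MonoidHom.mem_ker, map_commutatorElement, (hf x y).commutator_eq]
    have h₀ : HasFaithfulRep f₀.ker ⊤ := by
      rw [hker]
      exact h.comap (G₀.subtype.subgroupComap f.ker)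
        (fun x y hxy => Subtype.ext (Subtype.ext (congrArg (fun z : f.ker => (z : G)) hxy))) le_top
    refine .of_ker (p.comp f) (fun g hg => ?_) hcomm ?_
    · rw [MonoidHom.mem_ker, MonoidHom.comp_apply, MonoidHom.mem_ker.mp hg, map_one]
    · rw [← hker]
      exact ih (hG.subgroup G₀) (fun x y => Subtype.ext (hf x y)) h₀

end PolyZ

/-! ### Subgroups of finite index in polycyclic groups -/

section FiniteIndex

open Subgroup Pointwise

variable {G : Type*} [Group G]

theorem relIndex_ne_zero_of_subset_mul {M K : Subgroup G} {T : Set G} (hT : T.Finite)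
    (h : (K : Set G) ⊆ T * M) : M.relIndex K ≠ 0 := by
  have : Finite ((QuotientGroup.mk : G → G ⧸ M) '' T) := hT.image _
  have hmem (g : K) : (QuotientGroup.mk (g : G) : G ⧸ M) ∈ QuotientGroup.mk '' T := by
    obtain ⟨t, ht, m, hm, htm⟩ := h g.2
    exact ⟨t, ht, QuotientGroup.eq.mpr (by simpa [← htm] using hm)⟩
  have : Finite (K ⧸ M.subgroupOf K) :=
    .of_injective (Quotient.lift (fun g : K => (⟨_, hmem g⟩ : QuotientGroup.mk '' T))
      fun a b hab =>
        Subtype.ext (QuotientGroup.eq.mpr (QuotientGroup.leftRel_apply.mp hab :))) <| by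
      rintro ⟨a⟩ ⟨b⟩ hab
      exact QuotientGroup.eq.mpr (QuotientGroup.eq.mp (congrArg Subtype.val hab) :)
  exact (finiteIndex_of_finite_quotient (H := M.subgroupOf K)).index_ne_zero

theorem exists_finite_subset_mul_of_relIndex_ne_zero {M K : Subgroup G} (h : M.relIndex K ≠ 0) :
    ∃ T : Set G, T.Finite ∧ (K : Set G) ⊆ T * M := by
  have : (M.subgroupOf K).FiniteIndex := ⟨h⟩
  refine ⟨_, Set.finite_range fun q : K ⧸ M.subgroupOf K => (q.out : G), fun g hg => ?_⟩
  refine ⟨_, ⟨QuotientGroup.mk ⟨g, hg⟩, rfl⟩, _, ?_, mul_inv_cancel_left _ g⟩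
  exact (QuotientGroup.eq (s := M.subgroupOf K)).mp
    (QuotientGroup.out_eq' (QuotientGroup.mk ⟨g, hg⟩))

theorem coe_sup_zpowers {H : Subgroup G} {t : G} (ht : t ∈ normalizer (H : Set G)) :
    ((H ⊔ zpowers t : Subgroup G) : Set G) = zpowers t * H := by
  rw [sup_comm, coe_mul_of_left_le_normalizer_right _ _ (by rwa [zpowers_le])]

theorem relIndex_sup_zpowers_ne_zero {A H M : Subgroup G} (hA : A.relIndex H ≠ 0) (hAM : A ≤ M)
    {t : G} (ht : t ∈ normalizer (H : Set G)) {j : ℤ} (hj : j ≠ 0) (htj : t ^ j ∈ M) :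
    M.relIndex (H ⊔ zpowers t) ≠ 0 := by
  obtain ⟨T, hT, hHT⟩ := exists_finite_subset_mul_of_relIndex_ne_zero hA
  refine relIndex_ne_zero_of_subset_mul
    (T := (fun r : ℤ => t ^ r) '' Set.Ico 0 |j| * T) (((Set.finite_Ico _ _).image _).mul hT) ?_
  rw [coe_sup_zpowers ht]
  rintro _ ⟨_, ⟨k, rfl⟩, h, hh, rfl⟩
  have hconj : (t ^ j) ^ (k / j) * h * ((t ^ j) ^ (k / j))⁻¹ ∈ H :=
    (zpow_mem (zpow_mem ht j) (k / j) h).mp hh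
  obtain ⟨s, hs, a, ha, hsa⟩ := Set.mem_mul.mp (hHT hconj)
  refine ⟨t ^ (k % j) * s, Set.mul_mem_mul ⟨k % j, ⟨k.emod_nonneg hj, k.emod_lt_abs hj⟩, rfl⟩ hs,
    a * (t ^ j) ^ (k / j), M.mul_mem (hAM ha) (M.zpow_mem htj _), ?_⟩
  calc t ^ (k % j) * s * (a * (t ^ j) ^ (k / j))
      = t ^ (k % j) * (s * a) * (t ^ j) ^ (k / j) := by group
    _ = t ^ (k % j) * (t ^ j) ^ (k / j) * h := by
      rw [hsa]
      group
    _ = t ^ k * h := by rw [← zpow_mul, ← zpow_add, Int.emod_add_mul_ediv]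

theorem finite_monoidHom_of_fg (H P : Type*) [Group H] [Group P] [Group.FG H] [Finite P] :
    Finite (H →* P) := by
  obtain ⟨S, hS⟩ := Group.FG.out (G := H)
  exact .of_injective (fun (f : H →* P) (s : S) => f s) fun f g hfg =>
    MonoidHom.eq_of_eqOn_dense hS fun s hs => congrFun hfg ⟨s, hs⟩

theorem exists_characteristic_le (L : Subgroup G) [Group.FG G] [L.FiniteIndex] :
    ∃ X ≤ L, X.FiniteIndex ∧ X.Characteristic := by
  have := finite_monoidHom_of_fg G (Equiv.Perm (G ⧸ L))
  refine ⟨⨅ φ : G →* Equiv.Perm (G ⧸ L), φ.ker, ?_, finiteIndex_iInf fun φ => inferInstance, ?_⟩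
  · exact (iInf_le _ (MulAction.toPermHom G (G ⧸ L))).trans
      (L.normalCore_eq_ker.symm.trans_le L.normalCore_le)
  · refine characteristic_iff_le_comap.mpr fun α x hx => mem_iInf.mpr fun φ => ?_
    exact mem_iInf.mp hx (φ.comp α.toMonoidHom)

theorem exists_le_normalizer_le {H L : Subgroup G} (hfg : H.FG) (h : L.relIndex H ≠ 0) :
    ∃ X ≤ L ⊓ H, X.relIndex H ≠ 0 ∧ normalizer (H : Set G) ≤ normalizer (X : Set G) := by
  have : (L.subgroupOf H).FiniteIndex := ⟨h⟩
  have : Group.FG H := (Group.fg_iff_subgroup_fg H).mpr hfg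
  obtain ⟨X, hXL, hX, hXchar⟩ := exists_characteristic_le (L.subgroupOf H)
  refine ⟨X.map H.subtype, le_inf (map_le_iff_le_comap.mpr hXL) (map_subtype_le X), ?_, ?_⟩
  · rw [relIndex, subgroupOf, comap_map_eq_self_of_injective H.subtype_injective]
    exact hX.index_ne_zero
  · rw [le_normalizer_iff]
    rintro g hg _ ⟨x, hx, rfl⟩
    exact ⟨_, characteristic_iff_le_comap.mp hXchar (H.normalizerMonoidHom ⟨g, hg⟩) hx, rfl⟩

theorem sup_zpowers_induction {P : Subgroup G → Prop}
    (hP : ∀ H : Subgroup G, ∀ t ∈ normalizer (H : Set G), P H → P (H ⊔ zpowers t))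
    {D K : Subgroup G} (hK : K.FG) (hDK : D ≤ K) (hcomm : ⁅K, K⁆ ≤ D) (hD : P D) : P K := by
  obtain ⟨S, rfl, hS⟩ := (fg_iff K).mp hK
  have key : P (D ⊔ closure S) := by
    refine Set.Finite.induction_on_subset (motive := fun T _ => P (D ⊔ closure T)) S hS ?_ ?_
    · simpa using hD
    · intro t T ht hT _ hPT
      have hle : D ⊔ closure T ≤ closure S := sup_le hDK (closure_mono hT)
      have hnorm : closure S ≤ normalizer ((D ⊔ closure T : Subgroup G) : Set G) :=
        le_normalizer_iff_commutator_le_left.mpr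
          ((commutator_mono hle le_rfl).trans (hcomm.trans le_sup_left))
      rw [Set.insert_eq, Set.union_comm, Subgroup.closure_union, ← zpowers_eq_closure, ← sup_assoc]
      exact hP _ t (hnorm (subset_closure ht)) hPT
  rwa [sup_eq_right.mpr hDK] at key

theorem IsPolycyclic.sup_zpowers_induction (hG : IsPolycyclic G) {P : Subgroup G → Prop}
    (hbot : P ⊥)
    (hP : ∀ H : Subgroup G, ∀ t ∈ normalizer (H : Set G), P H → P (H ⊔ zpowers t)) : P ⊤ := by
  obtain ⟨n, hn⟩ := hG.1.solvable
  have hder (i : ℕ) (hi : i ≤ n) : P (derivedSeries G i) := by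
    induction hi using Nat.decreasingInduction with
    | self => rwa [hn]
    | of_succ i _ ih =>
      exact _root_.sup_zpowers_induction hP (hG.2 _) (derivedSeries_antitone _ i.le_succ) le_rfl ih
  exact hder 0 n.zero_le

/-- A subgroup of finite index in `H` need not be normalized by the next generator `t`, but it may
be replaced by a subgroup of finite index that is. -/
theorem IsPolycyclic.exists_finiteIndex_of_sup_zpowers (hG : IsPolycyclic G) {P : Subgroup G → Prop}
    (hbot : P ⊥) (hanti : ∀ {L L' : Subgroup G}, L' ≤ L → P L → P L')
    (hP : ∀ L : Subgroup G, ∀ t ∈ normalizer (L : Set G), P L → (∀ k : ℤ, t ^ k ∈ L → k = 0) →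
      ∃ j : ℤ, j ≠ 0 ∧ P (L ⊔ zpowers (t ^ j))) :
    ∃ L : Subgroup G, L.FiniteIndex ∧ P L := by
  suffices ∃ L ≤ (⊤ : Subgroup G), L.relIndex ⊤ ≠ 0 ∧ P L by
    obtain ⟨L, -, hL, hPL⟩ := this
    exact ⟨L, ⟨by rwa [← relIndex_top_right]⟩, hPL⟩
  refine hG.sup_zpowers_induction (P := fun H => ∃ L ≤ H, L.relIndex H ≠ 0 ∧ P L)
    ⟨⊥, le_rfl, by simp, hbot⟩ fun H t ht ⟨L, hLH, hL, hPL⟩ => ?_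
  by_cases hinf : ∀ k : ℤ, t ^ k ∈ L → k = 0
  · obtain ⟨X, hXLH, hX, hn⟩ := exists_le_normalizer_le (hG.2 H) hL
    obtain ⟨hXL, hXH⟩ := le_inf_iff.mp hXLH
    obtain ⟨j, hj, hPj⟩ := hP X t (hn ht) (hanti hXL hPL) fun k hk => hinf k (hXL hk)
    exact ⟨_, sup_le_sup hXH (zpowers_le.mpr (zpow_mem_zpowers t j)),
      relIndex_sup_zpowers_ne_zero hX le_sup_left ht hj (mem_sup_right (mem_zpowers _)), hPj⟩
  · push Not at hinf
    obtain ⟨k, hk, hk0⟩ := hinf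
    exact ⟨L, hLH.trans le_sup_left, relIndex_sup_zpowers_ne_zero hL le_rfl ht hk0 hk, hPL⟩

end FiniteIndex

section FiniteIndexPolyZ

open Subgroup Pointwise

universe u

variable {G : Type u} [Group G]

theorem IsPolyZ.sup_zpowers {L : Subgroup G} (hL : IsPolyZ L) {t : G}
    (ht : t ∈ normalizer (L : Set G)) (hinf : ∀ k : ℤ, t ^ k ∈ L → k = 0) :
    IsPolyZ (L ⊔ zpowers t : Subgroup G) := by
  have hLB : L ≤ L ⊔ zpowers t := le_sup_left
  generalize hB : L ⊔ zpowers t = B at *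
  have htB : t ∈ B := hB ▸ mem_sup_right (mem_zpowers t)
  have : (L.subgroupOf B).Normal := (normal_subgroupOf_iff_le_normalizer hLB).mpr <|
    hB ▸ sup_le le_normalizer (zpowers_le.mpr ht)
  let e := zpowersHom (B ⧸ L.subgroupOf B) (QuotientGroup.mk ⟨t, htB⟩)
  have he : Function.Bijective e := by
    refine ⟨(injective_iff_map_eq_one e).mpr fun k hk => hinf k.toAdd ?_, ?_⟩
    · simpa [e, mem_subgroupOf] using QuotientGroup.eq.mp hk.symm
    · rintro ⟨g⟩
      obtain ⟨_, ⟨k, rfl⟩, l, hl, hkl⟩ : (g : G) ∈ (zpowers t * L : Set G) := by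
        rw [← coe_sup_zpowers ht, hB]
        exact g.2
      refine ⟨.ofAdd k, QuotientGroup.eq.mpr ?_⟩
      simpa [mem_subgroupOf, ← hkl] using hl
  let f := (MulEquiv.ofBijective e he).symm.toMonoidHom.comp (QuotientGroup.mk' _)
  have hf : f.ker = L.subgroupOf B := by
    ext g
    simp [f]
  refine .of_ker f (hL.of_injective ((subgroupOfEquivOfLe hLB).toMonoidHom.comp
    (MulEquiv.subgroupCongr hf).toMonoidHom) ?_)
  exact (subgroupOfEquivOfLe hLB).injective.comp (MulEquiv.subgroupCongr hf).injective

theorem IsPolycyclic.exists_finiteIndex_isPolyZ (hG : IsPolycyclic G) :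
    ∃ L : Subgroup G, L.FiniteIndex ∧ IsPolyZ L :=
  hG.exists_finiteIndex_of_sup_zpowers (.of_subsingleton _)
    (fun hle hL => hL.of_injective (inclusion hle) (inclusion_injective hle))
    fun _ t ht hL hinf => ⟨1, one_ne_zero, (zpow_one t).symm ▸ hL.sup_zpowers ht hinf⟩

end FiniteIndexPolyZ

/-! ### The theorem of Lie–Kolchin–Maltsev -/

section Weights

variable {K G V : Type*} [Field K] [Group G] [AddCommGroup V] [Module K V]

/-- The weight space of a character `χ`: the vectors on which the group acts through `χ`. -/
def weightSpace (ρ : Representation K G V) (χ : G →* Kˣ) : Submodule K V where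
  carrier := {v | ∀ g, ρ g v = χ g • v}
  add_mem' hv hw g := by rw [map_add, hv g, hw g, smul_add]
  zero_mem' g := by rw [map_zero, smul_zero]
  smul_mem' c v hv g := by rw [map_smul, hv g, smul_comm]

/-- The subgroup of the elements that have `v` as an eigenvector. -/
def lineStabilizer (ρ : Representation K G V) (v : V) : Subgroup G where
  carrier := {g | ∃ c : Kˣ, ρ g v = c • v}
  one_mem' := ⟨1, by simp⟩
  mul_mem' := by
    rintro g h ⟨c, hc⟩ ⟨d, hd⟩
    exact ⟨c * d, by
      rw [map_mul, Module.End.mul_apply, hd, LinearMap.map_smul_of_tower, hc, smul_smul, mul_comm]⟩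
  inv_mem' := by
    rintro g ⟨c, hc⟩
    refine ⟨c⁻¹, ?_⟩
    rw [eq_inv_smul_iff, ← LinearMap.map_smul_of_tower, ← hc, ρ.inv_self_apply]

theorem exists_mem_weightSpace {ρ : Representation K G V} {v : V} (hv : v ≠ 0) {L : Subgroup G}
    (hL : L ≤ lineStabilizer ρ v) : ∃ χ, v ∈ weightSpace (ρ.comp L.subtype) χ := by
  choose χ hχ using fun g : L => hL g.2
  have huniq {c d : Kˣ} (h : c • v = d • v) : c = d := Units.ext (smul_left_injective K hv h)
  refine ⟨MonoidHom.mk' χ fun g h => huniq ?_, hχ⟩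
  rw [← hχ, Subgroup.coe_mul, map_mul, Module.End.mul_apply, hχ h,
    LinearMap.map_smul_of_tower, hχ g, smul_smul, mul_comm]

theorem finite_setOf_weightSpace_ne_bot [FiniteDimensional K V] [Group.FG G]
    (ρ : Representation K G V) : {χ | weightSpace ρ χ ≠ ⊥}.Finite := by
  obtain ⟨S, hS⟩ := Group.FG.out (G := G)
  have heig (χ : {χ | weightSpace ρ χ ≠ ⊥}) (s : G) :
      Module.End.HasEigenvalue (ρ s) (χ.1 s : K) := by
    obtain ⟨v, hv, hv0⟩ := (Submodule.ne_bot_iff _).mp χ.2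
    exact Module.End.hasEigenvalue_of_hasEigenvector
      ⟨Module.End.mem_eigenspace_iff.mpr (hv s), hv0⟩
  let eigs (χ : {χ | weightSpace ρ χ ≠ ⊥}) (s : S) : Module.End.Eigenvalues (ρ (s : G)) :=
    ⟨χ.1 s, heig χ s⟩
  refine Set.finite_coe_iff.mp (Finite.of_injective eigs fun χ ψ h => Subtype.ext ?_)
  exact MonoidHom.eq_of_eqOn_dense hS fun s hs =>
    Units.ext (congrArg Subtype.val (congrFun h ⟨s, hs⟩))

theorem apply_eq_self_of_mem_commutator {ρ : Representation K G V} {χ : G →* Kˣ} {v : V}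
    (hv : v ∈ weightSpace ρ χ) {u : G} (hu : u ∈ commutator G) : ρ u v = v := by
  rw [hv u, Abelianization.commutator_subset_ker χ hu, one_smul]

theorem apply_mem_weightSpace_normalizerMonoidHom {ρ : Representation K G V} {L : Subgroup G}
    {χ : L →* Kˣ} {v : V} (hv : v ∈ weightSpace (ρ.comp L.subtype) χ)
    (t : Subgroup.normalizer (L : Set G)) :
    ρ t v ∈ weightSpace (ρ.comp L.subtype)
      (χ.comp (L.normalizerMonoidHom t⁻¹).toMonoidHom) := by
  intro g
  let g' : L := L.normalizerMonoidHom t⁻¹ g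
  have hgt : (g : G) * t = t * g' := by
    have : (g' : G) = (t : G)⁻¹ * g * (t : G)⁻¹⁻¹ := rfl
    rw [this]
    group
  calc ρ g (ρ t v) = ρ t (ρ g' v) := by
        rw [← Module.End.mul_apply, ← map_mul, hgt, map_mul, Module.End.mul_apply]
    _ = χ g' • ρ t v := by
        rw [← LinearMap.map_smul_of_tower]
        exact congrArg _ (hv g')

/-- The powers of `t` permute the finitely many weights of `L`. -/
theorem exists_zpow_apply_mem_weightSpace [FiniteDimensional K V] {ρ : Representation K G V}
    {L : Subgroup G} [Group.FG L] {χ : L →* Kˣ} (hχ : weightSpace (ρ.comp L.subtype) χ ≠ ⊥) {t : G}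
    (ht : t ∈ Subgroup.normalizer (L : Set G)) :
    ∃ j : ℤ, j ≠ 0 ∧ ∀ v ∈ weightSpace (ρ.comp L.subtype) χ,
      ρ (t ^ j) v ∈ weightSpace (ρ.comp L.subtype) χ := by
  let α := L.normalizerMonoidHom
  let s : Subgroup.normalizer (L : Set G) := ⟨t, ht⟩
  let ψ (k : ℤ) : L →* Kˣ := χ.comp (α (s ^ k)⁻¹).toMonoidHom
  have hψ (k : ℤ) : weightSpace (ρ.comp L.subtype) (ψ k) ≠ ⊥ := by
    obtain ⟨v, hv, hv0⟩ := (Submodule.ne_bot_iff _).mp hχ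
    refine (Submodule.ne_bot_iff _).mpr
      ⟨_, apply_mem_weightSpace_normalizerMonoidHom hv (s ^ k), fun h => hv0 ?_⟩
    rw [← ρ.inv_self_apply (s ^ k : Subgroup.normalizer (L : Set G)) v, h, map_zero]
  have := (finite_setOf_weightSpace_ne_bot (ρ.comp L.subtype)).to_subtype
  obtain ⟨i, j, hij, h⟩ := Finite.exists_ne_map_eq_of_infinite
    fun k => (⟨ψ k, hψ k⟩ : {χ | weightSpace (ρ.comp L.subtype) χ ≠ ⊥})
  have hχψ : ψ (j - i) = χ := by
    ext g : 1
    have hg : ψ i (α (s ^ i) g) = ψ j (α (s ^ i) g) :=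
      DFunLike.congr_fun (congrArg Subtype.val h) _
    simp only [ψ, MonoidHom.comp_apply, MulEquiv.toMonoidHom_eq_coe, MonoidHom.coe_coe,
      ← MulAut.mul_apply, ← map_mul, ← zpow_neg, ← zpow_add] at hg ⊢
    rw [neg_add_cancel, zpow_zero, map_one, MulAut.one_apply] at hg
    rw [hg, neg_sub, sub_eq_neg_add]
  refine ⟨j - i, sub_ne_zero.mpr hij.symm, fun v hv => ?_⟩
  have := apply_mem_weightSpace_normalizerMonoidHom hv (s ^ (j - i))
  rwa [show χ.comp _ = χ from hχψ] at this

theorem exists_lineStabilizer_sup_zpowers [IsAlgClosed K] [FiniteDimensional K V]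
    {ρ : Representation K G V} {L : Subgroup G} [Group.FG L] {v : V} (hv : v ≠ 0)
    (hL : L ≤ lineStabilizer ρ v) {t : G} (ht : t ∈ Subgroup.normalizer (L : Set G)) :
    ∃ j : ℤ, j ≠ 0 ∧ ∃ w ≠ 0, L ⊔ Subgroup.zpowers (t ^ j) ≤ lineStabilizer ρ w := by
  obtain ⟨χ, hχ⟩ := exists_mem_weightSpace hv hL
  have hbot : weightSpace (ρ.comp L.subtype) χ ≠ ⊥ := (Submodule.ne_bot_iff _).mpr ⟨v, hχ, hv⟩
  obtain ⟨j, hj, htj⟩ := exists_zpow_apply_mem_weightSpace hbot ht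
  have := Submodule.nontrivial_iff_ne_bot.mpr hbot
  obtain ⟨c, hc⟩ := Module.End.exists_eigenvalue ((ρ (t ^ j)).restrict htj)
  obtain ⟨w, hw⟩ := hc.exists_hasEigenvector
  have hw0 : (w : V) ≠ 0 := fun h => hw.2 (Subtype.ext h)
  have htw : ρ (t ^ j) w = c • (w : V) := congrArg Subtype.val hw.apply_eq_smul
  have hc0 : c ≠ 0 := by
    rintro rfl
    rw [zero_smul] at htw
    exact hw0 (by rw [← ρ.inv_self_apply (t ^ j) w, htw, map_zero])
  refine ⟨j, hj, w, hw0, sup_le (fun g hg => ⟨χ ⟨g, hg⟩, w.2 ⟨g, hg⟩⟩) ?_⟩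
  exact Subgroup.zpowers_le.mpr ⟨Units.mk0 c hc0, htw⟩

end Weights

section LieKolchin

universe u v

variable {K : Type*} [Field K] [IsAlgClosed K]

theorem IsPolycyclic.exists_finiteIndex_le_lineStabilizer {G V : Type*} [Group G] [AddCommGroup V]
    [Module K V] [FiniteDimensional K V] [Nontrivial V] (hG : IsPolycyclic G)
    (ρ : Representation K G V) :
    ∃ L : Subgroup G, L.FiniteIndex ∧ ∃ v ≠ 0, L ≤ lineStabilizer ρ v := by
  obtain ⟨v, hv⟩ := exists_ne (0 : V)
  refine hG.exists_finiteIndex_of_sup_zpowers ⟨v, hv, bot_le⟩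
    (fun hle ⟨w, hw, hL⟩ => ⟨w, hw, hle.trans hL⟩) fun L t ht ⟨w, hw, hL⟩ _ => ?_
  have := (hG.subgroup L).group_fg
  exact exists_lineStabilizer_sup_zpowers hw hL ht

/-- Induction on the dimension, splitting off a common eigenvector. -/
theorem IsPolycyclic.exists_isUnipotentOn_commutator {G : Type u} {V : Type v} [Group G]
    [AddCommGroup V] [Module K V] [FiniteDimensional K V] (hG : IsPolycyclic G)
    (ρ : Representation K G V) :
    ∃ L : Subgroup G, L.FiniteIndex ∧ IsUnipotentOn ρ ⁅L, L⁆ := by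
  induction hn : Module.finrank K V generalizing G V with
  | zero =>
    have := Module.finrank_zero_iff.mp hn
    exact ⟨⊤, inferInstance, 0, fun _ => ⊥, Subsingleton.elim _ _, fun _ _ => rfl,
      fun _ _ _ _ _ => Subsingleton.elim _ _⟩
  | succ n ih =>
    have : Nontrivial V := Module.nontrivial_of_finrank_eq_succ hn
    obtain ⟨L, hL, v, hv, hLv⟩ := hG.exists_finiteIndex_le_lineStabilizer ρ
    let ρL : Representation K L V := ρ.comp L.subtype
    have hW (g : L) : K ∙ v ≤ (K ∙ v).comap (ρL g) := by
      obtain ⟨c, hc⟩ := hLv g.2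
      rw [Submodule.span_singleton_le_iff_mem, Submodule.mem_comap]
      exact Submodule.mem_span_singleton.mpr ⟨c, hc.symm⟩
    have hrank : Module.finrank K (V ⧸ K ∙ v) = n := by
      have := Submodule.finrank_quotient_add_finrank (K ∙ v)
      rw [finrank_span_singleton hv] at this
      omega
    obtain ⟨L', hL', hU⟩ := ih (hG.subgroup L) (ρL.quotient _ hW) hrank
    refine ⟨L'.map L.subtype, ⟨?_⟩, ?_⟩
    · rw [Subgroup.index_map_subtype]
      exact mul_ne_zero hL'.index_ne_zero hL.index_ne_zero
    · rw [← Subgroup.map_commutator]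
      obtain ⟨χ, hχ⟩ := exists_mem_weightSpace hv hLv
      refine (hU.of_equivariant (ρ := ρL) (.id L) le_rfl (K ∙ v).mkQ.toAddMonoidHom
        (fun _ _ _ => rfl) fun u hu m hm => ?_).map
      obtain ⟨c, rfl⟩ := Submodule.mem_span_singleton.mp
        ((Submodule.Quotient.mk_eq_zero _).mp hm)
      rw [map_smul, apply_eq_self_of_mem_commutator hχ (Subgroup.commutator_mono le_top le_top hu)]

open scoped TensorProduct in
/-- Modulo its torsion subgroup `T`, `A` embeds into a complex representation, and a subgroup of
finite index acts trivially on the finite group `T`. -/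
theorem IsPolycyclic.exists_isUnipotentOn_commutator_int {G A : Type*} [Group G] [AddCommGroup A]
    [Module.Finite ℤ A] (hG : IsPolycyclic G) (ρ : Representation ℤ G A) :
    ∃ L : Subgroup G, L.FiniteIndex ∧ IsUnipotentOn ρ ⁅L, L⁆ := by
  let T := Submodule.torsion ℤ A
  have : Finite T := Module.finite_of_fg_torsion _ Submodule.torsion_isTorsion
  have hT (g : G) : T ≤ T.comap (ρ g) := by
    rintro x ⟨a, ha : (a : ℤ) • x = 0⟩
    exact ⟨a, show (a : ℤ) • ρ g x = 0 by rw [← map_smul, ha, map_zero]⟩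
  let τ : G →* Module.End ℤ T := ρ.subrepresentation T hT
  have : Finite (Module.End ℤ T) := .of_injective _ DFunLike.coe_injective
  have hτ : τ.ker.FiniteIndex := by
    rw [← MonoidHom.ker_toHomUnits]
    infer_instance
  let σ : Representation ℂ G (ℂ ⊗[ℤ] (A ⧸ T)) :=
    (Module.End.baseChangeHom ℤ ℂ (A ⧸ T)).toMonoidHom.comp (ρ.quotient T hT)
  obtain ⟨L, hL, hU⟩ := hG.exists_isUnipotentOn_commutator σ
  have hinj : Function.Injective (TensorProduct.mk ℤ ℂ (A ⧸ T) 1) :=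
    Module.Flat.tensorProduct_mk_injective ℤ (A ⧸ T) ℂ
  refine ⟨L ⊓ τ.ker, inferInstance, hU.of_equivariant (.id G)
    (Subgroup.commutator_mono inf_le_left inf_le_left)
    ((TensorProduct.mk ℤ ℂ (A ⧸ T) 1).comp T.mkQ).toAddMonoidHom (fun u _ m => ?_)
    fun u hu m hm => ?_⟩
  · change (1 : ℂ) ⊗ₜ[ℤ] T.mkQ (ρ u m) =
      LinearMap.baseChange ℂ (ρ.quotient T hT u) (1 ⊗ₜ[ℤ] T.mkQ m)
    rw [LinearMap.baseChange_tmul]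
    rfl
  · have hmT : m ∈ T := (Submodule.Quotient.mk_eq_zero T).mp (hinj (by simpa using hm))
    have hu : τ u = 1 := (Subgroup.commutator_mono inf_le_right inf_le_right).trans
      (Subgroup.commutator_le_left _ _) hu
    exact congrArg Subtype.val (LinearMap.congr_fun hu ⟨m, hmT⟩)

end LieKolchin

/-! ### Nilpotency of the commutator subgroup up to finite index -/

section NilpotentCommutator

variable {G : Type*} [Group G]

/-- The action of `G` by conjugation on the abelianization of a normal subgroup `D`, written
additively. -/
def conjAbelianization (D : Subgroup G) [D.Normal] :
    Representation ℤ G (Additive (Abelianization D)) where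
  toFun g := (MonoidHom.toAdditive
    (Abelianization.map (MulAut.conjNormal g : MulAut D).toMonoidHom)).toIntLinearMap
  map_one' := by
    refine LinearMap.ext (QuotientGroup.mk_surjective.forall.mpr fun d => ?_)
    exact congrArg (fun d : D => Additive.ofMul (Abelianization.of d))
      (DFunLike.congr_fun (map_one MulAut.conjNormal) d)
  map_mul' g h := by
    refine LinearMap.ext (QuotientGroup.mk_surjective.forall.mpr fun d => ?_)
    exact congrArg (fun d : D => Additive.ofMul (Abelianization.of d))
      (DFunLike.congr_fun (map_mul MulAut.conjNormal g h) d)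

theorem conjAbelianization_ofMul_of (D : Subgroup G) [D.Normal] (g : G) (d : D) :
    conjAbelianization D g (.ofMul (.of d)) = .ofMul (.of (MulAut.conjNormal g d)) :=
  rfl

/-- For `x` in the preimage of `F w` and `u ∈ U`, the commutator `⁅x, u⁆` lies in the preimage of
`F (w + 1)`, so each further commutator with `U` descends one step from `D` towards `⁅D, D⁆`. -/
theorem exists_lowerCentralSeries_le_commutator {D U : Subgroup G} [D.Normal]
    (hU : IsUnipotentOn (conjAbelianization D) U) {j : ℕ} (hj : U.lowerCentralSeries j ≤ D) :
    ∃ j', U.lowerCentralSeries j' ≤ ⁅D, D⁆ := by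
  obtain ⟨k, F, h0, hk, hF⟩ := hU
  let E (w : ℕ) : Subgroup G :=
    ((AddSubgroup.toSubgroup' (F w)).comap (Abelianization.of : D →* _)).map D.subtype
  have hE0 : E 0 = D := by
    simp only [E, h0]
    exact (MonoidHom.range_eq_map D.subtype).symm.trans D.range_subtype
  have hEk : E k = ⁅D, D⁆ := by
    rw [← Subgroup.map_subtype_commutator, ← Abelianization.ker_of]
    simp only [E, hk k le_rfl]
    rfl
  have hE (w : ℕ) : ⁅E w, U⁆ ≤ E (w + 1) := by
    rw [Subgroup.commutator_le]
    rintro _ ⟨d, hd, rfl⟩ u hu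
    refine ⟨d * (MulAut.conjNormal u d)⁻¹, ?_, ?_⟩
    · have hdrop : -(conjAbelianization D u (.ofMul (.of d)) - .ofMul (.of d)) ∈ F (w + 1) :=
        neg_mem (hF u hu w _ hd)
      rwa [conjAbelianization_ofMul_of, neg_sub, sub_eq_add_neg, ← ofMul_inv, ← ofMul_mul,
        ← map_inv, ← map_mul] at hdrop
    · simp [commutatorElement_def, mul_assoc]
  have hlcs (w : ℕ) : U.lowerCentralSeries (j + w) ≤ E w := by
    induction w with
    | zero => rwa [hE0]
    | succ w ih => exact (Subgroup.commutator_mono ih le_rfl).trans (hE w)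
  exact ⟨j + k, (hlcs k).trans hEk.le⟩

/-- The commutator subgroup is made to act unipotently on all factors of the derived series. -/
theorem IsPolycyclic.exists_finiteIndex_isNilpotent_commutator (hG : IsPolycyclic G) :
    ∃ L : Subgroup G, L.FiniteIndex ∧ Group.IsNilpotent (commutator L) := by
  obtain ⟨n, hn⟩ := hG.1.solvable
  have hfactor (i : Fin n) : ∃ L : Subgroup G, L.FiniteIndex ∧
      IsUnipotentOn (conjAbelianization (derivedSeries G i)) ⁅L, L⁆ := by
    have := (hG.subgroup (derivedSeries G i)).group_fg
    have : Group.FG (Abelianization (derivedSeries G i)) := QuotientGroup.fg _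
    have : Module.Finite ℤ (Additive (Abelianization (derivedSeries G i))) :=
      Module.Finite.iff_addGroup_fg.mpr inferInstance
    exact hG.exists_isUnipotentOn_commutator_int _
  choose L hL hU using hfactor
  let M := ⨅ i, L i
  have hlcs (i : ℕ) (hi : i ≤ n) :
      ∃ j, (⁅M, M⁆ : Subgroup G).lowerCentralSeries j ≤ derivedSeries G i := by
    induction i with
    | zero => exact ⟨0, le_top⟩
    | succ i ih =>
      obtain ⟨j, hj⟩ := ih (by omega)
      have hle : M ≤ L ⟨i, hi⟩ := iInf_le _ _
      exact exists_lowerCentralSeries_le_commutator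
        ((hU ⟨i, hi⟩).mono (Subgroup.commutator_mono hle hle)) hj
  obtain ⟨j, hj⟩ := hlcs n le_rfl
  have : Group.IsNilpotent (⁅M, M⁆ : Subgroup G) :=
    Subgroup.isNilpotent_of_lowerCentralSeries_eq_bot (le_bot_iff.mp (hj.trans hn.le))
  refine ⟨M, Subgroup.finiteIndex_iInf hL, ?_⟩
  have e := (commutator M).equivMapOfInjective _ M.subtype_injective
  rwa [Group.isNilpotent_congr e, Subgroup.map_subtype_commutator]

end NilpotentCommutator

/-! ### Linearity of polycyclic groups -/

section Assembly

variable {G : Type*} [Group G]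

theorem IsPolyZ.hasFaithfulRep_of_isNilpotent_commutator (hZ : IsPolyZ G) (hG : IsPolycyclic G)
    (hnil : Group.IsNilpotent (commutator G)) : HasFaithfulRep G ⊥ := by
  have hof : Function.Surjective (Abelianization.of : G →* _) := QuotientGroup.mk_surjective
  obtain ⟨A, hA, hAZ⟩ := (hG.of_surjective _ hof).exists_finiteIndex_isPolyZ
  let H : Subgroup G := A.comap Abelianization.of
  have : H.FiniteIndex := ⟨by
    rw [Subgroup.index_comap_of_surjective A hof]
    exact hA.index_ne_zero⟩
  let f : H →* A := Abelianization.of.subgroupComap A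
  have hf (x : f.ker) : (x : G) ∈ commutator G := by
    rw [← Abelianization.ker_of]
    exact congrArg Subtype.val x.2
  let j : f.ker →* commutator G := (H.subtype.comp f.ker.subtype).codRestrict _ hf
  have hj : Function.Injective j := fun x y hxy =>
    Subtype.ext (Subtype.ext (congrArg (fun z : commutator G => (z : G)) hxy))
  have hker : HasFaithfulRep f.ker ⊤ :=
    (hZ.of_injective ((commutator G).subtype.comp j)
      ((commutator G).subtype_injective.comp hj)).hasFaithfulRep_top
      ((hG.subgroup H).subgroup f.ker)
      ((Group.isNilpotent_congr (MonoidHom.ofInjective hj)).mpr inferInstance)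
  exact .of_finiteIndex (hAZ.hasFaithfulRep_ker (hG.subgroup H) (fun _ _ => .all _ _) hker)

theorem IsPolycyclic.hasFaithfulRep (hG : IsPolycyclic G) : HasFaithfulRep G ⊥ := by
  obtain ⟨H, _, hH⟩ := hG.exists_finiteIndex_isPolyZ
  obtain ⟨M, _, hM⟩ := (hG.subgroup H).exists_finiteIndex_isNilpotent_commutator
  have hMrep : HasFaithfulRep M ⊥ :=
    (hH.of_injective M.subtype M.subtype_injective).hasFaithfulRep_of_isNilpotent_commutator
      ((hG.subgroup H).subgroup M) hM
  exact .of_finiteIndex (.of_finiteIndex hMrep)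

end Assembly

/-- (Auslander, Swan) Every polycyclic-by-finite group embeds into `GL(n, ℤ)`
for some `n`. -/
theorem polycyclicByFinite_linear (Γ : Type*) [Group Γ] (hΓ : IsPolycyclicByFinite Γ) :
    ∃ (n : ℕ) (φ : Γ →* Matrix.GeneralLinearGroup (Fin n) ℤ), Function.Injective φ := by
  obtain ⟨N, -, hN, hfin⟩ := hΓ
  have : N.FiniteIndex := Subgroup.finiteIndex_of_finite_quotient
  have hΓrep : HasFaithfulRep Γ ⊥ := .of_finiteIndex hN.hasFaithfulRep
  exact hΓrep.exists_injective_hom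
end

section
/- Let H be a Hopf algebra over a field k. If H is Artinian as a ring (i.e., satisfies the descending chain condition on left ideals), then H is finite-dimensional over k. -/
/-!
Let `H` be an Artinian Hopf algebra over a commutative ring `k`. The counit makes `k` a quotient of
`H`, so `k` is Artinian. Its nilradical is nilpotent, and finiteness descends from the base change
of `H` along the quotient by it, so one may assume that `k` is a product of fields.

Modulo its Jacobson radical `J`, the ring `H` is semisimple, so the kernel of the counit `ε` has a
complement there. This gives `f : H` with `ε f = 1` and `f * h ≡ ε h • f` modulo `J`. Every `J ^ i`
is finitely generated as a left ideal (Hopkins–Levitzki), so `f * J ^ i` lies in a finitely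
generated `k`-module plus `J ^ (i + 1)`; since `J ^ n = 0` for some `n`, the right ideal
`V = f ^ n * H` is finitely generated over `k`.

Under the action of the dual of `H`, the right ideal `V` generates a finitely generated right ideal
`W` that is also a right coideal. As `v = f ^ n` lies in `V` and `ε v = 1`, we get
`1 = ∑ v₁ * S v₂ ∈ W * H ⊆ W`, that is, `W = H`.
-/

open TensorProduct Coalgebra

section SemiprimaryRing

variable {R S : Type*} [Ring R] [Semiring S]

theorem exists_map_eq_one_and_forall_mul_eq_zero [IsSemisimpleRing R]
    (φ : R →+* S) : ∃ c : R, φ c = 1 ∧ ∀ x, φ x = 0 → c * x = 0 := by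
  obtain ⟨C, hC⟩ := exists_isCompl (RingHom.ker (RingHom.op φ))
  obtain ⟨e, he, c, hc, hec⟩ : ∃ e ∈ RingHom.ker (RingHom.op φ), ∃ c ∈ C, e + c = 1 :=
    Submodule.mem_sup.1 (hC.sup_eq_top ▸ Submodule.mem_top)
  refine ⟨c.unop, ?_, fun x hx ↦ ?_⟩
  · have hφe : φ e.unop = 0 := by simpa [RingHom.mem_ker] using he
    simpa [hφe] using congrArg (φ ·.unop) hec
  · have hxc : MulOpposite.op x * c ∈ RingHom.ker (RingHom.op φ) ⊓ C :=
      ⟨by simp [RingHom.mem_ker, hx], C.mul_mem_left _ hc⟩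
    simpa [hC.inf_eq_bot, ← MulOpposite.unop_inj] using hxc

theorem map_eq_zero_of_mem_jacobson [IsSemiprimaryRing R] [IsReduced S] (φ : R →+* S)
    {x : R} (hx : x ∈ Ring.jacobson R) : φ x = 0 := by
  obtain ⟨n, hn⟩ := IsSemiprimaryRing.isNilpotent (R := R)
  have hxn : x ^ n = 0 := by simpa [hn] using Ideal.pow_mem_pow hx n
  exact eq_zero_of_pow_eq_zero (n := n) (by rw [← map_pow, hxn, map_zero])

theorem exists_map_eq_one_and_mul_mem_jacobson [IsSemiprimaryRing R] [IsReduced S]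
    (φ : R →+* S) : ∃ f : R, φ f = 1 ∧ ∀ x, φ x = 0 → f * x ∈ Ring.jacobson R := by
  let ψ : R ⧸ Ring.jacobson R →+* S :=
    Ideal.Quotient.lift _ φ fun _ ↦ map_eq_zero_of_mem_jacobson φ
  obtain ⟨c, hc, hcx⟩ := exists_map_eq_one_and_forall_mul_eq_zero ψ
  obtain ⟨f, rfl⟩ := Ideal.Quotient.mk_surjective c
  refine ⟨f, by simpa [ψ] using hc, fun x hx ↦ ?_⟩
  rw [← Ideal.Quotient.eq_zero_iff_mem, map_mul]
  exact hcx _ (by simpa [ψ] using hx)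

end SemiprimaryRing

section NilpotentIdeal

theorem eq_top_of_sup_smul_top_eq_top {R M : Type*} [Semiring R] [AddCommMonoid M] [Module R M]
    {I : Ideal R} [I.IsTwoSided] (hI : IsNilpotent I) {N : Submodule R M} (hN : N ⊔ I • ⊤ = ⊤) :
    N = ⊤ := by
  have hpow (n : ℕ) : N ⊔ I ^ n • ⊤ = ⊤ := by
    induction n with
    | zero => simp [Submodule.pow_zero]
    | succ n ih =>
      calc N ⊔ I ^ (n + 1) • ⊤
        _ = N ⊔ I ^ n • N ⊔ I ^ (n + 1) • ⊤ := by
          rw [sup_eq_left.2 (Submodule.smul_le_right (N := N))]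
        _ = N ⊔ I ^ n • (N ⊔ I • ⊤) := by
          rw [Submodule.smul_sup, ← Submodule.mul_smul, ← Submodule.pow_succ, sup_assoc]
        _ = ⊤ := by rw [hN, ih]
  obtain ⟨n, hn⟩ := hI
  simpa [hn] using hpow n

theorem finite_of_finite_quotient_smul_top {R M : Type*} [Ring R] [AddCommGroup M] [Module R M]
    {I : Ideal R} [I.IsTwoSided] (hI : IsNilpotent I)
    [Module.Finite R (M ⧸ (I • ⊤ : Submodule R M))] : Module.Finite R M := by
  let q := (I • ⊤ : Submodule R M).mkQ
  obtain ⟨n, f, hf⟩ := Module.Finite.exists_fin' R (M ⧸ (I • ⊤ : Submodule R M))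
  obtain ⟨g, hg⟩ := Module.projective_lifting_property q f (Submodule.mkQ_surjective _)
  refine Module.Finite.of_surjective g (LinearMap.range_eq_top.1 ?_)
  refine eq_top_of_sup_smul_top_eq_top hI ?_
  calc g.range ⊔ I • ⊤
    _ = (g.range.map q).comap q := by rw [Submodule.comap_map_eq, Submodule.ker_mkQ]
    _ = ⊤ := by rw [← LinearMap.range_comp, hg, LinearMap.range_eq_top.2 hf, Submodule.comap_top]

end NilpotentIdeal

section AugmentedAlgebra

variable {k A : Type*} [CommRing k] [Ring A] [Algebra k A] {ε : A →ₐ[k] k} {J : Ideal A} {f : A}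

theorem exists_map_eq_one_and_mul_sub_smul_mem_jacobson [IsReduced k] [IsSemiprimaryRing A]
    (ε : A →ₐ[k] k) : ∃ f : A, ε f = 1 ∧ ∀ a, f * a - ε a • f ∈ Ring.jacobson A := by
  obtain ⟨f, hf, hfx⟩ := exists_map_eq_one_and_mul_mem_jacobson (ε : A →+* k)
  refine ⟨f, hf, fun a ↦ ?_⟩
  have hmem := hfx (a - algebraMap k A (ε a)) (by simp)
  rwa [mul_sub, ← Algebra.commutes, ← Algebra.smul_def] at hmem

variable {M : Type*} [AddCommGroup M] [Module k M] [Module A M] [IsScalarTower k A M]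

theorem exists_fg_forall_smul_mem_sup (hf : ∀ a, f * a - ε a • f ∈ J) {N : Submodule A M}
    (hN : N.FG) : ∃ F : Submodule k M, F.FG ∧
      ∀ x ∈ N, f • x ∈ F ⊔ (J • N).restrictScalars k := by
  classical
  obtain ⟨s, rfl⟩ := hN
  refine ⟨Submodule.span k (s.image (f • ·)), ⟨_, rfl⟩, fun x hx ↦ ?_⟩
  induction hx using Submodule.span_induction with
  | zero => simp
  | add x y _ _ hx hy => exact smul_add f x y ▸ add_mem hx hy
  | mem x hx =>
    exact Submodule.mem_sup_left (Submodule.subset_span (by simpa using ⟨x, hx, rfl⟩))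
  | smul a x hx ih =>
    have hJx : (f * a - ε a • f) • x ∈ J • Submodule.span A (s : Set M) :=
      Submodule.smul_mem_smul (hf a) hx
    have hax : f • a • x = (f * a - ε a • f) • x + ε a • f • x := by
      rw [sub_smul, mul_smul, smul_assoc, sub_add_cancel]
    rw [hax]
    exact add_mem (Submodule.mem_sup_right hJx) (Submodule.smul_mem _ _ ih)

theorem exists_fg_forall_pow_smul_mem_sup [J.IsTwoSided] [IsNoetherian A M]
    (hf : ∀ a, f * a - ε a • f ∈ J) (n : ℕ) : ∃ F : Submodule k M, F.FG ∧
      ∀ x : M, f ^ n • x ∈ F ⊔ (J ^ n • (⊤ : Submodule A M)).restrictScalars k := by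
  induction n with
  | zero => exact ⟨⊥, Submodule.fg_bot, by simp [Submodule.pow_zero]⟩
  | succ n ih =>
    obtain ⟨F, hF, hFx⟩ := ih
    obtain ⟨G, hG, hGx⟩ := exists_fg_forall_smul_mem_sup hf
      (IsNoetherian.noetherian (J ^ n • (⊤ : Submodule A M)))
    rw [← Submodule.mul_smul, ← Ideal.IsTwoSided.pow_succ] at hGx
    refine ⟨F.map (Algebra.lsmul k k M f) ⊔ G, (hF.map _).sup hG, fun x ↦ ?_⟩
    obtain ⟨y, hy, z, hz, hyz⟩ := Submodule.mem_sup.1 (hFx x)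
    rw [pow_succ', mul_smul, ← hyz, smul_add, sup_assoc]
    exact Submodule.add_mem_sup ⟨y, hy, rfl⟩ (hGx z hz)

theorem isArtinianRing_of_augmentation [IsArtinianRing A] (ε : A →ₐ[k] k) : IsArtinianRing k :=
  Function.Surjective.isArtinianRing (f := (ε : A →+* k)) fun r ↦ ⟨algebraMap k A r, by simp⟩

theorem exists_map_eq_one_and_fg_range_mulLeft [IsReduced k] [IsArtinianRing A] (ε : A →ₐ[k] k) :
    ∃ g : A, ε g = 1 ∧ (LinearMap.mulLeft k g).range.FG := by
  have : IsArtinianRing k := isArtinianRing_of_augmentation ε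
  obtain ⟨f, hf, hfJ⟩ := exists_map_eq_one_and_mul_sub_smul_mem_jacobson ε
  obtain ⟨n, hn⟩ := IsSemiprimaryRing.isNilpotent (R := A)
  obtain ⟨F, hF, hFx⟩ := exists_fg_forall_pow_smul_mem_sup (M := A) hfJ n
  refine ⟨f ^ n, by simp [hf], hF.of_le ?_⟩
  rintro _ ⟨x, rfl⟩
  simpa [hn] using hFx x

end AugmentedAlgebra

section Contraction

variable {R M N P : Type*} [CommSemiring R] [AddCommMonoid M] [AddCommMonoid N] [AddCommMonoid P]
  [Module R M] [Module R N] [Module R P]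

/-- The contraction `m ⊗ n ↦ g n • m` of the second tensor factor by a functional `g`. -/
noncomputable def contractSnd : Module.Dual R N →ₗ[R] M ⊗[R] N →ₗ[R] M :=
  (LinearMap.lTensorHom M).compr₂ (TensorProduct.rid R M).toLinearMap

@[simp]
theorem contractSnd_tmul (g : Module.Dual R N) (m : M) (n : N) :
    contractSnd g (m ⊗ₜ[R] n) = g n • m := by
  simp [contractSnd]

theorem contractSnd_lTensor (g : Module.Dual R P) (φ : N →ₗ[R] P) (z : M ⊗[R] N) :
    contractSnd g (φ.lTensor M z) = contractSnd (g ∘ₗ φ) z := by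
  induction z with
  | zero => simp
  | tmul m n => simp
  | add z₁ z₂ h₁ h₂ => simp [h₁, h₂]

theorem exists_fg_forall_contractSnd_mem (z : M ⊗[R] N) :
    ∃ W : Submodule R M, W.FG ∧ ∀ g, contractSnd g z ∈ W := by
  induction z with
  | zero => exact ⟨⊥, Submodule.fg_bot, by simp⟩
  | tmul m n =>
    exact ⟨R ∙ m, Submodule.fg_span_singleton m, fun g ↦
      Submodule.mem_span_singleton.2 ⟨g n, by simp⟩⟩
  | add z₁ z₂ h₁ h₂ =>
    obtain ⟨W₁, hW₁, hz₁⟩ := h₁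
    obtain ⟨W₂, hW₂, hz₂⟩ := h₂
    exact ⟨W₁ ⊔ W₂, hW₁.sup hW₂, fun g ↦ by
      simpa using Submodule.add_mem_sup (hz₁ g) (hz₂ g)⟩

theorem mem_range_rTensor_subtype_of_contractSnd_mem [Module.Projective R N] {W : Submodule R M}
    {z : M ⊗[R] N} (hz : ∀ g, contractSnd g z ∈ W) :
    z ∈ (W.subtype.rTensor N).range := by
  classical
  obtain ⟨s, hs⟩ := Module.projective_def'.1 ‹Module.Projective R N›
  let π : (N →₀ R) →ₗ[R] N := Finsupp.linearCombination R id
  let b : Module.Basis N R (N →₀ R) := Finsupp.basisSingleOne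
  let e := equivFinsuppOfBasisRight (M := M) b
  have he (y : M ⊗[R] (N →₀ R)) (n : N) : e y n = contractSnd (b.coord n) y := by
    simp only [e, equivFinsuppOfBasisRight_apply]
    rfl
  have hzb : z = (e (s.lTensor M z)).sum fun n m ↦ m ⊗ₜ π (b n) := by
    calc z = π.lTensor M (s.lTensor M z) := by
          rw [← LinearMap.lTensor_comp_apply, hs, LinearMap.lTensor_id_apply]
      _ = π.lTensor M (e.symm (e (s.lTensor M z))) := by rw [e.symm_apply_apply]
      _ = _ := by
          simp only [e, equivFinsuppOfBasisRight_symm_apply, Finsupp.sum, map_sum,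
            LinearMap.lTensor_tmul]
  rw [hzb]
  refine sum_mem fun n _ ↦ ⟨⟨e (s.lTensor M z) n, ?_⟩ ⊗ₜ π (b n), rfl⟩
  rw [he, contractSnd_lTensor]
  exact hz _

theorem contractSnd_mul_tmul {A B : Type*} [Semiring A] [Algebra R A] [Semiring B] [Algebra R B]
    (g : Module.Dual R B) (z : A ⊗[R] B) (a : A) (b : B) :
    contractSnd g (z * (a ⊗ₜ b)) = contractSnd (g ∘ₗ LinearMap.mulRight R b) z * a := by
  induction z with
  | zero => simp
  | tmul x y => simp
  | add z₁ z₂ h₁ h₂ => simp only [add_mul, map_add, h₁, h₂]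

end Contraction

section HitAction

variable {R C : Type*} [CommSemiring R] [AddCommMonoid C] [Module R C] [Coalgebra R C]

/-- The left hit action `g ⇀ c = ∑ g c₂ • c₁` of the dual of a coalgebra on the coalgebra. -/
noncomputable def leftHit : Module.Dual R C →ₗ[R] C →ₗ[R] C :=
  contractSnd.compl₂ comul

theorem leftHit_apply (g : Module.Dual R C) (c : C) : leftHit g c = contractSnd g (comul c) :=
  rfl

/-- The coefficient space of a submodule `V` of a coalgebra: the span of all `g ⇀ v` with `v ∈ V`,
which is the smallest right coideal containing `V` when the coalgebra is projective. -/
noncomputable def coefficientSpace (V : Submodule R C) : Submodule R C :=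
  Submodule.map₂ leftHit ⊤ V

theorem leftHit_mem_coefficientSpace {V : Submodule R C} {v : C} (hv : v ∈ V)
    (g : Module.Dual R C) : leftHit g v ∈ coefficientSpace V :=
  Submodule.apply_mem_map₂ _ Submodule.mem_top hv

end HitAction

theorem fg_coefficientSpace {k C : Type*} [CommRing k] [IsNoetherianRing k] [AddCommGroup C]
    [Module k C] [Coalgebra k C] {V : Submodule k C} (hV : V.FG) : (coefficientSpace V).FG := by
  induction V, hV using Submodule.fg_induction with
  | singleton v =>
    obtain ⟨W, hW, hvW⟩ := exists_fg_forall_contractSnd_mem (comul (R := k) v)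
    refine hW.of_le ?_
    rw [coefficientSpace, Submodule.map₂_span_singleton_eq_map_flip]
    rintro _ ⟨g, -, rfl⟩
    exact hvW g
  | sup V₁ V₂ _ _ h₁ h₂ =>
    rw [coefficientSpace, Submodule.map₂_sup_right]
    exact h₁.sup h₂

section HopfAlgebra

variable {k H : Type*}

theorem sum_comul_left_mul_antipode_right [CommSemiring k] [Semiring H] [HopfAlgebra k H]
    {ι : Type*} {h : H} (r : Repr k h ι) :
    ∑ i ∈ r.index, comul (R := k) (r.left i) * (1 ⊗ₜ[k] HopfAlgebra.antipode k (r.right i)) =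
      h ⊗ₜ[k] 1 := by
  let μ : H ⊗[k] H →ₗ[k] H := LinearMap.mul' k H ∘ₗ (HopfAlgebra.antipode k).lTensor H
  have hμ (z : H ⊗[k] H) (y : H) :
      z * (1 ⊗ₜ HopfAlgebra.antipode k y) = μ.lTensor H (TensorProduct.assoc k H H H (z ⊗ₜ y)) := by
    induction z with
    | zero => simp
    | tmul a b => simp [μ]
    | add z₁ z₂ h₁ h₂ => simp only [add_mul, add_tmul, map_add, h₁, h₂]
  calc ∑ i ∈ r.index, comul (r.left i) * (1 ⊗ₜ[k] HopfAlgebra.antipode k (r.right i))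
    _ = μ.lTensor H (TensorProduct.assoc k H H H (comul.rTensor H (comul h))) := by
      simp only [← r.eq, map_sum, LinearMap.rTensor_tmul, hμ]
    _ = ∑ i ∈ r.index, r.left i ⊗ₜ[k] algebraMap k H (counit (r.right i)) := by
      rw [coassoc_apply]
      simp only [← r.eq, map_sum, LinearMap.lTensor_tmul, μ, LinearMap.comp_apply,
        HopfAlgebra.mul_antipode_lTensor_comul_apply]
    _ = h ⊗ₜ[k] 1 := by
      simpa only [map_sum, LinearMap.lTensor_tmul, Algebra.linearMap_apply, map_one] using
        congrArg ((Algebra.linearMap k H).lTensor H) (sum_tmul_counit_eq r)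

/-- The identity `(g ⇀ u) h = ∑ (g (· S h₂)) ⇀ (u h₁)`. -/
theorem leftHit_mul [CommSemiring k] [Semiring H] [HopfAlgebra k H] {ι : Type*}
    (g : Module.Dual k H) (u : H) {h : H} (r : Repr k h ι) :
    leftHit g u * h = ∑ i ∈ r.index,
      leftHit (g ∘ₗ LinearMap.mulRight k (HopfAlgebra.antipode k (r.right i))) (u * r.left i) := by
  calc leftHit g u * h
    _ = contractSnd g (comul u * (h ⊗ₜ 1)) := by
      rw [contractSnd_mul_tmul, LinearMap.mulRight_one, LinearMap.comp_id, leftHit_apply]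
    _ = ∑ i ∈ r.index, contractSnd g
          (comul (u * r.left i) * (1 ⊗ₜ HopfAlgebra.antipode k (r.right i))) := by
      simp only [← sum_comul_left_mul_antipode_right r, Finset.mul_sum, map_sum, mul_assoc,
        Bialgebra.comul_mul]
    _ = _ := by simp only [contractSnd_mul_tmul, mul_one, leftHit_apply]

theorem mul_mem_coefficientSpace [CommSemiring k] [Semiring H] [HopfAlgebra k H]
    {V : Submodule k H} (hV : ∀ v ∈ V, ∀ h, v * h ∈ V) {w : H} (hw : w ∈ coefficientSpace V)
    (h : H) : w * h ∈ coefficientSpace V := by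
  suffices hle : coefficientSpace V ≤ (coefficientSpace V).comap (LinearMap.mulRight k h) from
    hle hw
  refine Submodule.map₂_le.2 fun g _ v hv ↦ ?_
  rw [Submodule.mem_comap, LinearMap.mulRight_apply, leftHit_mul g v (ℛ k h)]
  exact sum_mem fun i _ ↦ leftHit_mem_coefficientSpace (hV v hv _) _

theorem algebraMap_counit_mem [CommSemiring k] [Semiring H] [HopfAlgebra k H]
    [Module.Projective k H] {W : Submodule k H} (hW : ∀ w ∈ W, ∀ h, w * h ∈ W) {u : H}
    (hu : ∀ g : Module.Dual k H, leftHit g u ∈ W) : algebraMap k H (counit (R := k) u) ∈ W := by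
  obtain ⟨z, hz⟩ := mem_range_rTensor_subtype_of_contractSnd_mem hu
  rw [← HopfAlgebra.mul_antipode_lTensor_comul_apply, ← hz]
  clear hz
  induction z with
  | zero => simp
  | tmul a b => simpa using hW a a.2 _
  | add z₁ z₂ h₁ h₂ => simpa only [map_add] using add_mem h₁ h₂

theorem coefficientSpace_eq_top [CommSemiring k] [Semiring H] [HopfAlgebra k H]
    [Module.Projective k H] {V : Submodule k H} (hV : ∀ v ∈ V, ∀ h, v * h ∈ V) {v : H}
    (hv : v ∈ V) (hεv : counit (R := k) v = 1) : coefficientSpace V = ⊤ := by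
  have hW (w) (hw : w ∈ coefficientSpace V) (h : H) : w * h ∈ coefficientSpace V :=
    mul_mem_coefficientSpace hV hw h
  have hone : (1 : H) ∈ coefficientSpace V := by
    simpa [hεv] using algebraMap_counit_mem hW (leftHit_mem_coefficientSpace hv)
  exact eq_top_iff.2 fun h _ ↦ one_mul h ▸ hW 1 hone h

variable [CommRing k] [Ring H] [HopfAlgebra k H]

theorem finite_of_isArtinianRing_of_isReduced [IsReduced k] [IsArtinianRing H] :
    Module.Finite k H := by
  have : IsArtinianRing k := isArtinianRing_of_augmentation (Bialgebra.counitAlgHom k H)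
  have : IsSemisimpleRing k := IsArtinianRing.isSemisimpleRing_of_isReduced k
  have : Module.Projective k H := Module.projective_of_isSemisimpleRing k H
  obtain ⟨g, hg, hfg⟩ := exists_map_eq_one_and_fg_range_mulLeft (Bialgebra.counitAlgHom k H)
  have hV : ∀ v ∈ (LinearMap.mulLeft k g).range, ∀ h, v * h ∈ (LinearMap.mulLeft k g).range := by
    rintro _ ⟨x, rfl⟩ h
    exact ⟨x * h, (mul_assoc g x h).symm⟩
  exact Module.finite_def.2 (coefficientSpace_eq_top hV ⟨1, mul_one g⟩ hg ▸ fg_coefficientSpace hfg)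

end HopfAlgebra

theorem hopfAlgebra_finiteDimensional_of_artinian_general (k : Type*) [CommRing k]
    (H : Type*) [Ring H] [HopfAlgebra k H] [IsArtinianRing H] : Module.Finite k H := by
  have : IsArtinianRing k := isArtinianRing_of_augmentation (Bialgebra.counitAlgHom k H)
  let n := nilradical k
  have hsurj := Algebra.TensorProduct.includeRight_surjective (R := k) (S := k ⧸ n) H
    Ideal.Quotient.mk_surjective
  have : IsArtinianRing ((k ⧸ n) ⊗[k] H) := hsurj.isArtinianRing
  have : IsReduced (k ⧸ n) :=
    (Ideal.isRadical_iff_quotient_reduced n).1 (Ideal.radical_isRadical ⊥)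
  have : Module.Finite (k ⧸ n) ((k ⧸ n) ⊗[k] H) := finite_of_isArtinianRing_of_isReduced
  have : Module.Finite k ((k ⧸ n) ⊗[k] H) := .trans (k ⧸ n) _
  have := Module.Finite.equiv (TensorProduct.quotTensorEquivQuotSMul H n)
  exact finite_of_finite_quotient_smul_top (IsArtinianRing.isNilpotent_nilradical (R := k))

/-- (Liu–Zhang) An Artinian Hopf algebra over a field is finite-dimensional. -/
theorem hopfAlgebra_finiteDimensional_of_artinian (k : Type*) [Field k]
    (H : Type*) [Ring H] [HopfAlgebra k H] [IsArtinianRing H] :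
    FiniteDimensional k H :=
  hopfAlgebra_finiteDimensional_of_artinian_general k H
end

section
/- (Molnar) Let H be a commutative Hopf algebra over a field k of characteristic 0. Then H is a Noetherian ring if and only if H is affine, i.e., finitely generated as a k-algebra. -/
/-!
Over a field, finitely generated algebras are Noetherian by Hilbert's basis theorem, so let `H` be
Noetherian. Its augmentation ideal `ker ε` is finitely generated, and finitely many elements of `H`
always lie in a finitely generated Hopf subalgebra: adjoin the entries of the matrices of
finite-dimensional subcomodules containing them, and apply the antipode. So there is a finitely
generated Hopf subalgebra `K` whose augmentation ideal generates that of `H`, and the claim is that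
`K = H`. Write `G = Spec H`, `Q = Spec K` and regard algebra homomorphisms as points, multiplied by
convolution.

* `K → H` is a ring epimorphism: if two points of `G` have the same image in `Q`, their quotient
  kills the augmentation ideal of `K`, hence that of `H`.
* Let `F` be the localization of `K` at a minimal prime, an Artinian local ring. Then
  `F → F ⊗[K] H` is a ring epimorphism as well, hence surjective, because the maximal ideal of `F`
  is nilpotent.
* Let `β : K → H ⊗ F` be the product of the universal point of `G` and the point `v : K → F`
  of `Q`. It is flat because translations are automorphisms. It is even faithfully flat: for a
  closed point `g` of `Q`, the point `g v⁻¹` is flat too, hence lifts to `G` over a nonzero ring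
  since `K → H` is injective, and `g = (g v⁻¹) v`.
* After base change along `β`, dividing by the point of `G` turns `K → H` into a base change of
  `F → F ⊗[K] H`, which is surjective. By faithfully flat descent `K → H` is surjective.
-/

namespace NoetherianHopf

open TensorProduct Coalgebra Bialgebra HopfAlgebra WithConv
open Algebra.TensorProduct (includeLeft includeRight)

/-! ### Points of an affine group scheme -/

/-- The `B`-points of the affine monoid scheme `Spec K`, with their convolution product. -/
abbrev Points (R K B : Type*) [CommRing R] [CommRing K] [Bialgebra R K] [CommRing B]
    [Algebra R B] : Type _ :=
  WithConv (K →ₐ[R] B)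

lemma flat_includeRight {R P A : Type*} [CommRing R] [CommRing P] [Algebra R P] [Module.Flat R P]
    [CommRing A] [Algebra R A] : (includeRight : A →ₐ[R] P ⊗[R] A).Flat := by
  have hleft : (algebraMap A (A ⊗[R] P)).Flat := RingHom.flat_algebraMap_iff.mpr inferInstance
  convert hleft.comp (.of_bijective (Algebra.TensorProduct.comm R A P).bijective) using 1
  ext x
  exact (Algebra.TensorProduct.comm_tmul R x (1 : P)).symm

namespace Points

variable {R K H B C P F : Type*} [CommRing R] [CommRing K] [CommRing H] [CommRing B] [Algebra R B]
  [CommRing C] [Algebra R C] [CommRing P] [Algebra R P] [CommRing F] [Algebra R F]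

section Bialgebra

variable [Bialgebra R K] [Bialgebra R H]

/-- Points are covariant in the algebra of values. -/
def map (h : B →ₐ[R] C) : Points R K B →* Points R K C where
  toFun f := toConv (h.comp f.ofConv)
  map_one' := WithConv.ext (AlgHom.ext fun x ↦ h.commutes (counit x))
  map_mul' f g := WithConv.ext (AlgHom.comp_convMul_distrib h f g)

/-- Points are contravariant in the bialgebra. -/
def comap (ι : K →ₐc[R] H) : Points R H B →* Points R K B where
  toFun f := toConv (f.ofConv.comp (ι : K →ₐ[R] H))
  map_one' := WithConv.ext (AlgHom.ext fun x ↦ by simp [AlgHom.convOne_def])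
  map_mul' f g := WithConv.ext (AlgHom.convMul_comp_bialgHom_distrib f g ι)

lemma map_map (g : C →ₐ[R] P) (h : B →ₐ[R] C) (f : Points R K B) :
    map g (map h f) = map (g.comp h) f := rfl

lemma mul_apply_mem {S : Subalgebra R B} {f g : Points R K B} (hf : ∀ x, f x ∈ S)
    (hg : ∀ x, g x ∈ S) (x : K) : (f * g) x ∈ S := by
  rw [AlgHom.convMul_apply]
  induction comul (R := R) x using TensorProduct.induction_on with
  | zero => simp
  | tmul a b => simpa using mul_mem (hf a) (hg b)
  | add a b ha hb => rw [map_add]; exact add_mem ha hb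

/-- The product of a `P`-point and an `F`-point, taken over `P ⊗ F`. -/
noncomputable def prod (u : Points R K P) (v : Points R K F) : Points R K (P ⊗[R] F) :=
  map includeLeft u * map includeRight v

lemma map_lift_prod (f : P →ₐ[R] B) (g : F →ₐ[R] B) (u : Points R K P) (v : Points R K F) :
    map (Algebra.TensorProduct.lift f g fun _ _ ↦ .all ..) (prod u v) = map f u * map g v := by
  simp [prod, map_map]

lemma map_tensorProductMap_prod (f : P →ₐ[R] B) (g : F →ₐ[R] C) (u : Points R K P)
    (v : Points R K F) :
    map (Algebra.TensorProduct.map f g) (prod u v) = prod (map f u) (map g v) := by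
  rw [prod, map_mul, map_map, map_map, Algebra.TensorProduct.map_comp_includeLeft,
    Algebra.TensorProduct.map_comp_includeRight]
  rfl

lemma toConv_comulAlgHom :
    toConv (comulAlgHom R K) = prod (toConv (.id R K)) (toConv (.id R K)) := by
  refine WithConv.ext (AlgHom.ext fun x ↦ ?_)
  rw [prod, AlgHom.convMul_apply]
  exact (DFunLike.congr_fun (Algebra.TensorProduct.lift_includeLeft_includeRight (R := R)) _).symm

end Bialgebra

variable [HopfAlgebra R K]

noncomputable instance : Group (Points R K B) where
  inv f := toConv (f.ofConv.comp (antipodeAlgHom R K))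
  inv_mul_cancel f := by
    have h := congrArg (map f.ofConv) (AlgHom.antipode_id_cancel (R := R) (A := K))
    rwa [map_one, map_mul] at h

lemma antipode_comp_antipode :
    (antipodeAlgHom R K).comp (antipodeAlgHom R K) = .id R K :=
  congrArg ofConv (inv_inv (toConv (AlgHom.id R K)))

lemma antipode_bijective : Function.Bijective (antipodeAlgHom R K) :=
  Function.Involutive.bijective fun x ↦ DFunLike.congr_fun antipode_comp_antipode x

lemma comul_antipode (x : K) :
    comul (R := R) (antipode R x) =
      Algebra.TensorProduct.map (antipodeAlgHom R K) (antipodeAlgHom R K)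
        (Algebra.TensorProduct.comm R K K (comul x)) := by
  let S := antipodeAlgHom R K
  have hinv : toConv ((comulAlgHom R K).comp S) =
      map includeRight (toConv (.id R K))⁻¹ * map includeLeft (toConv (.id R K))⁻¹ := by
    have h := congrArg Inv.inv (toConv_comulAlgHom (R := R) (K := K))
    rwa [prod, mul_inv_rev, ← map_inv, ← map_inv] at h
  have hlift : Algebra.TensorProduct.lift (includeRight.comp S) (includeLeft.comp S)
      (fun _ _ ↦ .all ..) =
      (Algebra.TensorProduct.map S S).comp (Algebra.TensorProduct.comm R K K).toAlgHom := by
    ext <;> simp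
  have hx := DFunLike.congr_fun (congrArg ofConv hinv) x
  exact (hx.trans (AlgHom.convMul_apply ..)).trans (DFunLike.congr_fun hlift _)

lemma flat_inv {u : Points R K B} (hu : u.ofConv.Flat) : u⁻¹.ofConv.Flat :=
  RingHom.Flat.comp (.of_bijective antipode_bijective) hu

/-- The translation by the point `u` on `Spec (P ⊗ K)`. -/
noncomputable def translate (u : Points R K P) : P ⊗[R] K →ₐ[R] P ⊗[R] K :=
  Algebra.TensorProduct.lift includeLeft (prod u (toConv (.id R K))).ofConv fun _ _ ↦ .all ..

lemma translate_comp_includeLeft (u : Points R K P) :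
    (translate u).comp includeLeft = includeLeft :=
  Algebra.TensorProduct.lift_comp_includeLeft ..

lemma translate_comp_includeRight (u : Points R K P) :
    (translate u).comp includeRight = (prod u (toConv (.id R K))).ofConv :=
  Algebra.TensorProduct.lift_comp_includeRight' ..

lemma translate_one : translate (1 : Points R K P) = .id R (P ⊗[R] K) := by
  refine Algebra.TensorProduct.ext (translate_comp_includeLeft 1) ?_
  refine (translate_comp_includeRight 1).trans ?_
  rw [prod, map_one, one_mul]
  rfl

lemma map_translate_prod_id (u w : Points R K P) :
    map (translate u) (prod w (toConv (.id R K))) = prod (w * u) (toConv (.id R K)) := by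
  rw [prod, _root_.map_mul, map_map, map_map, translate_comp_includeLeft]
  have h : map ((translate u).comp includeRight) (toConv (.id R K)) = prod u (toConv (.id R K)) :=
    congrArg toConv (translate_comp_includeRight u)
  rw [h, prod, prod, _root_.map_mul, mul_assoc]

lemma translate_comp_translate (u w : Points R K P) :
    (translate u).comp (translate w) = translate (w * u) := by
  apply Algebra.TensorProduct.ext
  · rw [AlgHom.comp_assoc]
    simp only [translate_comp_includeLeft]
  · change (translate u).comp ((translate w).comp includeRight) = (translate (w * u)).comp _
    rw [translate_comp_includeRight, translate_comp_includeRight]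
    exact congrArg ofConv (map_translate_prod_id u w)

lemma translate_bijective (u : Points R K P) : Function.Bijective (translate u) := by
  refine Function.bijective_iff_has_inverse.mpr ⟨translate u⁻¹, fun x ↦ ?_, fun x ↦ ?_⟩
  · rw [← AlgHom.comp_apply, translate_comp_translate, mul_inv_cancel, translate_one,
      AlgHom.id_apply]
  · rw [← AlgHom.comp_apply, translate_comp_translate, inv_mul_cancel, translate_one,
      AlgHom.id_apply]

/-- Up to the translation by `u`, the point `u v` is a base change of `v`. -/
lemma flat_prod [Module.Flat R P] (u : Points R K P) {v : Points R K F} (hv : v.ofConv.Flat) :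
    (prod u v).ofConv.Flat := by
  have hmap : map (Algebra.TensorProduct.map (.id R P) v.ofConv) (prod u (toConv (.id R K))) =
      prod u v := map_tensorProductMap_prod (.id R P) v.ofConv u _
  have hprod : (prod u v).ofConv = (Algebra.TensorProduct.map (.id R P) v.ofConv).comp
      ((translate u).comp includeRight) := by
    rw [translate_comp_includeRight, ← hmap]
    rfl
  have htranslate : (translate u).Flat := .of_bijective (translate_bijective u)
  have hbase : (Algebra.TensorProduct.lTensor (S := R) P v.ofConv).Flat := .lTensor P hv
  rw [hprod]
  exact flat_includeRight.comp (htranslate.comp hbase)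

end Points

/-! ### Ring epimorphisms -/

section Epi

variable {R A C : Type*} [CommRing R] [CommRing A] [Algebra R A] [CommRing C] [Algebra R C]

lemma algHom_ext_of_isEpi [Algebra.IsEpi R A] (f g : A →ₐ[R] C) : f = g := by
  ext a
  have h := congrArg (Algebra.TensorProduct.lift f g fun _ _ ↦ .all ..)
    ((Algebra.isEpi_iff_forall_one_tmul_eq R A).mp ‹_› a)
  simpa using h.symm

lemma isEpi_of_includeRight_eq_includeLeft
    (h : (includeRight : A →ₐ[R] A ⊗[R] A) = includeLeft) : Algebra.IsEpi R A :=
  (Algebra.isEpi_iff_forall_one_tmul_eq R A).mpr (DFunLike.congr_fun h)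

lemma isEpi_baseChange [Algebra.IsEpi R A] : Algebra.IsEpi C (C ⊗[R] A) :=
  isEpi_of_includeRight_eq_includeLeft <|
    Algebra.TensorProduct.ext (Subsingleton.elim ..) (algHom_ext_of_isEpi ..)

lemma linearMap_eq_zero_of_isEpi [Algebra.IsEpi R A] [IsReduced C] (φ : A →ₗ[R] C)
    (hφ : φ 1 = 0) : φ = 0 := by
  ext a
  have ha : a ⊗ₜ[R] a = 1 ⊗ₜ[R] (a * a) := by
    calc a ⊗ₜ[R] a = (a ⊗ₜ[R] 1) * (1 ⊗ₜ[R] a) := by simp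
      _ = (1 ⊗ₜ[R] a) * (1 ⊗ₜ[R] a) := by rw [Algebra.tmul_comm]
      _ = 1 ⊗ₜ[R] (a * a) := by simp
  have hsq := congrArg (LinearMap.mul' R C ∘ₗ TensorProduct.map φ φ) ha
  exact pow_eq_zero_iff two_ne_zero |>.mp (by simpa [hφ, pow_two] using hsq)

lemma subsingleton_of_isNilpotent_smul_top_eq_top {M : Type*} [AddCommGroup M] [Module R M]
    {I : Ideal R} (hI : IsNilpotent I) (h : I • (⊤ : Submodule R M) = ⊤) : Subsingleton M := by
  obtain ⟨n, hn⟩ := hI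
  have hpow : I ^ n • (⊤ : Submodule R M) = ⊤ := by
    clear hn
    induction n with
    | zero => simp
    | succ n ih => rw [pow_succ, Submodule.mul_smul, h, ih]
  rw [hn, Ideal.zero_eq_bot, Submodule.bot_smul] at hpow
  exact (Submodule.subsingleton_iff R).mp (subsingleton_of_bot_eq_top hpow)

lemma smul_top_eq_top_of_forall_linearMap_quotient_eq_zero {M : Type*} [AddCommGroup M]
    [Module R M] {m : Ideal R} (hm : m.IsMaximal) (h : ∀ φ : M →ₗ[R] R ⧸ m, φ = 0) :
    m • (⊤ : Submodule R M) = ⊤ := by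
  let : Field (R ⧸ m) := Ideal.Quotient.field m
  refine eq_top_iff.mpr fun x _ ↦ (Submodule.Quotient.mk_eq_zero _).mp ?_
  refine (Module.forall_dual_apply_eq_zero_iff (R ⧸ m)
    (Submodule.Quotient.mk x : M ⧸ m • (⊤ : Submodule R M))).mp fun φ ↦ ?_
  exact DFunLike.congr_fun (h (φ.restrictScalars R ∘ₗ Submodule.mkQ _)) x

open IsLocalRing in
lemma surjective_algebraMap_of_isEpi_of_isArtinianRing [IsLocalRing R] [IsArtinianRing R]
    [Algebra.IsEpi R A] : Function.Surjective (algebraMap R A) := by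
  let N : Submodule R A := LinearMap.range (Algebra.linearMap R A)
  have hdual (φ : A ⧸ N →ₗ[R] R ⧸ maximalIdeal R) : φ = 0 := by
    have h1 : N.mkQ 1 = 0 := (Submodule.Quotient.mk_eq_zero N).mpr ⟨1, map_one (algebraMap R A)⟩
    have hφ : φ ∘ₗ N.mkQ = 0 := linearMap_eq_zero_of_isEpi _ (by simp [h1])
    exact (LinearMap.cancel_right N.mkQ_surjective).mp (hφ.trans (LinearMap.zero_comp _).symm)
  have hnil : IsNilpotent (maximalIdeal R) :=
    (isArtinianRing_iff_isNilpotent_maximalIdeal R).mp inferInstance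
  have hM := subsingleton_of_isNilpotent_smul_top_eq_top hnil
    (smul_top_eq_top_of_forall_linearMap_quotient_eq_zero inferInstance hdual)
  exact LinearMap.range_eq_top.mp (Submodule.Quotient.subsingleton_iff.mp hM)

lemma isArtinianRing_localization_of_mem_minimalPrimes [IsNoetherianRing R] {p : Ideal R}
    [p.IsPrime] (hp : p ∈ minimalPrimes R) : IsArtinianRing (Localization.AtPrime p) := by
  have : Ring.KrullDimLE 0 (Localization.AtPrime p) := .of_isLocalization _ hp _
  have : IsNoetherianRing (Localization.AtPrime p) :=
    IsLocalization.isNoetherianRing p.primeCompl _ inferInstance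
  exact isArtinianRing_iff_krullDimLE_zero.mpr inferInstance

lemma surjective_algebraMap_baseChange_of_isEpi [Algebra.IsEpi R A] [IsLocalRing C]
    [IsArtinianRing C] : Function.Surjective (algebraMap C (C ⊗[R] A)) :=
  have : Algebra.IsEpi C (C ⊗[R] A) := isEpi_baseChange
  surjective_algebraMap_of_isEpi_of_isArtinianRing

lemma surjective_algebraMap_baseChange_of_forall_one_tmul_mem_range
    (h : ∀ a, (1 : C) ⊗ₜ[R] a ∈ (algebraMap C (C ⊗[R] A)).range) :
    Function.Surjective (algebraMap C (C ⊗[R] A)) := by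
  refine RingHom.range_eq_top.mp (eq_top_iff.mpr fun z _ ↦ ?_)
  induction z using TensorProduct.induction_on with
  | zero => exact zero_mem _
  | tmul c a =>
    rw [← mul_one c, ← smul_eq_mul, ← TensorProduct.smul_tmul', Algebra.smul_def]
    exact mul_mem ⟨c, rfl⟩ (h a)
  | add y z hy hz => exact add_mem (hy trivial) (hz trivial)

lemma range_le_range_of_surjective_algebraMap_baseChange {D : Type*} [CommRing D]
    (h : Function.Surjective (algebraMap C (C ⊗[R] A))) (i : C →+* D) (j : A →+* D)
    (hij : i.comp (algebraMap R C) = j.comp (algebraMap R A)) : j.range ≤ i.range := by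
  algebraize [j.comp (algebraMap R A)]
  let i' : C →ₐ[R] D := ⟨i, DFunLike.congr_fun hij⟩
  let j' : A →ₐ[R] D := ⟨j, fun _ ↦ rfl⟩
  rintro _ ⟨a, rfl⟩
  obtain ⟨c, hc⟩ := h ((1 : C) ⊗ₜ[R] a)
  have hlift := congrArg (Algebra.TensorProduct.lift i' j' fun _ _ ↦ .all ..) hc
  exact ⟨c, by simpa [i', j', Algebra.TensorProduct.algebraMap_apply] using hlift⟩

end Epi

/-! ### Homomorphisms whose target has augmentation ideal generated by the source -/

section Augmentation

variable {R K H : Type*} [CommRing R] [CommRing K] [HopfAlgebra R K] [CommRing H]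
  [HopfAlgebra R H]

lemma Points.comap_injective {B : Type*} [CommRing B] [Algebra R B] {ι : K →ₐc[R] H}
    (hι : RingHom.ker (counitAlgHom R H) ≤ (RingHom.ker (counitAlgHom R K)).map ι) :
    Function.Injective (Points.comap ι : Points R H B →* Points R K B) := by
  refine (injective_iff_map_eq_one _).mpr fun f hf ↦ ?_
  have hker : RingHom.ker (counitAlgHom R H) ≤ RingHom.ker f.ofConv := by
    refine hι.trans (Ideal.map_le_iff_le_comap.mpr fun y (hy : counit y = 0) ↦ ?_)
    have hfy : f (ι y) = algebraMap R B (counit y) :=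
      DFunLike.congr_fun (congrArg ofConv hf) y
    rw [hy, map_zero] at hfy
    exact hfy
  refine WithConv.ext (AlgHom.ext fun x ↦ ?_)
  have hx : f.ofConv (x - algebraMap R H (counit x)) = 0 := hker (by simp)
  rw [map_sub, sub_eq_zero, AlgHom.commutes] at hx
  exact hx

lemma isEpi_of_ker_counit_le_map [Algebra K H] {ι : K →ₐc[R] H}
    (halg : ∀ x, algebraMap K H x = ι x)
    (hι : RingHom.ker (counitAlgHom R H) ≤ (RingHom.ker (counitAlgHom R K)).map ι) :
    Algebra.IsEpi K H := by
  have : IsScalarTower R K H := .of_algebraMap_eq fun r ↦ by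
    rw [halg, AlgHomClass.commutes ι]
  refine isEpi_of_includeRight_eq_includeLeft (AlgHom.restrictScalars_injective R ?_)
  refine congrArg ofConv (Points.comap_injective (B := H ⊗[K] H) hι
    (a₁ := toConv _) (a₂ := toConv _) (WithConv.ext (AlgHom.ext fun x ↦ ?_)))
  change (includeRight : H →ₐ[K] H ⊗[K] H) (ι x) = (includeLeft : H →ₐ[K] H ⊗[K] H) (ι x)
  rw [← halg, AlgHom.commutes, AlgHom.commutes]

end Augmentation

/-- A flat point of `Spec K` lifts to `Spec H` over the pushout, into which the old values embed. -/
lemma Points.exists_lift_of_flat.{u, v, w, z} {R : Type u} {K : Type v} {P : Type w} {H : Type z}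
    [CommRing R] [CommRing K] [Bialgebra R K] [CommRing H] [Bialgebra R H] [CommRing P]
    [Algebra R P] {ι : K →ₐc[R] H} (hι : Function.Injective ι) {α : Points R K P}
    (hα : α.ofConv.Flat) :
    ∃ (C : Type max w z) (_ : CommRing C) (_ : Algebra R C) (i : P →ₐ[R] C) (j : Points R H C),
      Function.Injective i ∧ comap ι j = map i α := by
  algebraize [α.ofConv.toRingHom, (ι : K →ₐ[R] H).toRingHom]
  have : IsScalarTower R K P := .of_algebraMap_eq' α.ofConv.comp_algebraMap.symm
  have : IsScalarTower R K H := .of_algebraMap_eq' (ι : K →ₐ[R] H).comp_algebraMap.symm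
  refine ⟨P ⊗[K] H, inferInstance, inferInstance, includeLeft,
    toConv ((includeRight : H →ₐ[K] P ⊗[K] H).restrictScalars R),
    Algebra.TensorProduct.includeLeft_injective (S := K) hι, WithConv.ext (AlgHom.ext fun x ↦ ?_)⟩
  exact ((includeRight : H →ₐ[K] P ⊗[K] H).commutes x).trans
    ((includeLeft : P →ₐ[K] P ⊗[K] H).commutes x).symm

section Field

variable {k K H F : Type*} [Field k] [CommRing K] [HopfAlgebra k K] [CommRing H]
  [HopfAlgebra k H] [CommRing F] [Algebra k F]

lemma faithfullyFlat_prod [Nontrivial F] {ι : K →ₐc[k] H} (hι : Function.Injective ι)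
    {v : Points k K F} (hv : v.ofConv.Flat) :
    (Points.prod (toConv (ι : K →ₐ[k] H)) v).ofConv.toRingHom.FaithfullyFlat := by
  let β := Points.prod (toConv (ι : K →ₐ[k] H)) v
  algebraize [β.ofConv.toRingHom]
  rw [RingHom.FaithfullyFlat]
  have hflat : Module.Flat K (H ⊗[k] F) := Points.flat_prod _ hv
  refine ⟨fun m hm htop ↦ ?_⟩
  have : Nontrivial (K ⧸ m) := Ideal.Quotient.nontrivial_iff.mpr hm.ne_top
  let g : Points k K (K ⧸ m) := toConv (Ideal.Quotient.mkₐ k m)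
  obtain ⟨C, _, _, i, j, hi, hj⟩ :=
    Points.exists_lift_of_flat hι (Points.flat_prod g (Points.flat_inv hv))
  let θ : H ⊗[k] F →ₐ[k] C :=
    Algebra.TensorProduct.lift j.ofConv (i.comp includeRight) fun _ _ ↦ .all ..
  have hθ : Points.map θ β = Points.map (i.comp includeLeft) g := by
    calc Points.map θ β = Points.comap ι j * Points.map (i.comp includeRight) v :=
          Points.map_lift_prod ..
      _ = Points.map (i.comp includeLeft) g := by
          rw [hj, Points.prod, map_mul, Points.map_map, Points.map_map, map_inv, mul_assoc,
            inv_mul_cancel, mul_one]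
  have hker : m.map (algebraMap K (H ⊗[k] F)) ≤ RingHom.ker θ :=
    Ideal.map_le_iff_le_comap.mpr fun r hr ↦ by
      have hr' : θ (β r) = i (g r ⊗ₜ 1) := DFunLike.congr_fun (congrArg ofConv hθ) r
      have hgr : g r = 0 := Ideal.Quotient.eq_zero_iff_mem.mpr hr
      rwa [hgr, zero_tmul, map_zero] at hr'
  rw [Ideal.smul_top_eq_map, Submodule.restrictScalars_eq_top_iff] at htop
  have := hi.nontrivial
  exact RingHom.ker_ne_top θ (top_le_iff.mp (htop ▸ hker))

end Field

section Descent

variable {R K H F B : Type*} [CommRing R] [CommRing K] [HopfAlgebra R K] [CommRing H]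
  [HopfAlgebra R H] [CommRing F] [Algebra R F] [Algebra K F] [IsScalarTower R K F] [CommRing B]
  [Algebra R B] [Algebra K H] {ι : K →ₐc[R] H}

/-- Over `B ⊗ H`, the point of `Spec H` coming from `f` can be divided out of the universal one,
which leaves a base change of `F → F ⊗ H`. -/
lemma surjective_algebraMap_baseChange_of_algebraMap_eq_mul [Algebra K B] [IsScalarTower R K B]
    (halg : ∀ x, algebraMap K H x = ι x) (f : H →ₐ[R] B) (g : F →ₐ[R] B)
    (hB : toConv (IsScalarTower.toAlgHom R K B) =
      Points.map f (toConv (ι : K →ₐ[R] H)) * Points.map g (toConv (IsScalarTower.toAlgHom R K F)))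
    (hF : Function.Surjective (algebraMap F (F ⊗[K] H))) :
    Function.Surjective (algebraMap B (B ⊗[K] H)) := by
  have : IsScalarTower R K H := .of_algebraMap_eq fun r ↦ by
    rw [halg, AlgHomClass.commutes ι]
  let i : B →ₐ[R] B ⊗[K] H := includeLeft
  let u : Points R H (B ⊗[K] H) := toConv (i.comp f)
  let j : Points R H (B ⊗[K] H) :=
    toConv ((includeRight : H →ₐ[K] B ⊗[K] H).restrictScalars R)
  have hj : Points.comap ι j = Points.comap ι u *
      Points.map (i.comp g) (toConv (IsScalarTower.toAlgHom R K F)) := by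
    trans Points.map i (toConv (IsScalarTower.toAlgHom R K B))
    · refine WithConv.ext (AlgHom.ext fun x ↦ ?_)
      change (includeRight : H →ₐ[K] B ⊗[K] H) (ι x) =
        (includeLeft : B →ₐ[K] B ⊗[K] H) (algebraMap K B x)
      rw [← halg, AlgHom.commutes, AlgHom.commutes]
    · rw [hB, map_mul]
      rfl
  have hquot : Points.comap ι (u⁻¹ * j) =
      Points.map (i.comp g) (toConv (IsScalarTower.toAlgHom R K F)) := by
    rw [map_mul, map_inv, hj, inv_mul_cancel_left]
  have hcomp : (i.comp g).toRingHom.comp (algebraMap K F) =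
      (u⁻¹ * j).ofConv.toRingHom.comp (algebraMap K H) := RingHom.ext fun x ↦
    ((congrArg (u⁻¹ * j) (halg x)).trans (DFunLike.congr_fun (congrArg ofConv hquot) x)).symm
  have hu_mem (x : H) : u x ∈ i.range := ⟨f x, rfl⟩
  have hquot_mem (x : H) : (u⁻¹ * j) x ∈ i.range := by
    obtain ⟨y, hy⟩ := range_le_range_of_surjective_algebraMap_baseChange hF _ _ hcomp ⟨x, rfl⟩
    exact ⟨g y, hy⟩
  have hj_mem (x : H) : j x ∈ i.range := by
    rw [← mul_inv_cancel_left u j]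
    exact Points.mul_apply_mem hu_mem hquot_mem x
  exact surjective_algebraMap_baseChange_of_forall_one_tmul_mem_range hj_mem

lemma surjective_of_faithfullyFlat_of_eq_mul (halg : ∀ x, algebraMap K H x = ι x)
    {β : Points R K B} (hβ : β.ofConv.toRingHom.FaithfullyFlat) (f : H →ₐ[R] B) (g : F →ₐ[R] B)
    (hfg : β = Points.map f (toConv (ι : K →ₐ[R] H)) *
      Points.map g (toConv (IsScalarTower.toAlgHom R K F)))
    (hF : Function.Surjective (algebraMap F (F ⊗[K] H))) : Function.Surjective ι := by
  algebraize [β.ofConv.toRingHom]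
  have : IsScalarTower R K B := .of_algebraMap_eq' β.ofConv.comp_algebraMap.symm
  have hKH := Module.FaithfullyFlat.surjective_of_tensorProduct
    (surjective_algebraMap_baseChange_of_algebraMap_eq_mul halg f g hfg hF)
  exact fun x ↦ (hKH x).imp fun y hy ↦ (halg y).symm.trans hy

end Descent

theorem surjective_of_ker_counit_le_map {k K H : Type*} [Field k] [CommRing K] [HopfAlgebra k K]
    [CommRing H] [HopfAlgebra k H] [IsNoetherianRing K] {ι : K →ₐc[k] H}
    (hinj : Function.Injective ι)
    (hι : RingHom.ker (counitAlgHom k H) ≤ (RingHom.ker (counitAlgHom k K)).map ι) :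
    Function.Surjective ι := by
  have : Nontrivial K := (counitAlgHom k K).toRingHom.domain_nontrivial
  obtain ⟨p, hp⟩ := Ideal.nonempty_minimalPrimes (bot_ne_top (α := Ideal K))
  have : p.IsPrime := hp.1.1
  have := isArtinianRing_localization_of_mem_minimalPrimes hp
  algebraize [(ι : K →ₐ[k] H).toRingHom]
  have : Algebra.IsEpi K H := isEpi_of_ker_counit_le_map (fun _ ↦ rfl) hι
  have hflat : (IsScalarTower.toAlgHom k K (Localization.AtPrime p)).Flat :=
    RingHom.flat_algebraMap_iff.mpr (IsLocalization.flat _ p.primeCompl)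
  exact surjective_of_faithfullyFlat_of_eq_mul (fun _ ↦ rfl)
    (faithfullyFlat_prod hinj (v := toConv _) hflat) includeLeft includeRight rfl
    surjective_algebraMap_baseChange_of_isEpi

/-! ### Hopf subalgebras -/

section Restriction

variable {R A H : Type*} [CommRing R] [CommRing A] [Algebra R A] [CommRing H]

section Bialgebra

variable [Bialgebra R H] {j : A →ₐ[R] H} {δ : A →ₐ[R] A ⊗[R] A}

lemma coassoc_of_injective [Module.Flat R A] [Module.Flat R H] (hj : Function.Injective j)
    (hδ : (Algebra.TensorProduct.map j j).comp δ = (comulAlgHom R H).comp j) :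
    (Algebra.TensorProduct.assoc R R R A A A).toAlgHom.comp
        ((Algebra.TensorProduct.map δ (.id R A)).comp δ) =
      (Algebra.TensorProduct.map (.id R A) δ).comp δ := by
  have hjj : Function.Injective (Algebra.TensorProduct.map j j) :=
    TensorProduct.map_injective_of_flat_flat j.toLinearMap j.toLinearMap hj hj
  have hjjj : Function.Injective (Algebra.TensorProduct.map j (Algebra.TensorProduct.map j j)) :=
    TensorProduct.map_injective_of_flat_flat j.toLinearMap
      (Algebra.TensorProduct.map j j).toLinearMap hj hjj
  have hassoc : (Algebra.TensorProduct.map j (Algebra.TensorProduct.map j j)).comp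
      (Algebra.TensorProduct.assoc R R R A A A).toAlgHom =
      (Algebra.TensorProduct.assoc R R R H H H).toAlgHom.comp
        (Algebra.TensorProduct.map (Algebra.TensorProduct.map j j) j) := by
    ext <;> simp [Algebra.TensorProduct.one_def]
  have hleft : (Algebra.TensorProduct.map (Algebra.TensorProduct.map j j) j).comp
      (Algebra.TensorProduct.map δ (.id R A)) =
      (Algebra.TensorProduct.map (comulAlgHom R H) (.id R H)).comp
        (Algebra.TensorProduct.map j j) := by
    rw [← Algebra.TensorProduct.map_comp, ← Algebra.TensorProduct.map_comp, hδ]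
    rfl
  have hright : (Algebra.TensorProduct.map j (Algebra.TensorProduct.map j j)).comp
      (Algebra.TensorProduct.map (.id R A) δ) =
      (Algebra.TensorProduct.map (.id R H) (comulAlgHom R H)).comp
        (Algebra.TensorProduct.map j j) := by
    rw [← Algebra.TensorProduct.map_comp, ← Algebra.TensorProduct.map_comp, hδ]
    rfl
  refine AlgHom.ext fun x ↦ hjjj ?_
  have hx : Algebra.TensorProduct.map j j (δ x) = comul (j x) := DFunLike.congr_fun hδ x
  calc Algebra.TensorProduct.map j (Algebra.TensorProduct.map j j)
        (Algebra.TensorProduct.assoc R R R A A A (Algebra.TensorProduct.map δ (.id R A) (δ x)))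
      = Algebra.TensorProduct.assoc R R R H H H (Algebra.TensorProduct.map (comulAlgHom R H)
          (.id R H) (Algebra.TensorProduct.map j j (δ x))) :=
        (DFunLike.congr_fun hassoc _).trans (congrArg _ (DFunLike.congr_fun hleft _))
    _ = Algebra.TensorProduct.map (.id R H) (comulAlgHom R H)
          (Algebra.TensorProduct.map j j (δ x)) := by
        rw [hx]
        exact Coalgebra.coassoc_apply (j x)
    _ = _ := (DFunLike.congr_fun hright _).symm

lemma map_counit_id_comp_of_injective (hj : Function.Injective j)
    (hδ : (Algebra.TensorProduct.map j j).comp δ = (comulAlgHom R H).comp j) :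
    (Algebra.TensorProduct.map ((counitAlgHom R H).comp j) (.id R A)).comp δ =
      (Algebra.TensorProduct.lid R A).symm := by
  have hcounit : j.comp ((Algebra.TensorProduct.lid R A).toAlgHom.comp
      (Algebra.TensorProduct.map ((counitAlgHom R H).comp j) (.id R A))) =
      ((Algebra.TensorProduct.lid R H).toAlgHom.comp
        (Algebra.TensorProduct.map (counitAlgHom R H) (.id R H))).comp
          (Algebra.TensorProduct.map j j) := by
    ext <;> simp
  refine AlgHom.ext fun x ↦ (Algebra.TensorProduct.lid R A).injective (hj ?_)
  have hx : Algebra.TensorProduct.map j j (δ x) = comul (j x) := DFunLike.congr_fun hδ x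
  refine (DFunLike.congr_fun hcounit (δ x)).trans ?_
  rw [AlgHom.comp_apply, hx]
  exact (congrArg (TensorProduct.lid R H) (Coalgebra.rTensor_counit_comul (j x))).trans (by simp)

lemma map_id_counit_comp_of_injective (hj : Function.Injective j)
    (hδ : (Algebra.TensorProduct.map j j).comp δ = (comulAlgHom R H).comp j) :
    (Algebra.TensorProduct.map (.id R A) ((counitAlgHom R H).comp j)).comp δ =
      (Algebra.TensorProduct.rid R R A).symm := by
  have hcounit : j.comp ((Algebra.TensorProduct.rid R R A).toAlgHom.comp
      (Algebra.TensorProduct.map (.id R A) ((counitAlgHom R H).comp j))) =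
      ((Algebra.TensorProduct.rid R R H).toAlgHom.comp
        (Algebra.TensorProduct.map (.id R H) (counitAlgHom R H))).comp
          (Algebra.TensorProduct.map j j) := by
    ext <;> simp
  refine AlgHom.ext fun x ↦ (Algebra.TensorProduct.rid R R A).injective (hj ?_)
  have hx : Algebra.TensorProduct.map j j (δ x) = comul (j x) := DFunLike.congr_fun hδ x
  refine (DFunLike.congr_fun hcounit (δ x)).trans ?_
  rw [AlgHom.comp_apply, hx]
  exact (congrArg (TensorProduct.rid R H) (Coalgebra.lTensor_counit_comul (j x))).trans (by simp)

/-- The bialgebra structure on `A` for which an injective homomorphism `j : A → H` becomes a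
homomorphism of bialgebras, given a restriction `δ` of the comultiplication. -/
@[reducible] noncomputable def bialgebraOfInjective [Module.Flat R A] [Module.Flat R H]
    (hj : Function.Injective j)
    (hδ : (Algebra.TensorProduct.map j j).comp δ = (comulAlgHom R H).comp j) : Bialgebra R A :=
  .ofAlgHom δ ((counitAlgHom R H).comp j) (coassoc_of_injective hj hδ)
    (map_counit_id_comp_of_injective hj hδ) (map_id_counit_comp_of_injective hj hδ)

end Bialgebra

section HopfAlgebra

variable [HopfAlgebra R H] {j : A →ₐ[R] H} {δ : A →ₐ[R] A ⊗[R] A} {σ : A →ₐ[R] A}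

lemma lift_antipode_id_comp_of_injective (hj : Function.Injective j)
    (hδ : (Algebra.TensorProduct.map j j).comp δ = (comulAlgHom R H).comp j)
    (hσ : j.comp σ = (antipodeAlgHom R H).comp j) :
    (Algebra.TensorProduct.lift σ (.id R A) fun _ _ ↦ .all ..).comp δ =
      (Algebra.ofId R A).comp ((counitAlgHom R H).comp j) := by
  have hlift : j.comp (Algebra.TensorProduct.lift σ (.id R A) fun _ _ ↦ .all ..) =
      ((Algebra.TensorProduct.lmul' R).comp
        (Algebra.TensorProduct.map (antipodeAlgHom R H) (.id R H))).comp
          (Algebra.TensorProduct.map j j) := by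
    ext x
    · simpa using DFunLike.congr_fun hσ x
    · simp
  refine AlgHom.ext fun x ↦ hj ?_
  have hx : Algebra.TensorProduct.map j j (δ x) = comul (j x) := DFunLike.congr_fun hδ x
  refine (DFunLike.congr_fun hlift (δ x)).trans ?_
  rw [AlgHom.comp_apply, hx]
  exact (mul_antipode_rTensor_comul_apply (j x)).trans (j.commutes _).symm

lemma lift_id_antipode_comp_of_injective (hj : Function.Injective j)
    (hδ : (Algebra.TensorProduct.map j j).comp δ = (comulAlgHom R H).comp j)
    (hσ : j.comp σ = (antipodeAlgHom R H).comp j) :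
    (Algebra.TensorProduct.lift (.id R A) σ fun _ _ ↦ .all ..).comp δ =
      (Algebra.ofId R A).comp ((counitAlgHom R H).comp j) := by
  have hlift : j.comp (Algebra.TensorProduct.lift (.id R A) σ fun _ _ ↦ .all ..) =
      ((Algebra.TensorProduct.lmul' R).comp
        (Algebra.TensorProduct.map (.id R H) (antipodeAlgHom R H))).comp
          (Algebra.TensorProduct.map j j) := by
    ext x
    · simp
    · simpa using DFunLike.congr_fun hσ x
  refine AlgHom.ext fun x ↦ hj ?_
  have hx : Algebra.TensorProduct.map j j (δ x) = comul (j x) := DFunLike.congr_fun hδ x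
  refine (DFunLike.congr_fun hlift (δ x)).trans ?_
  rw [AlgHom.comp_apply, hx]
  exact (mul_antipode_lTensor_comul_apply (j x)).trans (j.commutes _).symm

/-- The Hopf algebra structure on `A` for which an injective homomorphism `j : A → H` becomes a
homomorphism of Hopf algebras, given restrictions `δ` and `σ` of the comultiplication and of the
antipode. -/
@[reducible] noncomputable def hopfAlgebraOfInjective [Module.Flat R A] [Module.Flat R H]
    (hj : Function.Injective j)
    (hδ : (Algebra.TensorProduct.map j j).comp δ = (comulAlgHom R H).comp j)
    (hσ : j.comp σ = (antipodeAlgHom R H).comp j) : HopfAlgebra R A :=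
  letI := bialgebraOfInjective hj hδ
  .ofAlgHom σ (lift_antipode_id_comp_of_injective hj hδ hσ)
    (lift_id_antipode_comp_of_injective hj hδ hσ)

end HopfAlgebra

end Restriction

section Subalgebra

variable {R H : Type*} [CommRing R] [CommRing H]

/-- The image of `A ⊗ A` in `H ⊗ H`. -/
noncomputable def tensorSquare [Algebra R H] (A : Subalgebra R H) : Subalgebra R (H ⊗[R] H) :=
  (Algebra.TensorProduct.map A.val A.val).range

section TensorSquare

variable [Algebra R H] {A B : Subalgebra R H}

lemma tensorSquare_eq_sup (A : Subalgebra R H) :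
    tensorSquare A = A.map includeLeft ⊔ A.map includeRight := by
  rw [tensorSquare, Algebra.TensorProduct.map_range, AlgHom.range_comp, AlgHom.range_comp,
    Subalgebra.range_val]

lemma tensorSquare_mono (h : A ≤ B) : tensorSquare A ≤ tensorSquare B := by
  rw [tensorSquare_eq_sup, tensorSquare_eq_sup]
  exact sup_le_sup (Subalgebra.map_mono h) (Subalgebra.map_mono h)

lemma tmul_mem_tensorSquare {x y : H} (hx : x ∈ A) (hy : y ∈ A) : x ⊗ₜ[R] y ∈ tensorSquare A :=
  ⟨⟨x, hx⟩ ⊗ₜ ⟨y, hy⟩, rfl⟩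

lemma map_comm_tensorSquare (A : Subalgebra R H) :
    (tensorSquare A).map (Algebra.TensorProduct.comm R H H).toAlgHom = tensorSquare A := by
  rw [tensorSquare_eq_sup, Algebra.map_sup, Subalgebra.map_map, Subalgebra.map_map, sup_comm]
  congr 2

lemma map_tensorSquare (f : H →ₐ[R] H) (A : Subalgebra R H) :
    (tensorSquare A).map (Algebra.TensorProduct.map f f) = tensorSquare (A.map f) := by
  rw [tensorSquare_eq_sup, tensorSquare_eq_sup, Algebra.map_sup]
  simp only [Subalgebra.map_map, Algebra.TensorProduct.map_comp_includeLeft,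
    Algebra.TensorProduct.map_comp_includeRight]

end TensorSquare

/-- A subalgebra `A` which is a subbialgebra: `Δ A` is contained in the image of `A ⊗ A`. -/
structure IsSubbialgebra [Bialgebra R H] (A : Subalgebra R H) : Prop where
  le_comap_comul : A ≤ (tensorSquare A).comap (comulAlgHom R H)

/-- A subbialgebra stable under the antipode. -/
structure IsHopfSubalgebra [HopfAlgebra R H] (A : Subalgebra R H) : Prop extends
    IsSubbialgebra A where
  le_comap_antipode : A ≤ A.comap (antipodeAlgHom R H)

namespace IsSubbialgebra

lemma sup [Bialgebra R H] {A B : Subalgebra R H} (hA : IsSubbialgebra A) (hB : IsSubbialgebra B) :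
    IsSubbialgebra (A ⊔ B) where
  le_comap_comul := sup_le
    (hA.le_comap_comul.trans <|
      (Subalgebra.gc_map_comap _).monotone_u (tensorSquare_mono le_sup_left))
    (hB.le_comap_comul.trans <|
      (Subalgebra.gc_map_comap _).monotone_u (tensorSquare_mono le_sup_right))

variable [HopfAlgebra R H] {A : Subalgebra R H}

lemma map_antipode (hA : IsSubbialgebra A) : IsSubbialgebra (A.map (antipodeAlgHom R H)) where
  le_comap_comul := by
    rintro _ ⟨x, hx, rfl⟩
    rw [← map_tensorSquare, ← map_comm_tensorSquare A]
    exact ⟨_, ⟨_, hA.le_comap_comul hx, rfl⟩, (Points.comul_antipode x).symm⟩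

lemma isHopfSubalgebra_sup_map_antipode (hA : IsSubbialgebra A) :
    IsHopfSubalgebra (A ⊔ A.map (antipodeAlgHom R H)) where
  __ := hA.sup hA.map_antipode
  le_comap_antipode := by
    rw [← Subalgebra.map_le, Algebra.map_sup, Subalgebra.map_map, Points.antipode_comp_antipode,
      Subalgebra.map_id, sup_comm]

end IsSubbialgebra

namespace IsHopfSubalgebra

variable [HopfAlgebra R H] {A B : Subalgebra R H}

lemma bot : IsHopfSubalgebra (⊥ : Subalgebra R H) where
  le_comap_comul := bot_le
  le_comap_antipode := bot_le

lemma sup (hA : IsHopfSubalgebra A) (hB : IsHopfSubalgebra B) : IsHopfSubalgebra (A ⊔ B) where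
  __ := hA.toIsSubbialgebra.sup hB.toIsSubbialgebra
  le_comap_antipode := sup_le
    (hA.le_comap_antipode.trans ((Subalgebra.gc_map_comap _).monotone_u le_sup_left))
    (hB.le_comap_antipode.trans ((Subalgebra.gc_map_comap _).monotone_u le_sup_right))

end IsHopfSubalgebra

end Subalgebra

lemma IsSubbialgebra.exists_map_val_comp_eq {k H : Type*} [Field k] [CommRing H] [Bialgebra k H]
    {A : Subalgebra k H} (hA : IsSubbialgebra A) :
    ∃ δ : A →ₐ[k] A ⊗[k] A, (Algebra.TensorProduct.map A.val A.val).comp δ =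
      (comulAlgHom k H).comp A.val := by
  have hinj : Function.Injective (Algebra.TensorProduct.map A.val A.val) :=
    TensorProduct.map_injective_of_flat_flat A.val.toLinearMap A.val.toLinearMap
      Subtype.val_injective Subtype.val_injective
  let e := AlgEquiv.ofInjective _ hinj
  let Δ : A →ₐ[k] tensorSquare A :=
    ((comulAlgHom k H).comp A.val).codRestrict _ fun x ↦ hA.le_comap_comul x.2
  exact ⟨e.symm.toAlgHom.comp Δ, AlgHom.ext fun x ↦ congrArg Subtype.val (e.apply_symm_apply (Δ x))⟩

lemma IsHopfSubalgebra.eq_top_of_ker_counit_le {k H : Type*} [Field k] [CommRing H]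
    [HopfAlgebra k H] {A : Subalgebra k H} (hA : IsHopfSubalgebra A) [IsNoetherianRing A]
    (h : RingHom.ker (counitAlgHom k H) ≤
      (RingHom.ker ((counitAlgHom k H).comp A.val)).map A.val) : A = ⊤ := by
  obtain ⟨δ, hδ⟩ := hA.exists_map_val_comp_eq
  let : HopfAlgebra k A := hopfAlgebraOfInjective (σ := ((antipodeAlgHom k H).comp
    A.val).codRestrict A fun x ↦ hA.le_comap_antipode x.2) Subtype.val_injective hδ rfl
  let ι : A →ₐc[k] H := .ofAlgHom A.val rfl hδ
  have hsurj : Function.Surjective ι := surjective_of_ker_counit_le_map Subtype.val_injective h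
  exact eq_top_iff.mpr fun x _ ↦ (hsurj x).choose_spec ▸ Subtype.property _

/-! ### Local finiteness -/

lemma exists_fg_forall_mem_iff_exists_rid_lTensor_eq {R M N : Type*} [CommRing R] [AddCommGroup M]
    [Module R M] [AddCommGroup N] [Module R N] [Module.Free R N] (t : M ⊗[R] N) :
    ∃ V : Submodule R M, V.FG ∧ t ∈ LinearMap.range (V.subtype.rTensor N) ∧
      ∀ w, w ∈ V ↔ ∃ φ : Module.Dual R N, TensorProduct.rid R M (φ.lTensor M t) = w := by
  classical
  let b := Module.Free.chooseBasis R N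
  obtain ⟨a, ha⟩ := TensorProduct.eq_repr_basis_right b t
  have ht : t = ∑ i ∈ a.support, a i ⊗ₜ[R] b i := ha.symm
  let contract : Module.Dual R N →ₗ[R] M :=
    (TensorProduct.rid R M).toLinearMap ∘ₗ (LinearMap.lTensorHom M).flip t
  have hcontract (φ : Module.Dual R N) : contract φ = ∑ i ∈ a.support, φ (b i) • a i := by
    change TensorProduct.rid R M (φ.lTensor M t) = _
    rw [ht]
    simp
  have hmem {i} (hi : i ∈ a.support) : a i ∈ LinearMap.range contract :=
    ⟨b.coord i, by simp_all [Finsupp.single_apply]⟩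
  refine ⟨LinearMap.range contract, ⟨a.support.image a, ?_⟩, ?_, fun w ↦ .rfl⟩
  · refine le_antisymm (Submodule.span_le.mpr ?_) ?_
    · simpa [Set.subset_def] using fun i hi ↦ hmem (Finsupp.mem_support_iff.mpr hi)
    · rintro _ ⟨φ, rfl⟩
      rw [hcontract]
      exact sum_mem fun i hi ↦ Submodule.smul_mem _ _
        (Submodule.subset_span (Finset.mem_image_of_mem a hi))
  · rw [ht]
    exact sum_mem fun i hi ↦ ⟨⟨a i, hmem hi⟩ ⊗ₜ b i, rfl⟩

section Coalgebra

variable {R C : Type*} [CommRing R] [AddCommGroup C] [Module R C] [Coalgebra R C]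

lemma comul_rid_lTensor_comul (φ : Module.Dual R C) (x : C) :
    comul (TensorProduct.rid R C (φ.lTensor C (comul x))) =
      ((TensorProduct.rid R C).toLinearMap ∘ₗ φ.lTensor C ∘ₗ comul).lTensor C
        (comul (R := R) x) := by
  let contract : C ⊗[R] C →ₗ[R] C := (TensorProduct.rid R C).toLinearMap ∘ₗ φ.lTensor C
  have hcomul : comul ∘ₗ contract =
      contract.lTensor C ∘ₗ (TensorProduct.assoc R C C C).toLinearMap ∘ₗ comul.rTensor C := by
    ext a b
    change comul (φ b • a) = contract.lTensor C (TensorProduct.assoc R C C C (comul a ⊗ₜ b))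
    rw [map_smul]
    induction comul (R := R) a using TensorProduct.induction_on with
    | zero => simp
    | tmul y z => simp [contract]
    | add y z hy hz => rw [smul_add, hy, hz, add_tmul, map_add, map_add]
  calc comul (contract (comul x))
      = contract.lTensor C (TensorProduct.assoc R C C C (comul.rTensor C (comul (R := R) x))) :=
        LinearMap.congr_fun hcomul _
    _ = contract.lTensor C (comul.lTensor C (comul (R := R) x)) := by rw [Coalgebra.coassoc_apply]
    _ = _ := (LinearMap.lTensor_comp_apply ..).symm

/-- The right subcomodule generated by `x`, spanned by the coefficients of `Δ x`. -/
lemma exists_fg_subcomodule [Module.Free R C] (x : C) :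
    ∃ V : Submodule R C, V.FG ∧ x ∈ V ∧
      ∀ w ∈ V, comul (R := R) w ∈ LinearMap.range (V.subtype.rTensor C) := by
  obtain ⟨V, hfg, ⟨t, ht⟩, hV⟩ := exists_fg_forall_mem_iff_exists_rid_lTensor_eq (comul (R := R) x)
  refine ⟨V, hfg, (hV x).mpr ⟨counit, by simp⟩, fun w hw ↦ ?_⟩
  obtain ⟨φ, rfl⟩ := (hV w).mp hw
  rw [comul_rid_lTensor_comul, ← ht]
  exact ⟨LinearMap.lTensor V _ t, by
    rw [← LinearMap.comp_apply, ← LinearMap.comp_apply, LinearMap.rTensor_comp_lTensor,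
      LinearMap.lTensor_comp_rTensor]⟩

variable {ι : Type*} [Fintype ι] {v : ι → C} {c : ι → ι → C}

lemma comul_apply_of_comul_eq_sum [DecidableEq ι] {φ : ι → Module.Dual R C}
    (hφ : ∀ i j, φ i (v j) = if i = j then 1 else 0)
    (hc : ∀ j, comul (R := R) (v j) = ∑ i, v i ⊗ₜ[R] c i j) (i j : ι) :
    comul (R := R) (c i j) = ∑ l, c i l ⊗ₜ[R] c l j := by
  have h := Coalgebra.coassoc_apply (R := R) (v j)
  simp only [hc, map_sum, LinearMap.lTensor_tmul, LinearMap.rTensor_tmul, sum_tmul,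
    TensorProduct.assoc_tmul] at h
  have hcontract := congrArg
    ((TensorProduct.lid R (C ⊗[R] C)).toLinearMap ∘ₗ (φ i).rTensor (C ⊗[R] C)) h
  simpa [hφ] using hcontract.symm

lemma eq_sum_counit_smul (hc : ∀ j, comul (R := R) (v j) = ∑ i, v i ⊗ₜ[R] c i j) (j : ι) :
    v j = ∑ i, counit (R := R) (v i) • c i j := by
  have h := congrArg (TensorProduct.lid R C) (Coalgebra.rTensor_counit_comul (R := R) (v j))
  simpa [hc] using h.symm

end Coalgebra

/-- The entries of the matrix of a finite-dimensional subcomodule containing `x` span a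
subcoalgebra containing `x`. -/
lemma exists_matrix_comul_apply {k C : Type*} [Field k] [AddCommGroup C] [Module k C]
    [Coalgebra k C] (x : C) :
    ∃ (n : ℕ) (c : Fin n → Fin n → C),
      (∀ i j, comul (R := k) (c i j) = ∑ l, c i l ⊗ₜ[k] c l j) ∧
      x ∈ Submodule.span k (Set.range (Function.uncurry c)) := by
  obtain ⟨V, hfg, hx, hV⟩ := exists_fg_subcomodule (R := k) x
  have : Module.Finite k V := .of_fg hfg
  let b := Module.finBasis k V
  have hb (j) : ∃ c : Fin _ → C, comul (R := k) (b j : C) = ∑ i, (b i : C) ⊗ₜ[k] c i := by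
    obtain ⟨t, ht⟩ := hV (b j) (b j).2
    obtain ⟨c, rfl⟩ := TensorProduct.eq_repr_basis_left b t
    exact ⟨c, by simp [← ht, Finsupp.sum_fintype]⟩
  choose c hc using hb
  have hφ (i) : ∃ φ : Module.Dual k C, ∀ j, φ (b j) = if i = j then 1 else 0 := by
    obtain ⟨φ, hφ⟩ := (b.coord i).exists_extend
    refine ⟨φ, fun j ↦ ?_⟩
    simpa [Finsupp.single_apply, eq_comm] using DFunLike.congr_fun hφ (b j)
  choose φ hφ using hφ
  refine ⟨_, fun i j ↦ c j i, comul_apply_of_comul_eq_sum hφ hc, ?_⟩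
  have hx_sum := congrArg V.subtype (b.sum_repr ⟨x, hx⟩)
  simp only [map_sum, map_smul, Submodule.subtype_apply] at hx_sum
  rw [← hx_sum]
  refine sum_mem fun j _ ↦ Submodule.smul_mem _ _ ?_
  rw [eq_sum_counit_smul hc j]
  exact sum_mem fun i _ ↦ Submodule.smul_mem _ _ (Submodule.subset_span ⟨(i, j), rfl⟩)

section HopfAlgebra

lemma isSubbialgebra_adjoin {R H : Type*} [CommRing R] [CommRing H] [Bialgebra R H] {s : Set H}
    (hs : ∀ x ∈ s, comul x ∈ tensorSquare (Algebra.adjoin R s)) :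
    IsSubbialgebra (Algebra.adjoin R s) :=
  ⟨Algebra.adjoin_le hs⟩

lemma exists_fg_isSubbialgebra_mem (k : Type*) {H : Type*} [Field k] [CommRing H] [Bialgebra k H]
    (x : H) : ∃ A : Subalgebra k H, A.FG ∧ IsSubbialgebra A ∧ x ∈ A := by
  obtain ⟨n, c, hc, hx⟩ := exists_matrix_comul_apply (k := k) x
  refine ⟨Algebra.adjoin k (Set.range (Function.uncurry c)),
    Subalgebra.fg_def.mpr ⟨_, Set.finite_range _, rfl⟩, isSubbialgebra_adjoin ?_,
    Algebra.span_le_adjoin k _ hx⟩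
  have hmem (i j) : c i j ∈ Algebra.adjoin k (Set.range (Function.uncurry c)) :=
    Algebra.subset_adjoin ⟨(i, j), rfl⟩
  rintro _ ⟨⟨i, j⟩, rfl⟩
  rw [Function.uncurry_apply_pair, hc]
  exact sum_mem fun l _ ↦ tmul_mem_tensorSquare (hmem i l) (hmem l j)

variable (k : Type*) {H : Type*} [Field k] [CommRing H] [HopfAlgebra k H]

lemma exists_fg_isHopfSubalgebra_subset (t : Finset H) :
    ∃ A : Subalgebra k H, A.FG ∧ IsHopfSubalgebra A ∧ (t : Set H) ⊆ A := by
  classical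
  induction t using Finset.induction_on with
  | empty => exact ⟨⊥, Subalgebra.fg_bot, .bot, by simp⟩
  | insert x t _ ih =>
    obtain ⟨A, hAfg, hA, htA⟩ := ih
    obtain ⟨B, hBfg, hB, hxB⟩ := exists_fg_isSubbialgebra_mem k x
    refine ⟨A ⊔ (B ⊔ B.map (antipodeAlgHom k H)), hAfg.sup (hBfg.sup (hBfg.map _)),
      hA.sup hB.isHopfSubalgebra_sup_map_antipode, ?_⟩
    rw [Finset.coe_insert]
    exact Set.insert_subset ((le_sup_left.trans le_sup_right : B ≤ _) hxB)
      (htA.trans (le_sup_left : A ≤ _))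

theorem finiteType_of_isNoetherianRing [IsNoetherianRing H] : Algebra.FiniteType k H := by
  obtain ⟨t, ht⟩ : (RingHom.ker (counitAlgHom k H)).FG := IsNoetherian.noetherian _
  obtain ⟨A, hfg, hA, htA⟩ := exists_fg_isHopfSubalgebra_subset k t
  have : Algebra.FiniteType k A := A.fg_iff_finiteType.mp hfg
  have : IsNoetherianRing A := Algebra.FiniteType.isNoetherianRing k A
  have htop : A = ⊤ := hA.eq_top_of_ker_counit_le <| by
    rw [← ht, Submodule.span_le]
    intro y hy
    have hcounit : counitAlgHom k H y = 0 := by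
      rw [← RingHom.mem_ker, ← ht]
      exact Submodule.subset_span hy
    exact Ideal.mem_map_of_mem A.val (RingHom.mem_ker.mpr hcounit : (⟨y, htA hy⟩ : A) ∈ _)
  exact ⟨htop ▸ hfg⟩

end HopfAlgebra

end NoetherianHopf

theorem commutative_hopfAlgebra_noetherian_iff_affine_general (k : Type*) [Field k]
    (H : Type*) [CommRing H] [HopfAlgebra k H] :
    IsNoetherianRing H ↔ Algebra.FiniteType k H :=
  ⟨fun _ ↦ NoetherianHopf.finiteType_of_isNoetherianRing k,
    fun _ ↦ Algebra.FiniteType.isNoetherianRing k H⟩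

/-- (Molnar) A commutative Hopf algebra over a field of characteristic 0 is
Noetherian iff it is affine (finitely generated as an algebra). -/
theorem commutative_hopfAlgebra_noetherian_iff_affine (k : Type*) [Field k] [CharZero k]
    (H : Type*) [CommRing H] [HopfAlgebra k H] :
    IsNoetherianRing H ↔ Algebra.FiniteType k H :=
  commutative_hopfAlgebra_noetherian_iff_affine_general k H
end

section
/- (Cartier) Let H be a commutative Hopf algebra over a field k of characteristic 0. Then H is reduced, i.e., H has no nonzero nilpotent elements. -/
/-!
Let `I` be the augmentation ideal and `ε` the counit. A basis of the cotangent space `I / I²` yields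
invariant derivations `Dᵢ` and lifts `tᵢ ∈ I` such that `E = ∑ tᵢ Dᵢ` is the identity on `I / I²`;
hence `E` is multiplication by `n` on `Iⁿ / Iⁿ⁺¹`. In characteristic `0` derivations preserve the
nilradical `N`, so `N ≤ Iⁿ` gives `E N ≤ I N ≤ Iⁿ⁺¹` and thus `N ≤ Iⁿ⁺¹`. When `H` is Noetherian,
Krull's intersection theorem shows that a nilpotent `x` is killed by some `1 - r` with `ε r = 0`,
and local finiteness extends this to every commutative bialgebra. Over a Hopf algebra the identity
can be translated to any point, so the annihilator of `x` lies in no maximal ideal.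
-/

open TensorProduct Coalgebra Bialgebra

namespace Cartier

section Derivation

variable {R A : Type*} [CommRing R] [CommRing A] [Algebra R A] [Algebra ℚ A]

theorem pow_mul_derivation_pow_add_two_eq_zero (D : Derivation R A A) {x : A} {m l : ℕ}
    (h : x ^ (m + 1) * D x ^ l = 0) : x ^ m * D x ^ (l + 2) = 0 := by
  have second_term : x ^ (m + 1) * D (D x ^ l) * D x = 0 := by
    cases l with
    | zero => simp
    | succ l =>
      calc x ^ (m + 1) * D (D x ^ (l + 1)) * D x
          = (l + 1) * D (D x) * (x ^ (m + 1) * D x ^ (l + 1)) := by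
            simp only [D.leibniz_pow, Nat.add_sub_cancel, nsmul_eq_mul, smul_eq_mul]
            push_cast
            ring
        _ = 0 := by rw [h, mul_zero]
  have scaled : ((m + 1 : ℕ) : ℚ) • (x ^ m * D x ^ (l + 2)) = 0 :=
    calc ((m + 1 : ℕ) : ℚ) • (x ^ m * D x ^ (l + 2))
        = D (x ^ (m + 1) * D x ^ l) * D x - x ^ (m + 1) * D (D x ^ l) * D x := by
          rw [D.leibniz, D.leibniz_pow x]
          simp only [Nat.add_sub_cancel, Nat.cast_smul_eq_nsmul, nsmul_eq_mul, smul_eq_mul]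
          ring
      _ = 0 := by rw [h, map_zero, zero_mul, second_term, sub_zero]
  exact (smul_eq_zero_iff_right (by positivity)).1 scaled

theorem isNilpotent_derivation_apply (D : Derivation R A A) {x : A} (hx : IsNilpotent x) :
    IsNilpotent (D x) := by
  obtain ⟨n, hn⟩ := hx
  have vanish : ∀ j ≤ n, x ^ (n - j) * D x ^ (2 * j) = 0 := by
    intro j hj
    induction j with
    | zero => simpa using hn
    | succ j ih =>
      refine pow_mul_derivation_pow_add_two_eq_zero D (l := 2 * j) ?_
      rw [← ih (by lia), show n - (j + 1) + 1 = n - j by lia]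
  exact ⟨2 * n, by simpa using vanish n le_rfl⟩

end Derivation

section Euler

variable {R A : Type*} [CommRing R] [CommRing A] [Algebra R A] {I : Ideal A}

theorem derivation_sub_natCast_mul_mem_pow {E : Derivation R A A}
    (hE : ∀ y ∈ I, E y - y ∈ I ^ 2) (n : ℕ) {y : A} (hy : y ∈ I ^ (n + 1)) :
    E y - (n + 1 : ℕ) * y ∈ I ^ (n + 2) := by
  induction n generalizing y with
  | zero => simpa using hE y (by simpa using hy)
  | succ n ih =>
    rw [pow_succ] at hy
    refine Submodule.mul_induction_on hy (fun a ha b hb ↦ ?_) (fun a b ha hb ↦ ?_)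
    · have h_left : (E a - (n + 1 : ℕ) * a) * b ∈ I ^ (n + 3) :=
        pow_succ I (n + 2) ▸ Ideal.mul_mem_mul (ih ha) hb
      have h_right : a * (E b - b) ∈ I ^ (n + 3) :=
        pow_add I (n + 1) 2 ▸ Ideal.mul_mem_mul ha (hE b hb)
      convert Ideal.add_mem _ h_left h_right using 1
      rw [E.leibniz, smul_eq_mul, smul_eq_mul]
      push_cast
      ring
    · convert Ideal.add_mem _ ha hb using 1
      rw [map_add]
      ring

theorem le_pow_of_derivation_apply_mem_mul [Algebra ℚ A] {E : Derivation R A A}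
    (hE : ∀ y ∈ I, E y - y ∈ I ^ 2) {N : Ideal A} (hNI : N ≤ I) (hEN : ∀ x ∈ N, E x ∈ I * N)
    (n : ℕ) : N ≤ I ^ (n + 1) := by
  induction n with
  | zero => simpa using hNI
  | succ n ih =>
    intro x hx
    have hEx : E x ∈ I ^ (n + 2) := pow_succ' I (n + 1) ▸ Ideal.mul_mono_right ih (hEN x hx)
    have hnx : ((n + 1 : ℕ) : A) * x ∈ I ^ (n + 2) := by
      simpa using Ideal.sub_mem _ hEx (derivation_sub_natCast_mul_mem_pow hE n (ih hx))
    have h_unit : IsUnit ((n + 1 : ℕ) : A) := by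
      simpa using (IsUnit.mk0 ((n + 1 : ℕ) : ℚ) (by positivity)).map (algebraMap ℚ A)
    exact (Ideal.unit_mul_mem_iff_mem _ h_unit).1 hnx

theorem derivation_apply_mem_mul {N : Ideal A} (hN : ∀ D : Derivation R A A, ∀ x ∈ N, D x ∈ N)
    {E : Derivation R A A} (hE : E ∈ I • (⊤ : Submodule A (Derivation R A A))) {x : A}
    (hx : x ∈ N) : E x ∈ I * N := by
  induction hE using Submodule.smul_induction_on' with
  | smul t ht D _ => exact Ideal.mul_mem_mul ht (hN D x hx)
  | add E _ E' _ h h' => exact Ideal.add_mem _ h h'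

end Euler

section Hit

variable {k C : Type*} [CommRing k] [AddCommGroup C] [Module k C] [Coalgebra k C]

/-- The left hit action `f ⇀ c = ∑ f c₂ • c₁` of the dual of a coalgebra. -/
noncomputable def leftHit (f : C →ₗ[k] k) : C →ₗ[k] C :=
  (TensorProduct.rid k C).toLinearMap ∘ₗ f.lTensor C ∘ₗ comul

/-- The right hit action `c ↼ f = ∑ f c₁ • c₂` of the dual of a coalgebra. -/
noncomputable def rightHit (f : C →ₗ[k] k) : C →ₗ[k] C :=
  (TensorProduct.lid k C).toLinearMap ∘ₗ f.rTensor C ∘ₗ comul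

theorem counit_leftHit (f : C →ₗ[k] k) (c : C) : counit (R := k) (leftHit f c) = f c := by
  have counit_rid : counit ∘ₗ (TensorProduct.rid k C).toLinearMap ∘ₗ f.lTensor C =
      f ∘ₗ (TensorProduct.lid k C).toLinearMap ∘ₗ counit.rTensor C := by
    ext
    simp [mul_comm]
  simpa [leftHit] using LinearMap.congr_fun counit_rid (comul c)

theorem comul_leftHit (f : C →ₗ[k] k) (c : C) :
    comul (leftHit f c) = (leftHit f).lTensor C (comul (R := k) c) := by
  have comul_rid : comul ∘ₗ (TensorProduct.rid k C).toLinearMap ∘ₗ f.lTensor C =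
      (TensorProduct.rid k C).toLinearMap.lTensor C ∘ₗ (f.lTensor C).lTensor C ∘ₗ
        (TensorProduct.assoc k C C C).toLinearMap ∘ₗ comul.rTensor C := by
    ext a b
    have smul_eq (z : C ⊗[k] C) : f b • z = (TensorProduct.rid k C).toLinearMap.lTensor C
        ((f.lTensor C).lTensor C (TensorProduct.assoc k C C C (z ⊗ₜ b))) := by
      induction z with
      | zero => simp
      | add z w hz hw => simp only [smul_add, add_tmul, map_add, hz, hw]
      | tmul c d => simp
    simpa using smul_eq (comul a)
  simpa [leftHit, LinearMap.lTensor_comp] using LinearMap.congr_fun comul_rid (comul c)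

theorem comul_rightHit (f : C →ₗ[k] k) (c : C) :
    comul (rightHit f c) = (rightHit f).rTensor C (comul (R := k) c) := by
  have comul_lid : comul ∘ₗ (TensorProduct.lid k C).toLinearMap ∘ₗ f.rTensor C =
      (TensorProduct.lid k C).toLinearMap.rTensor C ∘ₗ (f.rTensor C).rTensor C ∘ₗ
        (TensorProduct.assoc k C C C).symm.toLinearMap ∘ₗ comul.lTensor C := by
    ext a b
    have smul_eq (z : C ⊗[k] C) : f a • z = (TensorProduct.lid k C).toLinearMap.rTensor C
        ((f.rTensor C).rTensor C ((TensorProduct.assoc k C C C).symm (a ⊗ₜ z))) := by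
      induction z with
      | zero => simp
      | add z w hz hw => simp only [smul_add, tmul_add, map_add, hz, hw]
      | tmul c d => simp [smul_tmul']
    simpa using smul_eq (comul b)
  simpa [rightHit, LinearMap.rTensor_comp] using LinearMap.congr_fun comul_lid (comul c)

end Hit

section InvariantDerivation

variable (k A : Type*) [CommRing k] [CommRing A] [Bialgebra k A]

/-- The augmentation ideal of a bialgebra, i.e. the ideal of the identity of the corresponding
monoid scheme. -/
abbrev augmentationIdeal : Ideal A := RingHom.ker (counitAlgHom k A)

variable {A}

theorem sub_algebraMap_counit_mem (a : A) :
    a - algebraMap k A (counit a) ∈ augmentationIdeal k A := by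
  simp [RingHom.mem_ker]

variable (A)

/-- The differential at the identity: the linear map to the cotangent space of the augmentation
ideal that sends `a` to the class of `a - ε a`. -/
def cotangentMap : A →ₗ[k] (augmentationIdeal k A).Cotangent where
  toFun a := (augmentationIdeal k A).toCotangent ⟨_, sub_algebraMap_counit_mem k a⟩
  map_add' a b := by
    rw [← map_add]
    congr 2
    simp only [map_add]
    ring
  map_smul' c a := by
    rw [RingHom.id_apply, ← LinearMap.map_smul_of_tower]
    congr 2
    simp [Algebra.smul_def, mul_sub]

variable {k A}

theorem smul_cotangent (a : A) (v : (augmentationIdeal k A).Cotangent) :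
    a • v = counit (R := k) a • v := by
  rw [← algebraMap_smul A (counit (R := k) a), ← sub_eq_zero, ← sub_smul]
  exact Ideal.Cotangent.smul_eq_zero_of_mem (sub_algebraMap_counit_mem k a) v

theorem cotangentMap_coe (y : augmentationIdeal k A) :
    cotangentMap k A y = (augmentationIdeal k A).toCotangent y := by
  have hy : counit (R := k) (y : A) = 0 := y.2
  simp [cotangentMap, hy]

theorem cotangentMap_mul (a b : A) : cotangentMap k A (a * b) =
    counit (R := k) a • cotangentMap k A b + counit (R := k) b • cotangentMap k A a := by
  rw [← smul_cotangent]
  simp only [cotangentMap, LinearMap.coe_mk, AddHom.coe_mk]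
  rw [← map_smul, ← LinearMap.map_smul_of_tower, ← map_add]
  congr 2
  simp only [counit_mul, map_mul, SetLike.mk_smul_mk, Submodule.coe_smul_of_tower,
    Algebra.smul_def, Algebra.algebraMap_self_apply]
  ring

theorem rid_lTensor_mul {q : A →ₗ[k] k}
    (hq : ∀ a b, q (a * b) = counit (R := k) a * q b + counit (R := k) b * q a) (z w : A ⊗[k] A) :
    TensorProduct.rid k A (q.lTensor A (z * w)) =
      TensorProduct.rid k A (counit.lTensor A z) * TensorProduct.rid k A (q.lTensor A w) +
      TensorProduct.rid k A (counit.lTensor A w) * TensorProduct.rid k A (q.lTensor A z) := by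
  induction z with
  | zero => simp
  | add z₁ z₂ h₁ h₂ => simp only [add_mul, map_add, h₁, h₂]; ring
  | tmul a b =>
    induction w with
    | zero => simp
    | add w₁ w₂ h₁ h₂ => simp only [mul_add, map_add, h₁, h₂]; ring
    | tmul c d =>
      simp only [Algebra.TensorProduct.tmul_mul_tmul, LinearMap.lTensor_tmul, hq, rid_tmul,
        Algebra.smul_def, map_add, map_mul]
      ring

theorem leftHit_mul {q : A →ₗ[k] k}
    (hq : ∀ a b, q (a * b) = counit (R := k) a * q b + counit (R := k) b * q a) (a b : A) :
    leftHit q (a * b) = a * leftHit q b + b * leftHit q a := by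
  simp [leftHit, rid_lTensor_mul hq]

/-- The left-invariant derivation `a ↦ ∑ f (d a₂) • a₁` attached to a tangent vector `f` at the
identity, where `d` is `cotangentMap k A`. -/
noncomputable def invariantDerivation (f : (augmentationIdeal k A).Cotangent →ₗ[k] k) :
    Derivation k A A :=
  .mk' (leftHit (f ∘ₗ cotangentMap k A)) (leftHit_mul fun a b ↦ by simp [cotangentMap_mul])

theorem counit_invariantDerivation (f : (augmentationIdeal k A).Cotangent →ₗ[k] k) (a : A) :
    counit (R := k) (invariantDerivation f a) = f (cotangentMap k A a) :=
  counit_leftHit _ a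

theorem finite_cotangent_augmentationIdeal [IsNoetherianRing A] :
    Module.Finite k (augmentationIdeal k A).Cotangent := by
  have : Module.Finite A (augmentationIdeal k A).Cotangent :=
    .of_surjective _ (augmentationIdeal k A).toCotangent_surjective
  obtain ⟨s, hs⟩ := (Module.Finite.fg_top : (⊤ : Submodule A (augmentationIdeal k A).Cotangent).FG)
  refine ⟨s, ?_⟩
  rw [eq_top_iff]
  intro v _
  have hv : v ∈ Submodule.span A (s : Set (augmentationIdeal k A).Cotangent) := hs ▸ trivial
  induction hv using Submodule.span_induction with
  | mem v hv => exact Submodule.subset_span hv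
  | zero => exact Submodule.zero_mem _
  | add v w _ _ hv hw => exact Submodule.add_mem _ (hv trivial) (hw trivial)
  | smul a v _ hv => exact smul_cotangent (k := k) a v ▸ Submodule.smul_mem _ _ (hv trivial)

end InvariantDerivation

section Nilradical

variable {k A : Type*} [Field k] [CommRing A] [Bialgebra k A]

theorem exists_euler_derivation [Module.Finite k (augmentationIdeal k A).Cotangent] :
    ∃ E ∈ augmentationIdeal k A • (⊤ : Submodule A (Derivation k A A)),
      ∀ y ∈ augmentationIdeal k A, E y - y ∈ augmentationIdeal k A ^ 2 := by
  let e := Module.finBasis k (augmentationIdeal k A).Cotangent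
  choose t ht using fun i ↦ (augmentationIdeal k A).toCotangent_surjective (e i)
  let D i := invariantDerivation (e.coord i)
  refine ⟨∑ i, (t i : A) • D i, Submodule.sum_mem _ fun i _ ↦
    Submodule.smul_mem_smul (t i).2 Submodule.mem_top, fun y hy ↦ ?_⟩
  have hEy : (augmentationIdeal k A).toCotangent (∑ i, D i y • t i) =
      (augmentationIdeal k A).toCotangent ⟨y, hy⟩ := by
    simp only [D, map_sum, map_smul, ht, smul_cotangent, counit_invariantDerivation,
      cotangentMap_coe ⟨y, hy⟩, Module.Basis.coord_apply, e.sum_repr]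
  have eval : (∑ i, (t i : A) • D i) y = ∑ i, D i y * t i := by
    rw [← Derivation.coeFnAddMonoidHom_apply, map_sum, Finset.sum_apply]
    simp [mul_comm]
  simpa [eval] using (Ideal.toCotangent_eq _).1 hEy

theorem nilradical_le_augmentationIdeal_pow [CharZero k]
    [Module.Finite k (augmentationIdeal k A).Cotangent] (n : ℕ) :
    nilradical A ≤ augmentationIdeal k A ^ n := by
  let : Algebra ℚ A := Algebra.compHom A (algebraMap ℚ k)
  obtain ⟨E, hE, hE_euler⟩ := exists_euler_derivation (k := k) (A := A)
  have nilradical_le : nilradical A ≤ augmentationIdeal k A :=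
    fun x hx ↦ ((mem_nilradical.1 hx).map (counitAlgHom k A)).eq_zero
  have mul_mem (x) (hx : x ∈ nilradical A) : E x ∈ augmentationIdeal k A * nilradical A :=
    derivation_apply_mem_mul (fun D x hx ↦ isNilpotent_derivation_apply D hx) hE hx
  exact (le_pow_of_derivation_apply_mem_mul hE_euler nilradical_le mul_mem n).trans
    (Ideal.pow_le_pow_right n.le_succ)

theorem exists_counit_eq_zero_mul_eq_self_of_isNoetherianRing [CharZero k] [IsNoetherianRing A]
    {x : A} (hx : IsNilpotent x) : ∃ r : A, counit (R := k) r = 0 ∧ r * x = x := by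
  have := finite_cotangent_augmentationIdeal (k := k) (A := A)
  obtain ⟨r, hr⟩ := ((augmentationIdeal k A).mem_iInf_smul_pow_eq_bot_iff x).1 <| by
    simpa [Submodule.mem_iInf] using fun n ↦ nilradical_le_augmentationIdeal_pow (k := k) n hx
  exact ⟨r, r.2, hr⟩

end Nilradical

section LocalFiniteness

variable {k C : Type*} [Field k] [AddCommGroup C] [Module k C] [Coalgebra k C]

theorem exists_finiteDimensional_comul_mem_range (x : C) :
    ∃ V : Submodule k C, FiniteDimensional k V ∧ x ∈ V ∧
      ∀ w ∈ V, comul w ∈ (V.subtype.rTensor C).range := by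
  classical
  let b := Module.Basis.ofVectorSpace k C
  let a := equivFinsuppOfBasisRight b (comul (R := k) x)
  have ha : ∑ i ∈ a.support, a i ⊗ₜ[k] b i = comul x := by
    rw [← (equivFinsuppOfBasisRight b).symm_apply_apply (comul (R := k) x),
      equivFinsuppOfBasisRight_symm_apply, Finsupp.sum]
  let V := Submodule.span k (Set.range a)
  have leftHit_coord (j) : leftHit (b.coord j) x = a j :=
    (equivFinsuppOfBasisRight_apply b _ _).symm
  have leftHit_mem (f : C →ₗ[k] k) : leftHit f x ∈ V := by
    simp only [leftHit, LinearMap.comp_apply, ← ha, map_sum]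
    exact Submodule.sum_mem _ fun j _ ↦ by
      simpa using V.smul_mem _ (Submodule.subset_span (Set.mem_range_self j))
  have stable : V ≤ (V.subtype.rTensor C).range.comap comul := by
    refine Submodule.span_le.2 ?_
    rintro _ ⟨j, rfl⟩
    rw [SetLike.mem_coe, Submodule.mem_comap, ← leftHit_coord, comul_leftHit, ← ha, map_sum]
    exact Submodule.sum_mem _ fun i _ ↦
      ⟨⟨a i, Submodule.subset_span (Set.mem_range_self i)⟩ ⊗ₜ leftHit (b.coord j) (b i), by simp⟩
  refine ⟨V, FiniteDimensional.span_of_finite k a.finite_range, ?_, stable⟩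
  simpa [leftHit] using leftHit_mem counit

theorem exists_matrix_coefficients (x : C) :
    ∃ (n : ℕ) (c : Fin n → Fin n → C),
      (∀ i j, comul (R := k) (c i j) = ∑ l, c i l ⊗ₜ[k] c l j) ∧
      x ∈ Submodule.span k (Set.range (Function.uncurry c)) := by
  obtain ⟨V, _, hx, stable⟩ := exists_finiteDimensional_comul_mem_range (k := k) x
  let v := Module.finBasis k V
  choose φ hφ using fun i ↦ LinearMap.exists_extend (v.coord i)
  have expand (w) (hw : w ∈ V) : comul w = ∑ i, (v i : C) ⊗ₜ[k] rightHit (φ i) w := by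
    obtain ⟨z, hz⟩ := stable w hw
    have coord_z (i) : equivFinsuppOfBasisLeft v z i = rightHit (φ i) w := by
      simp [equivFinsuppOfBasisLeft_apply, rightHit, ← hz, ← LinearMap.rTensor_comp_apply, hφ]
    rw [← hz, ← (equivFinsuppOfBasisLeft v).symm_apply_apply z, equivFinsuppOfBasisLeft_symm_apply,
      Finsupp.sum_fintype _ _ (by simp)]
    simp [coord_z]
  let c i j := rightHit (φ i) (v j)
  have hc (w) (hw : w ∈ V) : w = ∑ i, counit (R := k) (v i : C) • rightHit (φ i) w := by
    simpa [expand w hw] using (congr(TensorProduct.lid k C $(rTensor_counit_comul (R := k) w))).symm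
  have v_mem (j) : (v j : C) ∈ Submodule.span k (Set.range (Function.uncurry c)) := by
    rw [hc _ (v j).2]
    exact Submodule.sum_mem _ fun i _ ↦ Submodule.smul_mem _ _ (Submodule.subset_span ⟨(i, j), rfl⟩)
  refine ⟨_, c, fun i j ↦ by simp [c, comul_rightHit, expand (v j) (v j).2], ?_⟩
  have hV : Submodule.map V.subtype (Submodule.span k (Set.range v)) ≤
      Submodule.span k (Set.range (Function.uncurry c)) := by
    rw [Submodule.map_span_le]
    rintro _ ⟨j, rfl⟩
    exact v_mem j
  exact hV ⟨⟨x, hx⟩, by simp [v.span_eq], rfl⟩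

end LocalFiniteness

section Subbialgebra

variable {k H : Type*} [Field k] [CommRing H] [Bialgebra k H]

/-- The map `A ⊗ A → H ⊗ H` induced by the inclusion of a subalgebra. -/
noncomputable abbrev tensorInclusion (A : Subalgebra k H) : A ⊗[k] A →ₐ[k] H ⊗[k] H :=
  Algebra.TensorProduct.map A.val A.val

theorem tensorInclusion_injective (A : Subalgebra k H) :
    Function.Injective (tensorInclusion A) :=
  TensorProduct.map_injective_of_flat_flat A.val.toLinearMap A.val.toLinearMap
    Subtype.val_injective Subtype.val_injective

variable (A : Subalgebra k H) (hA : A ≤ (tensorInclusion A).range.comap (comulAlgHom k H))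

/-- The comultiplication of a bialgebra restricted to a subalgebra stable under it. -/
noncomputable def subcomul : A →ₐ[k] A ⊗[k] A :=
  (AlgEquiv.ofInjective _ (tensorInclusion_injective A)).symm.toAlgHom.comp
    (((comulAlgHom k H).comp A.val).codRestrict _ fun a ↦ hA a.2)

theorem tensorInclusion_subcomul (a : A) :
    tensorInclusion A (subcomul A hA a) = comul (R := k) (a : H) :=
  congrArg Subtype.val ((AlgEquiv.ofInjective _ (tensorInclusion_injective A)).apply_symm_apply _)

theorem map_val_assoc_map_subcomul (z : A ⊗[k] A) :
    Algebra.TensorProduct.map A.val (tensorInclusion A)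
      (Algebra.TensorProduct.assoc k k k A A A
        (Algebra.TensorProduct.map (subcomul A hA) (.id k A) z)) =
    TensorProduct.assoc k H H H (comul.rTensor H (tensorInclusion A z)) := by
  induction z with
  | zero => simp
  | add z w hz hw => simp only [map_add, hz, hw]
  | tmul a b =>
    rw [Algebra.TensorProduct.map_tmul, Algebra.TensorProduct.map_tmul, LinearMap.rTensor_tmul,
      A.val_apply, ← tensorInclusion_subcomul A hA]
    exact TensorProduct.map_map_assoc A.val.toLinearMap A.val.toLinearMap A.val.toLinearMap
      (subcomul A hA a ⊗ₜ b)

theorem map_val_map_id_subcomul (z : A ⊗[k] A) :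
    Algebra.TensorProduct.map A.val (tensorInclusion A)
      (Algebra.TensorProduct.map (.id k A) (subcomul A hA) z) =
    comul.lTensor H (tensorInclusion A z) := by
  induction z with
  | zero => simp
  | add z w hz hw => simp only [map_add, hz, hw]
  | tmul a b => simp [tensorInclusion_subcomul]

theorem coe_lid_map_counit (z : A ⊗[k] A) :
    (TensorProduct.lid k A (Algebra.TensorProduct.map ((counitAlgHom k H).comp A.val) (.id k A) z) :
      H) = TensorProduct.lid k H (counit.rTensor H (tensorInclusion A z)) := by
  induction z with
  | zero => simp
  | add z w hz hw => simp only [map_add, Subalgebra.coe_add, hz, hw]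
  | tmul a b => simp

theorem coe_rid_map_counit (z : A ⊗[k] A) :
    (TensorProduct.rid k A (Algebra.TensorProduct.map (.id k A) ((counitAlgHom k H).comp A.val) z) :
      H) = TensorProduct.rid k H (counit.lTensor H (tensorInclusion A z)) := by
  induction z with
  | zero => simp
  | add z w hz hw => simp only [map_add, Subalgebra.coe_add, hz, hw]
  | tmul a b => simp

/-- The bialgebra structure on a subalgebra that is stable under comultiplication. -/
noncomputable abbrev subbialgebra : Bialgebra k A :=
  .ofAlgHom (subcomul A hA) ((counitAlgHom k H).comp A.val)
    (AlgHom.ext fun a ↦ TensorProduct.map_injective_of_flat_flat A.val.toLinearMap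
      (tensorInclusion A).toLinearMap Subtype.val_injective
      (tensorInclusion_injective A) <|
        (map_val_assoc_map_subcomul A hA (subcomul A hA a)).trans <| by
          rw [tensorInclusion_subcomul, coassoc_apply, ← tensorInclusion_subcomul A hA,
            ← map_val_map_id_subcomul]
          rfl)
    (AlgHom.ext fun a ↦ (TensorProduct.lid k A).injective <| Subtype.val_injective <|
      (coe_lid_map_counit A _).trans <| by simp [tensorInclusion_subcomul])
    (AlgHom.ext fun a ↦ (TensorProduct.rid k A).injective <| Subtype.val_injective <|
      (coe_rid_map_counit A _).trans <| by simp [tensorInclusion_subcomul])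

theorem exists_fg_subalgebra_comul_mem (x : H) :
    ∃ A : Subalgebra k H, A.FG ∧ x ∈ A ∧
      A ≤ (tensorInclusion A).range.comap (comulAlgHom k H) := by
  obtain ⟨n, c, hc, hx⟩ := exists_matrix_coefficients (k := k) x
  let A := Algebra.adjoin k (Set.range (Function.uncurry c))
  have c_mem (i j) : c i j ∈ A := Algebra.subset_adjoin ⟨(i, j), rfl⟩
  refine ⟨A, Subalgebra.fg_def.2 ⟨_, Set.finite_range _, rfl⟩, Algebra.span_le_adjoin k _ hx,
    Algebra.adjoin_le ?_⟩
  rintro _ ⟨⟨i, j⟩, rfl⟩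
  exact ⟨∑ l, ⟨c i l, c_mem i l⟩ ⊗ₜ ⟨c l j, c_mem l j⟩, by simp [hc]⟩

end Subbialgebra

section Points

open WithConv HopfAlgebra Algebra.TensorProduct

variable {k H K : Type*} [CommRing k] [CommRing H] [CommRing K] [Algebra k K]

theorem toConv_comp_convOne {L : Type*} [CommRing L] [Algebra k L] [Bialgebra k H]
    (f : K →ₐ[k] L) : toConv (f.comp (1 : WithConv (H →ₐ[k] K)).ofConv) = 1 := by
  ext
  simp [AlgHom.convOne_def]

theorem isUnit_toConv [HopfAlgebra k H] (g : H →ₐ[k] K) : IsUnit (toConv g) := by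
  have comp_mul (p q : WithConv (H →ₐ[k] H)) : toConv (g.comp (p * q).ofConv) =
      toConv (g.comp p.ofConv) * toConv (g.comp q.ofConv) :=
    WithConv.ext (AlgHom.comp_convMul_distrib g p q)
  let G : WithConv (H →ₐ[k] H) →* WithConv (H →ₐ[k] K) :=
    { toFun p := toConv (g.comp p.ofConv), map_one' := toConv_comp_convOne g, map_mul' := comp_mul }
  exact (Group.isUnit (toConv (AlgHom.id k H))).map G

/-- Evaluation at the `K`-point `g` of functions on the base change to `K`. -/
noncomputable def evaluation [Algebra k H] (g : WithConv (H →ₐ[k] K)) : K ⊗[k] H →ₐ[K] K :=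
  lift (.id K K) g.ofConv fun _ _ ↦ .all _ _

theorem evaluation_eq_zero_of_mul_eq_zero [Algebra k H] [Module.Flat k K]
    {g : WithConv (H →ₐ[k] K)} {x : H} (hg : ∀ h, h * x = 0 → g h = 0) {u : K ⊗[k] H}
    (hu : u * (1 ⊗ₜ x) = 0) :
    evaluation g u = 0 := by
  let mulx := LinearMap.mulRight k x
  have mul_eq : AlgebraTensorModule.lTensor K K mulx = LinearMap.mulRight K ((1 : K) ⊗ₜ[k] x) := by
    ext
    simp [mulx]
  have hu_ker : u ∈ (AlgebraTensorModule.lTensor K K mulx).ker := by simpa [mul_eq] using hu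
  rw [Module.Flat.ker_lTensor_eq] at hu_ker
  obtain ⟨z, rfl⟩ := hu_ker
  have vanish :
      (evaluation g).toLinearMap ∘ₗ AlgebraTensorModule.lTensor K K mulx.ker.subtype = 0 := by
    ext h
    simpa [evaluation] using hg h h.2
  exact LinearMap.congr_fun vanish z

variable [Bialgebra k H]

/-- Translation by the `K`-point `g`, the algebra map `h ↦ ∑ g h₁ ⊗ h₂`. -/
noncomputable def translation (g : WithConv (H →ₐ[k] K)) : H →ₐ[k] K ⊗[k] H :=
  (toConv (includeLeft.comp g.ofConv) * toConv includeRight).ofConv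

/-- Translation by the `K`-point `g` on the base change to `K`. -/
noncomputable def translationBaseChange (g : WithConv (H →ₐ[k] K)) : K ⊗[k] H →ₐ[K] K ⊗[k] H :=
  lift (Algebra.ofId K (K ⊗[k] H)) (translation g) fun _ _ ↦ .all _ _

theorem translation_one_apply (h : H) :
    translation (1 : WithConv (H →ₐ[k] K)) h = 1 ⊗ₜ h := by
  rw [translation, toConv_comp_convOne, one_mul, ofConv_toConv, includeRight_apply]

theorem translationBaseChange_translation_apply (g g' : WithConv (H →ₐ[k] K)) (h : H) :
    translationBaseChange g (translation g' h) = translation (g' * g) h := by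
  let T := (translationBaseChange g).restrictScalars k
  have T_left : T.comp (includeLeft.comp g'.ofConv) = includeLeft.comp g'.ofConv := by
    ext
    simp [T, translationBaseChange, Algebra.ofId_apply]
  have T_right : T.comp includeRight = translation g := by
    ext
    simp [T, translationBaseChange]
  refine AlgHom.congr_fun (?_ : T.comp (translation g') = translation (g' * g)) h
  rw [translation, AlgHom.comp_convMul_distrib, ofConv_toConv, ofConv_toConv, T_left, T_right,
    translation, translation, AlgHom.comp_convMul_distrib, toConv_ofConv, toConv_ofConv, mul_assoc]

theorem evaluation_translation_apply (g g' : WithConv (H →ₐ[k] K)) (h : H) :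
    evaluation g (translation g' h) = (g' * g) h := by
  let ev := (evaluation g).restrictScalars k
  have ev_left : ev.comp (includeLeft.comp g'.ofConv) = g'.ofConv := by
    ext
    simp [ev, evaluation]
  have ev_right : ev.comp includeRight = g.ofConv := by
    ext
    simp [ev, evaluation]
  refine AlgHom.congr_fun (?_ : ev.comp (translation g') = (g' * g).ofConv) h
  rw [translation, AlgHom.comp_convMul_distrib, ofConv_toConv, ofConv_toConv, ev_left, ev_right,
    toConv_ofConv, toConv_ofConv]

theorem evaluation_translationBaseChange {g g' : WithConv (H →ₐ[k] K)} (hg : g' * g = 1) :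
    (evaluation g).comp (translationBaseChange g') = counitAlgHom K (K ⊗[k] H) := by
  ext h
  simp [translationBaseChange, evaluation_translation_apply, hg, AlgHom.convOne_apply,
    Algebra.algebraMap_eq_smul_one]

end Points

section Field

variable {k H : Type*} [Field k] [CharZero k] [CommRing H]

theorem exists_counit_eq_zero_mul_eq_self [Bialgebra k H] {x : H} (hx : IsNilpotent x) :
    ∃ r : H, counit (R := k) r = 0 ∧ r * x = x := by
  obtain ⟨A, hA_fg, hxA, hA_comul⟩ := exists_fg_subalgebra_comul_mem (k := k) x
  let : Bialgebra k A := subbialgebra A hA_comul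
  have : Algebra.FiniteType k A := A.fg_iff_finiteType.1 hA_fg
  have : IsNoetherianRing A := Algebra.FiniteType.isNoetherianRing k A
  have hxA_nil : IsNilpotent (⟨x, hxA⟩ : A) :=
    (IsNilpotent.map_iff (f := A.val) Subtype.val_injective).1 hx
  obtain ⟨r, hr, hrx⟩ := exists_counit_eq_zero_mul_eq_self_of_isNoetherianRing (k := k) hxA_nil
  exact ⟨r, hr, congrArg Subtype.val hrx⟩

theorem exists_mul_eq_zero_and_apply_ne_zero [HopfAlgebra k H] {K : Type*} [Field K] [Algebra k K]
    (g : H →ₐ[k] K) {x : H} (hx : IsNilpotent x) : ∃ h, h * x = 0 ∧ g h ≠ 0 := by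
  have : CharZero K := charZero_of_injective_algebraMap (algebraMap k K).injective
  obtain ⟨γ, hγ⟩ := isUnit_toConv g
  obtain ⟨r, hr, hrx⟩ := exists_counit_eq_zero_mul_eq_self (k := K) (hx.map (translation γ.1))
  let u := translationBaseChange γ⁻¹.1 (1 - r)
  have hux : u * (1 ⊗ₜ x) = 0 := by
    rw [← translation_one_apply, ← γ.mul_inv, ← translationBaseChange_translation_apply, ← map_mul,
      sub_mul, one_mul, hrx, sub_self, map_zero]
  have hu : evaluation γ.1 u = 1 := by
    refine (AlgHom.congr_fun (evaluation_translationBaseChange γ.inv_mul) (1 - r)).trans ?_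
    simp [hr]
  by_contra! h_vanish
  exact one_ne_zero (hu.symm.trans (evaluation_eq_zero_of_mul_eq_zero (hγ ▸ h_vanish) hux))

end Field

end Cartier

/-- (Cartier) A commutative Hopf algebra over a field of characteristic 0 is reduced. -/
theorem commutative_hopfAlgebra_isReduced (k : Type*) [Field k] [CharZero k]
    (H : Type*) [CommRing H] [HopfAlgebra k H] :
    IsReduced H := by
  refine ⟨fun x hx ↦ ?_⟩
  by_contra hx_ne
  have ann_ne_top : (H ∙ x).annihilator ≠ ⊤ := by simpa using hx_ne
  obtain ⟨P, _, hP⟩ := Ideal.exists_le_maximal _ ann_ne_top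
  let : Field (H ⧸ P) := Ideal.Quotient.field P
  obtain ⟨h, hhx, hh⟩ := Cartier.exists_mul_eq_zero_and_apply_ne_zero (Ideal.Quotient.mkₐ k P) hx
  have hhP : h ∈ P := hP ((Submodule.mem_annihilator_span_singleton x h).2 hhx)
  exact hh (Ideal.Quotient.eq_zero_iff_mem.2 hhP)
end

section
/- (Sierra–Walton) Let k be a field of characteristic 0 and let W be the Witt algebra, i.e., the Lie algebra of k-linear derivations of the Laurent polynomial ring k[t, t⁻¹]. Then the universal enveloping algebra U(W) is not a Noetherian ring. -/
/-!
Write `E = t d/dt`, so that every derivation of `k[t, t⁻¹]` is `g E` for a unique Laurent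
polynomial `g`. Identify `f` with the differential form `f dt/t`; then `g E` acts by the Lie
derivative `f ↦ E(g f)`. Pairing with the divergence `E(g)` and taking residues extends this by a
trivial one-dimensional module: on `k ⊕ k[t, t⁻¹]`, the derivation `g E` acts by

  `(z, f) ↦ (res (E(g) f), E(g f))`.

For `e n = t ^ n E`, the product `e (s - m) * e m` sends `(0, t ^ j)` to a vector whose second
component is affine in `m` and whose first component is quadratic in `m` if `s + j = 0` and zero
otherwise. The second difference `q s` of these products in `m` therefore kills `(0, t ^ j)` for
`j ≠ -s`, while it sends `(0, t ^ (-s))` to `(-2, 0)`. Hence no `q s` lies in the left ideal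
generated by the others, and the left ideal generated by all of them is not finitely generated.
-/

open LaurentPolynomial

theorem finite_of_isNoetherian_of_biorthogonal {R M N ι : Type*} [Semiring R] [AddCommMonoid M]
    [AddCommMonoid N] [Module R M] [Module R N] [IsNoetherian R M] (x : ι → M)
    (φ : ι → M →ₗ[R] N) (h_diag : ∀ i, φ i (x i) ≠ 0)
    (h_offdiag : Pairwise fun i j => φ i (x j) = 0) : Finite ι := by
  have x_injective : Function.Injective x := fun i j hij => by
    by_contra hne
    exact h_diag i (hij ▸ h_offdiag hne)
  obtain ⟨s, hs, hspan⟩ := (Submodule.fg_span_iff_fg_span_finset_subset (Set.range x)).1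
    (IsNoetherian.noetherian (R := R) _)
  have x_mem (i : ι) : x i ∈ (s : Set M) := by
    by_contra hi
    have span_le_ker : Submodule.span R (s : Set M) ≤ LinearMap.ker (φ i) := by
      refine Submodule.span_le.2 fun y hy => ?_
      obtain ⟨j, rfl⟩ := hs hy
      exact h_offdiag fun hij => hi (hij ▸ hy)
    exact h_diag i (span_le_ker (hspan ▸ Submodule.subset_span (Set.mem_range_self i)))
  exact .of_injective (β := s) (fun i => ⟨x i, x_mem i⟩) fun i j hij =>
    x_injective (congrArg Subtype.val hij)

theorem smul_derivation_lie_smul {R A : Type*} [CommRing R] [CommRing A] [Algebra R A]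
    (E : Derivation R A A) (a b : A) : ⁅a • E, b • E⁆ = (a * E b - b * E a) • E := by
  ext x
  simp only [Derivation.commutator_apply, Derivation.smul_apply, smul_eq_mul, Derivation.leibniz]
  ring

/-- The Witt algebra of a commutative ring `k`: the Lie algebra of `k`-linear derivations of
`k[t, t⁻¹]`. -/
abbrev WittAlgebra (k : Type*) [CommRing k] : Type _ := Derivation k k[T;T⁻¹] k[T;T⁻¹]

namespace WittAlgebra

variable {k : Type*} [CommRing k]

variable (k) in
/-- The basis of `k[t, t⁻¹]` formed by the powers of `t`. -/
noncomputable def monomialBasis : Module.Basis ℤ k k[T;T⁻¹] := AddMonoidAlgebra.basis ℤ k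

theorem monomialBasis_apply (n : ℤ) : monomialBasis k n = T n := rfl

theorem derivation_ext {M : Type*} [AddCommGroup M] [Module k M] [Module k[T;T⁻¹] M]
    {D₁ D₂ : Derivation k k[T;T⁻¹] M} (h : D₁ (T 1) = D₂ (T 1)) : D₁ = D₂ := by
  have h_inv : D₁ (T (-1)) = D₂ (T (-1)) := by
    have mul_eq_one : (T (-1) * T 1 : k[T;T⁻¹]) = 1 := by rw [← T_add]; simp
    rw [D₁.leibniz_of_mul_eq_one mul_eq_one, D₂.leibniz_of_mul_eq_one mul_eq_one, h]
  have h_T (n : ℤ) : D₁ (T n) = D₂ (T n) := by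
    induction n using Int.induction_on with
    | zero => simp
    | succ n ih => simp only [T_add, Derivation.leibniz, ih, h]
    | pred n ih => simp only [T_sub, Derivation.leibniz, ih, h_inv]
  exact Derivation.ext <| LinearMap.congr_fun <|
    (monomialBasis k).ext (f₁ := D₁.toLinearMap) (f₂ := D₂.toLinearMap) h_T

variable (k) in
/-- The linear map underlying `euler`. -/
noncomputable def eulerLinearMap : k[T;T⁻¹] →ₗ[k] k[T;T⁻¹] :=
  (monomialBasis k).constr k fun n : ℤ => (n : k) • T n

theorem eulerLinearMap_T (n : ℤ) : eulerLinearMap k (T n) = (n : k) • T n :=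
  (monomialBasis k).constr_basis k _ n

theorem eulerLinearMap_mul (f g : k[T;T⁻¹]) :
    eulerLinearMap k (f * g) = f • eulerLinearMap k g + g • eulerLinearMap k f := by
  let mul := LinearMap.mul k k[T;T⁻¹]
  suffices mul.compr₂ (eulerLinearMap k) =
      mul.compl₂ (eulerLinearMap k) + (mul.compl₂ (eulerLinearMap k)).flip from
    LinearMap.congr_fun₂ this f g
  refine LinearMap.ext_basis (monomialBasis k) (monomialBasis k) fun n m => ?_
  simp only [mul, LinearMap.compr₂_apply, LinearMap.compl₂_apply, LinearMap.add_apply,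
    LinearMap.flip_apply, LinearMap.mul_apply_apply, monomialBasis_apply]
  simp only [← T_add, eulerLinearMap_T, mul_smul_comm, add_comm m n, ← add_smul]
  push_cast
  rw [add_comm (n : k)]

variable (k) in
/-- The Euler derivation `E = t d/dt` of `k[t, t⁻¹]`. -/
noncomputable def euler : WittAlgebra k := .mk' (eulerLinearMap k) eulerLinearMap_mul

theorem euler_T (n : ℤ) : euler k (T n) = (n : k) • T n := eulerLinearMap_T n

variable (k) in
/-- The constant coefficient of a Laurent polynomial `f`, i.e. the residue of `f dt/t`. -/
noncomputable def residue : k[T;T⁻¹] →ₗ[k] k := (monomialBasis k).coord 0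

theorem residue_T (n : ℤ) : residue k (T n) = if n = 0 then 1 else 0 :=
  (monomialBasis k).repr_self_apply n 0

theorem residue_euler (f : k[T;T⁻¹]) : residue k (euler k f) = 0 := by
  suffices residue k ∘ₗ (euler k).toLinearMap = 0 from LinearMap.congr_fun this f
  refine (monomialBasis k).ext fun n => ?_
  simp +contextual [monomialBasis_apply, euler_T, residue_T]

variable (k) in
/-- The Witt algebra as a free module of rank one over `k[t, t⁻¹]`: the coordinate of `g E`
is `g`. -/
noncomputable def eulerCoord : WittAlgebra k ≃ₗ[k[T;T⁻¹]] k[T;T⁻¹] where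
  toFun D := T (-1) * D (T 1)
  map_add' D D' := by simp [mul_add]
  map_smul' g D := by simp [mul_left_comm]
  invFun g := g • euler k
  left_inv D := derivation_ext <| by
    rw [Derivation.smul_apply, euler_T, Int.cast_one, one_smul, smul_eq_mul, mul_right_comm,
      ← T_add, neg_add_cancel, T_zero, one_mul]
  right_inv g := by
    beta_reduce
    rw [Derivation.smul_apply, euler_T, Int.cast_one, one_smul, smul_eq_mul, mul_left_comm,
      ← T_add, neg_add_cancel, T_zero, mul_one]

theorem eulerCoord_smul_euler (g : k[T;T⁻¹]) : eulerCoord k (g • euler k) = g :=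
  (eulerCoord k).apply_symm_apply g

theorem eulerCoord_lie (D₁ D₂ : WittAlgebra k) :
    eulerCoord k ⁅D₁, D₂⁆ = eulerCoord k D₁ * euler k (eulerCoord k D₂) -
      eulerCoord k D₂ * euler k (eulerCoord k D₁) := by
  obtain ⟨g₁, rfl⟩ := (eulerCoord k).symm.surjective D₁
  obtain ⟨g₂, rfl⟩ := (eulerCoord k).symm.surjective D₂
  simp only [LinearEquiv.apply_symm_apply]
  exact (congrArg (eulerCoord k) (smul_derivation_lie_smul (euler k) g₁ g₂)).trans
    (eulerCoord_smul_euler _)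

variable (k) in
/-- The action of `g E` on `k ⊕ k[t, t⁻¹]`, namely `(z, f) ↦ (res (E(g) f), E(g f))`. The second
component is the Lie derivative of the form `f dt/t`; the first is the residue of this form
multiplied by the divergence `E(g)`. -/
noncomputable def densityAction : k[T;T⁻¹] →ₗ[k] Module.End k (k × k[T;T⁻¹]) :=
  .mk₂ k (fun g x => (residue k (euler k g * x.2), euler k (g * x.2)))
    (by simp [add_mul]) (by simp) (by simp [mul_add]) (by simp)

theorem densityAction_apply (g : k[T;T⁻¹]) (x : k × k[T;T⁻¹]) :
    densityAction k g x = (residue k (euler k g * x.2), euler k (g * x.2)) := rfl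

attribute [local instance] LieRing.ofAssociativeRing

theorem densityAction_lie (g h : k[T;T⁻¹]) :
    densityAction k (g * euler k h - h * euler k g) = ⁅densityAction k g, densityAction k h⁆ := by
  refine LinearMap.ext fun ⟨z, f⟩ => ?_
  rw [LieRing.of_associative_ring_bracket, LinearMap.sub_apply, Module.End.mul_apply,
    Module.End.mul_apply]
  simp only [densityAction_apply, Prod.mk_sub_mk, ← map_sub]
  set w := g * euler k h - h * euler k g with hw
  have integrand_eq : euler k w * f - (euler k g * euler k (h * f) - euler k h * euler k (g * f)) =
      euler k (w * f) := by
    simp only [hw, Derivation.leibniz, map_sub, smul_eq_mul]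
    ring
  have density_eq : w * f = g * euler k (h * f) - h * euler k (g * f) := by
    simp only [hw, Derivation.leibniz, smul_eq_mul]
    ring
  refine Prod.ext ?_ (congrArg (euler k) density_eq)
  rw [← sub_eq_zero, ← map_sub, integrand_eq, residue_euler]

variable (k) in
/-- The representation of the Witt algebra on `k ⊕ k[t, t⁻¹]` given by `densityAction`: an
extension of the densities `f dt/t` by the trivial module `k`. -/
noncomputable def densityRep : WittAlgebra k →ₗ⁅k⁆ Module.End k (k × k[T;T⁻¹]) where
  toLinearMap := densityAction k ∘ₗ (eulerCoord k).toLinearMap.restrictScalars k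
  map_lie' {D₁ D₂} :=
    (congrArg (densityAction k) (eulerCoord_lie D₁ D₂)).trans (densityAction_lie _ _)

variable (k) in
/-- The extension of `densityRep` to the universal enveloping algebra. -/
noncomputable def envelopingRep :
    UniversalEnvelopingAlgebra k (WittAlgebra k) →ₐ[k] Module.End k (k × k[T;T⁻¹]) :=
  UniversalEnvelopingAlgebra.lift k (densityRep k)

variable (k) in
/-- The standard basis vector `e n = t ^ n E` of the Witt algebra, viewed in its universal
enveloping algebra. -/
noncomputable def e (n : ℤ) : UniversalEnvelopingAlgebra k (WittAlgebra k) :=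
  UniversalEnvelopingAlgebra.ι k ((T n : k[T;T⁻¹]) • euler k)

theorem envelopingRep_e (n : ℤ) : envelopingRep k (e k n) = densityAction k (T n) :=
  (UniversalEnvelopingAlgebra.lift_ι_apply k _ _).trans
    (congrArg (densityAction k) (eulerCoord_smul_euler _))

theorem envelopingRep_e_mul_e (n m j : ℤ) :
    envelopingRep k (e k n * e k m) (0, T j) =
      (if n + m + j = 0 then -(n : k) ^ 2 else 0,
        ((m + j) * (n + m + j) : k) • T (n + m + j)) := by
  simp only [map_mul, Module.End.mul_apply, envelopingRep_e, densityAction_apply, euler_T, ← T_add,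
    Derivation.map_smul, mul_smul_comm, smul_mul_assoc, map_smul, residue_T, smul_smul, smul_eq_mul]
  rw [← add_assoc]
  refine Prod.ext ?_ (by push_cast; rfl)
  split_ifs with hj
  · obtain rfl : j = -n - m := by lia
    push_cast
    ring
  · simp

variable (k) in
/-- The second difference in `m` of the products `e (s - m) * e m`, at `m = 0`; the element `q s`
of the introduction. -/
noncomputable def secondDifference (s : ℤ) : UniversalEnvelopingAlgebra k (WittAlgebra k) :=
  e k (s - 1) * e k 1 + e k (s + 1) * e k (-1) - 2 • (e k s * e k 0)

theorem envelopingRep_secondDifference (s j : ℤ) :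
    envelopingRep k (secondDifference k s) (0, T j) = (if s + j = 0 then -2 else 0, 0) := by
  simp only [secondDifference, map_sub, map_add, map_nsmul, LinearMap.sub_apply,
    LinearMap.add_apply, LinearMap.smul_apply, envelopingRep_e_mul_e]
  have sum_left : s - 1 + 1 + j = s + j := by ring
  have sum_right : s + 1 + -1 + j = s + j := by ring
  rw [sum_left, sum_right, add_zero]
  refine Prod.ext ?_ ?_
  · split_ifs with hj
    · simp only [Prod.fst_sub, Prod.fst_add, Prod.smul_fst]
      push_cast
      ring
    · simp
  · simp only [Prod.snd_sub, Prod.snd_add, Prod.smul_snd]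
    push_cast
    module

end WittAlgebra

open WittAlgebra in
theorem wittAlgebra_enveloping_not_noetherian_general (k : Type*) [CommRing k] (h2 : (2 : k) ≠ 0) :
    ¬ IsNoetherianRing (UniversalEnvelopingAlgebra k (WittAlgebra k)) := by
  intro noetherian
  let : Module (UniversalEnvelopingAlgebra k (WittAlgebra k)) (k × k[T;T⁻¹]) :=
    Module.compHom _ (envelopingRep k).toRingHom
  let orbitMap (s : ℤ) := LinearMap.toSpanSingleton
    (UniversalEnvelopingAlgebra k (WittAlgebra k)) (k × k[T;T⁻¹]) (0, T (-s))
  have orbitMap_secondDifference (s r : ℤ) :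
      orbitMap s (secondDifference k r) = (if r + -s = 0 then -2 else 0, 0) :=
    envelopingRep_secondDifference r (-s)
  have : Finite ℤ := finite_of_isNoetherian_of_biorthogonal (secondDifference k) orbitMap
    (fun s => by simpa [orbitMap_secondDifference] using h2)
    (fun s r hsr => by simp [orbitMap_secondDifference, add_neg_eq_zero, hsr.symm])
  exact not_finite ℤ

/-- (Sierra–Walton) The universal enveloping algebra of the Witt algebra, i.e. the Lie
algebra of `k`-linear derivations of `k[t, t⁻¹]`, is not Noetherian. -/
theorem wittAlgebra_enveloping_not_noetherian (k : Type*) [Field k] [CharZero k] :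
    ¬ IsNoetherianRing (UniversalEnvelopingAlgebra k
      (Derivation k (LaurentPolynomial k) (LaurentPolynomial k))) :=
  wittAlgebra_enveloping_not_noetherian_general k two_ne_zero
end
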